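/- Let κ > 0, η > 0, M > 20 and β ∈ (0,1). Then there exists f₀ > 0 such that for every f ∈ (0, f₀) and every z ∈ ℂ with Im z ≤ 0 and D_f(z) = 0, at least one of the following holds (Arg denotes the principal argument with values in (−π, π], and log the natural logarithm): (a) f^{2/(3β)} ≤ |z| ≤ f^{β/2}; (b) |z| > f^{β/2} and |Arg(z) + 2π/3| < |z|⁻¹·(1 + |z|^{−1/2})·M·f·log(f⁻¹ + |z|); (c) |z| > f^{β/2} and |Arg(z)| < |z|^{−3/2}·M·f·log(f⁻¹ + |z|). -/

import Mathlib

open Real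

/-- Taylor coefficients of the Airy function `Ai`:
`a₀ = 3^{−2/3}/Γ(2/3)`, `a₁ = −3^{−1/3}/Γ(1/3)`, `a₂ = 0`,
`a_{k+3} = a_k/((k+3)(k+2))`. -/
noncomputable def airyCoeff : ℕ → ℂ
  | 0 => (3 : ℂ) ^ (-(2 : ℂ) / 3) / Complex.Gamma (2 / 3)
  | 1 => -((3 : ℂ) ^ (-(1 : ℂ) / 3) / Complex.Gamma (1 / 3))
  | 2 => 0
  | (k + 3) => airyCoeff k / (((k : ℂ) + 3) * ((k : ℂ) + 2))

/-- The Airy function `Ai`, as the entire function with the above Taylor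
coefficients at `0`. -/
noncomputable def Ai (z : ℂ) : ℂ := ∑' k : ℕ, airyCoeff k * z ^ k

/-- `ω = e^{2πi/3}` -/
noncomputable def ωc : ℂ := Complex.exp (2 * π * Complex.I / 3)

/-- `W = f^{1/3}·e^{−iπ/6}/(2π)` -/
noncomputable def Wf (f : ℝ) : ℂ :=
  ((f ^ ((1 : ℝ) / 3) : ℝ) : ℂ) * Complex.exp (-(π : ℂ) * Complex.I / 6) / (2 * π)

/-- `α₊(z) = Ai(−ω(z − κf)f^{−2/3})·Ai(−(z − κf)f^{−2/3})` -/
noncomputable def alphaP (κ f : ℝ) (z : ℂ) : ℂ :=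
  Ai (-ωc * (z - κ * f) * ((f ^ (-(2 : ℝ) / 3) : ℝ) : ℂ)) *
    Ai (-(z - κ * f) * ((f ^ (-(2 : ℝ) / 3) : ℝ) : ℂ))

/-- `α₋(z) = Ai(−ω(z + κf)f^{−2/3})·Ai(−(z + κf)f^{−2/3})` -/
noncomputable def alphaM (κ f : ℝ) (z : ℂ) : ℂ :=
  Ai (-ωc * (z + κ * f) * ((f ^ (-(2 : ℝ) / 3) : ℝ) : ℂ)) *
    Ai (-(z + κ * f) * ((f ^ (-(2 : ℝ) / 3) : ℝ) : ℂ))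

/-- `β₊(z) = Ai(−ω(z + κf)f^{−2/3})·Ai(−(z − κf)f^{−2/3})` -/
noncomputable def betaP (κ f : ℝ) (z : ℂ) : ℂ :=
  Ai (-ωc * (z + κ * f) * ((f ^ (-(2 : ℝ) / 3) : ℝ) : ℂ)) *
    Ai (-(z - κ * f) * ((f ^ (-(2 : ℝ) / 3) : ℝ) : ℂ))

/-- `β₋(z) = Ai(−ω(z − κf)f^{−2/3})·Ai(−(z + κf)f^{−2/3})` -/
noncomputable def betaM (κ f : ℝ) (z : ℂ) : ℂ :=
  Ai (-ωc * (z - κ * f) * ((f ^ (-(2 : ℝ) / 3) : ℝ) : ℂ)) *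
    Ai (-(z + κ * f) * ((f ^ (-(2 : ℝ) / 3) : ℝ) : ℂ))

/-- The resonance determinant `D_f` of the Stark Hamiltonian
`p² + fx + η⁻¹(δ_κ + δ_{−κ})`:
`D_f(z) = 1 + (α₊ + α₋)/(ηW) + β₊(β₋ − β₊)/(η²W²)`. -/
noncomputable def Df (κ η f : ℝ) (z : ℂ) : ℂ :=
  1 + (alphaP κ f z + alphaM κ f z) / (η * Wf f)
    + betaP κ f z * (betaM κ f z - betaP κ f z) / (η ^ 2 * (Wf f) ^ 2)

/-!
Rotating the contour of an Airy integral to its saddle point writes `Ai (w ^ 2)` as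
`exp (-2 * w ^ 3 / 3)` times a Gaussian-type integral, which controls both the exponential size of
`Ai` and its logarithmic derivative. With the square roots of `-z`, `-(z - κ * f)` and
`-(z + κ * f)` in the closed first quadrant, the connection formula
`Ai ζ + ω * Ai (ω * ζ) + ω ^ 2 * Ai (ω ^ 2 * ζ) = 0` factorises `D_f` in two ways, one for each side
of the quadrant. At a zero the exponential factors have to balance quantities of at most polynomial
size in `1 / f + |z|`, which confines `z` to a logarithmic neighbourhood of the two rays. For
`|z| ≪ f ^ (2 / 3)` all Airy arguments tend to `0` instead, and
`η * W * D_f(z) → Ai(0) ^ 2 * (2 + 2 * κ / η) ≠ 0`.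
-/

open MeasureTheory Set Filter Topology

/-! ### Cubic Laplace integrals -/

/-- The Laplace-type integral `∫₀^∞ s^k exp(-s³/3 - w s) ds`, entire in `w`. Two rotated copies of
`cubicLaplace 0` represent the Airy function on all of `ℂ`. -/
noncomputable def cubicLaplace (k : ℕ) (w : ℂ) : ℂ :=
  ∫ s in Ioi (0 : ℝ), (s : ℂ) ^ k * Complex.exp (-(s : ℂ) ^ 3 / 3 - w * s)

lemma mul_le_cube_div_three_add {b s : ℝ} (hb : 0 ≤ b) (hs : 0 ≤ s) :
    b * s ≤ s ^ 3 / 3 + 3 * (b + 1) ^ 2 := by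
  rcases le_total s (3 * (b + 1)) with h | h
  · have : 0 ≤ s ^ 3 := by positivity
    nlinarith
  · have hs3 : 3 * (b + 1) * s ≤ s ^ 3 := by
      have : s * s ≤ s ^ 3 := by nlinarith [mul_nonneg hs hs]
      nlinarith
    nlinarith [sq_nonneg (b + 1)]

lemma integrableOn_pow_mul_exp_cubic (k : ℕ) (c : ℝ) :
    IntegrableOn (fun s : ℝ => s ^ k * Real.exp (-s ^ 3 / 3 + c * s)) (Ioi 0) := by
  have hk : (-1 : ℝ) < k := neg_one_lt_zero.trans_le k.cast_nonneg
  refine Integrable.mono' ((integrableOn_rpow_mul_exp_neg_rpow (p := 1) hk one_pos).const_mul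
    (Real.exp (3 * (|c| + 2) ^ 2))) (by fun_prop) ?_
  filter_upwards [self_mem_ae_restrict measurableSet_Ioi] with s (hs : 0 < s)
  rw [Real.norm_of_nonneg (by positivity), Real.rpow_natCast, Real.rpow_one, mul_left_comm,
    ← Real.exp_add]
  refine mul_le_mul_of_nonneg_left (Real.exp_le_exp.2 ?_) (by positivity)
  have hlin := mul_le_cube_div_three_add (b := |c| + 1) (by positivity) hs.le
  have hcs : c * s ≤ |c| * s := mul_le_mul_of_nonneg_right (le_abs_self c) hs.le
  ring_nf at hlin ⊢
  linarith

lemma norm_cubicLaplace_integrand (k : ℕ) (w : ℂ) {s : ℝ} (hs : 0 ≤ s) :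
    ‖(s : ℂ) ^ k * Complex.exp (-(s : ℂ) ^ 3 / 3 - w * s)‖
      = s ^ k * Real.exp (-s ^ 3 / 3 + -w.re * s) := by
  have hre : (-(s : ℂ) ^ 3 / 3 - w * s).re = -s ^ 3 / 3 + -w.re * s := by
    have : -(s : ℂ) ^ 3 / 3 - w * s = ((-s ^ 3 / 3 : ℝ) : ℂ) - w * s := by push_cast; ring
    rw [this, Complex.sub_re, Complex.ofReal_re, Complex.re_mul_ofReal]
    ring
  rw [norm_mul, norm_pow, Complex.norm_exp, hre, Complex.norm_of_nonneg hs]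

lemma integrableOn_cubicLaplace (k : ℕ) (w : ℂ) :
    IntegrableOn (fun s : ℝ => (s : ℂ) ^ k * Complex.exp (-(s : ℂ) ^ 3 / 3 - w * s)) (Ioi 0) := by
  refine Integrable.mono' (integrableOn_pow_mul_exp_cubic k (-w.re)) (by fun_prop) ?_
  filter_upwards [self_mem_ae_restrict measurableSet_Ioi] with s hs
  exact (norm_cubicLaplace_integrand k w (mem_Ioi.1 hs).le).le

lemma hasDerivAt_cubicLaplace (k : ℕ) (w : ℂ) :
    HasDerivAt (cubicLaplace k) (-cubicLaplace (k + 1) w) w := by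
  have key := hasDerivAt_integral_of_dominated_loc_of_deriv_le
    (μ := volume.restrict (Ioi (0 : ℝ))) (s := Metric.ball w 1) (x₀ := w)
    (F := fun w s => (s : ℂ) ^ k * Complex.exp (-(s : ℂ) ^ 3 / 3 - w * s))
    (F' := fun w s => -((s : ℂ) ^ (k + 1) * Complex.exp (-(s : ℂ) ^ 3 / 3 - w * s)))
    (bound := fun s => s ^ (k + 1) * Real.exp (-s ^ 3 / 3 + (‖w‖ + 1) * s))
    (Metric.ball_mem_nhds w one_pos) (Eventually.of_forall fun w => by fun_prop)
    (integrableOn_cubicLaplace k w) (by fun_prop) ?bound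
    (integrableOn_pow_mul_exp_cubic (k + 1) (‖w‖ + 1)) ?deriv
  · rw [cubicLaplace, ← integral_neg]
    exact key.2
  case bound =>
    filter_upwards [self_mem_ae_restrict measurableSet_Ioi] with s (hs : 0 < s) x hx
    rw [norm_neg, norm_cubicLaplace_integrand _ _ hs.le]
    have hxw : ‖x‖ < ‖w‖ + 1 := by
      linarith [norm_sub_norm_le x w, mem_ball_iff_norm.1 hx]
    have hx_re : -x.re ≤ ‖w‖ + 1 := (neg_le_abs _).trans ((Complex.abs_re_le_norm x).trans hxw.le)
    gcongr
  case deriv =>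
    filter_upwards with s x _
    have hexp : HasDerivAt (fun x : ℂ => -(s : ℂ) ^ 3 / 3 - x * s) (-(s : ℂ)) x := by
      simpa using ((hasDerivAt_id x).mul_const (s : ℂ)).const_sub (-(s : ℂ) ^ 3 / 3)
    convert! hexp.cexp.const_mul ((s : ℂ) ^ k) using 1
    ring

lemma hasDerivAt_cubicLaplace_mul_left (k : ℕ) (c z : ℂ) :
    HasDerivAt (fun z => cubicLaplace k (c * z)) (-c * cubicLaplace (k + 1) (c * z)) z := by
  convert! (hasDerivAt_cubicLaplace k (c * z)).comp z ((hasDerivAt_id z).const_mul c) using 1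
  ring

lemma cubicLaplace_two (w : ℂ) : cubicLaplace 2 w = 1 - w * cubicLaplace 0 w := by
  have hderiv : ∀ s ∈ Ici (0 : ℝ),
      HasDerivAt (fun s : ℝ => Complex.exp (-(s : ℂ) ^ 3 / 3 - w * s))
        (-((s : ℂ) ^ 2 * Complex.exp (-(s : ℂ) ^ 3 / 3 - w * s)) -
          w * ((s : ℂ) ^ 0 * Complex.exp (-(s : ℂ) ^ 3 / 3 - w * s))) s := fun s _ => by
    have hphase : HasDerivAt (fun x : ℂ => -x ^ 3 / 3 - w * x) (-(s : ℂ) ^ 2 - w) (s : ℂ) := by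
      convert! (((hasDerivAt_pow 3 (s : ℂ)).neg).div_const 3).sub
        ((hasDerivAt_id (s : ℂ)).const_mul w) using 1
      push_cast
      ring
    convert! hphase.cexp.comp_ofReal using 1
    ring
  have hneg := (integrableOn_cubicLaplace 2 w).neg
  have hmul := (integrableOn_cubicLaplace 0 w).const_mul w
  have hlim := tendsto_zero_of_hasDerivAt_of_integrableOn_Ioi
    (fun s hs => hderiv s (Ioi_subset_Ici_self hs)) (hneg.sub hmul)
    (by simpa using integrableOn_cubicLaplace 0 w)
  have hint : -cubicLaplace 2 w - w * cubicLaplace 0 w = 0 - 1 := by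
    rw [cubicLaplace, cubicLaplace, ← integral_neg, ← integral_const_mul]
    refine (integral_sub hneg hmul).symm.trans ?_
    simpa using integral_Ioi_of_hasDerivAt_of_tendsto' hderiv (hneg.sub hmul) hlim
  linear_combination -hint

lemma norm_cubicLaplace_le (k : ℕ) {w : ℂ} (hw : 0 < w.re) :
    ‖cubicLaplace k w‖ ≤ w.re ^ (-((k : ℝ) + 1)) * Real.Gamma (k + 1) := by
  have hk : (-1 : ℝ) < k := neg_one_lt_zero.trans_le k.cast_nonneg
  have heq := integral_rpow_mul_exp_neg_mul_rpow (p := 1) one_pos hk hw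
  have hint := integrableOn_rpow_mul_exp_neg_mul_rpow (p := 1) hk one_pos hw
  simp only [div_one, mul_one, Real.rpow_one, Real.rpow_natCast] at heq hint
  rw [← heq]
  refine norm_integral_le_of_norm_le hint ?_
  filter_upwards [self_mem_ae_restrict measurableSet_Ioi] with s (hs : 0 < s)
  rw [norm_cubicLaplace_integrand _ _ hs.le]
  have : 0 < s ^ 3 := by positivity
  gcongr
  linarith

lemma tendsto_cubicLaplace_atTop (k : ℕ) {c : ℂ} (hc : 0 < c.re) :
    Tendsto (fun x : ℝ => cubicLaplace k (c * x)) atTop (𝓝 0) := by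
  have hbound : Tendsto (fun x : ℝ => (c.re * x) ^ (-((k : ℝ) + 1)) * Real.Gamma (k + 1)) atTop
      (𝓝 0) := by
    simpa using ((tendsto_rpow_neg_atTop (by positivity : 0 < (k : ℝ) + 1)).comp
      (tendsto_id.const_mul_atTop hc)).mul_const (Real.Gamma (k + 1))
  refine squeeze_zero_norm' ?_ hbound
  filter_upwards [eventually_gt_atTop 0] with x hx
  have hre : (c * x).re = c.re * x := Complex.re_mul_ofReal c x
  rw [← hre]
  exact norm_cubicLaplace_le k (by rw [hre]; positivity)

/-- The moment `∫₀^∞ s^k exp(-s³/3) ds`, from which the Taylor coefficients of `cubicLaplace 0`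
are read off. -/
noncomputable def cubicMoment (k : ℕ) : ℝ := ∫ s in Ioi (0 : ℝ), s ^ k * Real.exp (-s ^ 3 / 3)

lemma cubicMoment_eq_Gamma (k : ℕ) :
    cubicMoment k = 3 ^ (((k : ℝ) + 1) / 3 - 1) * Real.Gamma (((k : ℝ) + 1) / 3) := by
  have h := integral_rpow_mul_exp_neg_mul_rpow (p := 3) (q := k) (b := 1 / 3) (by norm_num)
    (neg_one_lt_zero.trans_le k.cast_nonneg) (by norm_num)
  rw [cubicMoment, Real.rpow_sub_one three_ne_zero, div_eq_mul_one_div (3 ^ _ : ℝ),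
    ← inv_inv (3 : ℝ), Real.inv_rpow (by norm_num), ← Real.rpow_neg (by norm_num), inv_inv,
    ← one_div, ← neg_div, ← h]
  refine setIntegral_congr_fun measurableSet_Ioi fun s _ => ?_
  rw [show (3 : ℝ) = (3 : ℕ) by norm_num, Real.rpow_natCast, Real.rpow_natCast]
  ring_nf

lemma cubicMoment_add_three (k : ℕ) : cubicMoment (k + 3) = (k + 1) * cubicMoment k := by
  rw [cubicMoment_eq_Gamma, cubicMoment_eq_Gamma,
    show (((k + 3 : ℕ) : ℝ) + 1) / 3 = ((k : ℝ) + 1) / 3 + 1 by push_cast; ring,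
    Real.Gamma_add_one (by positivity), add_sub_right_comm, Real.rpow_add_one three_ne_zero]
  ring

lemma integral_pow_mul_cexp_neg_cube (k : ℕ) :
    ∫ s in Ioi (0 : ℝ), (s : ℂ) ^ k * Complex.exp (-(s : ℂ) ^ 3 / 3) = cubicMoment k := by
  rw [cubicMoment, ← integral_complex_ofReal]
  push_cast
  rfl

lemma cubicLaplace_at_zero (k : ℕ) : cubicLaplace k 0 = cubicMoment k := by
  simp only [cubicLaplace, zero_mul, sub_zero, integral_pow_mul_cexp_neg_cube]

lemma hasSum_cubicLaplace_zero (w : ℂ) :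
    HasSum (fun k : ℕ => (-w) ^ k / (k.factorial : ℂ) * cubicMoment k) (cubicLaplace 0 w) := by
  have hdom : ∀ s : ℝ, HasSum
      (fun k : ℕ => Real.exp (-s ^ 3 / 3) * ((‖w‖ * s) ^ k / k.factorial))
      (Real.exp (-s ^ 3 / 3 + ‖w‖ * s)) := fun s => by
    rw [Real.exp_add, congrFun Real.exp_eq_exp_ℝ (‖w‖ * s)]
    exact (NormedSpace.expSeries_div_hasSum_exp (‖w‖ * s)).mul_left _
  have key := hasSum_integral_of_dominated_convergence (μ := volume.restrict (Ioi (0 : ℝ)))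
    (F := fun (k : ℕ) (s : ℝ) => (-w) ^ k / (k.factorial : ℂ) *
      ((s : ℂ) ^ k * Complex.exp (-(s : ℂ) ^ 3 / 3)))
    (f := fun s : ℝ => (s : ℂ) ^ 0 * Complex.exp (-(s : ℂ) ^ 3 / 3 - w * s))
    (fun k s => Real.exp (-s ^ 3 / 3) * ((‖w‖ * s) ^ k / k.factorial))
    (fun k => by fun_prop) ?bound (Eventually.of_forall fun s => (hdom s).summable) ?integrable
    (Eventually.of_forall ?sum)
  · simp only [integral_const_mul, integral_pow_mul_cexp_neg_cube] at key
    exact key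
  case bound =>
    intro k
    filter_upwards [self_mem_ae_restrict measurableSet_Ioi] with s hs
    have h := norm_cubicLaplace_integrand k 0 (mem_Ioi.1 hs).le
    simp only [zero_mul, sub_zero, Complex.zero_re, neg_zero, add_zero] at h
    rw [norm_mul, h, norm_div, norm_pow, norm_neg, Complex.norm_natCast]
    apply le_of_eq
    ring
  case integrable =>
    simp only [(hdom _).tsum_eq]
    simpa [IntegrableOn] using integrableOn_pow_mul_exp_cubic 0 ‖w‖
  case sum =>
    intro s
    have h := (NormedSpace.expSeries_div_hasSum_exp (-w * s)).mul_left
      (Complex.exp (-(s : ℂ) ^ 3 / 3))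
    rw [← Complex.exp_eq_exp_ℂ, ← Complex.exp_add, neg_mul, ← sub_eq_add_neg] at h
    rw [pow_zero, one_mul]
    refine h.congr_fun fun k => ?_
    rw [← neg_mul, mul_pow]
    ring

/-! ### The Airy function -/

lemma ωc_eq : ωc = -1 / 2 + (√3 / 2 : ℝ) * Complex.I := by
  have harg : 2 * (π : ℂ) * Complex.I / 3 = ((π - π / 3 : ℝ) : ℂ) * Complex.I := by
    push_cast; ring
  rw [ωc, harg, Complex.exp_mul_I, ← Complex.ofReal_cos, ← Complex.ofReal_sin, Real.cos_pi_sub,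
    Real.sin_pi_sub, Real.cos_pi_div_three, Real.sin_pi_div_three]
  push_cast; ring

lemma ofReal_sqrt_three_sq : ((√3 : ℝ) : ℂ) ^ 2 = 3 := by
  rw [← Complex.ofReal_pow, Real.sq_sqrt zero_le_three]; norm_num

lemma ωc_sq : ωc ^ 2 = -1 - ωc := by
  rw [ωc_eq]
  push_cast
  linear_combination (-1 / 4 : ℂ) * ofReal_sqrt_three_sq
    + ((√3 : ℝ) : ℂ) ^ 2 / 4 * Complex.I_sq

lemma ωc_cube : ωc ^ 3 = 1 := by
  linear_combination (ωc - 1) * ωc_sq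

lemma one_add_two_mul_ωc : 1 + 2 * ωc = √3 * Complex.I := by
  rw [ωc_eq]; push_cast; ring

lemma neg_ωc_pow_add_three (k : ℕ) : (-ωc) ^ (k + 3) = -(-ωc) ^ k := by
  linear_combination (-(-ωc) ^ k) * ωc_cube

lemma neg_ωc_sq_pow_add_three (k : ℕ) : (-ωc ^ 2) ^ (k + 3) = -(-ωc ^ 2) ^ k := by
  linear_combination (-(-ωc ^ 2) ^ k * (ωc ^ 3 + 1)) * ωc_cube

lemma re_neg_ωc : (-ωc).re = 1 / 2 := by rw [ωc_eq]; norm_num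

lemma re_neg_ωc_sq : (-ωc ^ 2).re = 1 / 2 := by rw [ωc_sq, ωc_eq]; norm_num

lemma Gamma_one_third_mul_two_thirds : Real.Gamma (1 / 3) * Real.Gamma (2 / 3) = 2 * π / √3 := by
  have h := Real.Gamma_mul_Gamma_one_sub (1 / 3)
  rw [show (1 : ℝ) - 1 / 3 = 2 / 3 by norm_num, show π * (1 / 3) = π / 3 by ring,
    Real.sin_pi_div_three] at h
  rw [h]
  field_simp

lemma airyCoeff_zero_eq_ofReal :
    airyCoeff 0 = ((3 ^ (-(2 : ℝ) / 3) / Real.Gamma (2 / 3) : ℝ) : ℂ) := by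
  rw [airyCoeff]
  push_cast [Complex.ofReal_cpow zero_le_three, ← Complex.Gamma_ofReal]
  rfl

lemma airyCoeff_one_eq_ofReal :
    airyCoeff 1 = ((-(3 ^ (-(1 : ℝ) / 3) / Real.Gamma (1 / 3)) : ℝ) : ℂ) := by
  rw [airyCoeff]
  push_cast [Complex.ofReal_cpow zero_le_three, ← Complex.Gamma_ofReal]
  rfl

lemma airyCoeff_zero_mul_one : airyCoeff 0 * airyCoeff 1 = -(1 / (2 * π * √3)) := by
  have hpow : (3 : ℝ) ^ (-(2 : ℝ) / 3) * 3 ^ (-(1 : ℝ) / 3) = 1 / 3 := by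
    rw [← Real.rpow_add three_pos]
    norm_num [Real.rpow_neg_one]
  have hreal : (3 ^ (-(2 : ℝ) / 3) / Real.Gamma (2 / 3)) *
      -(3 ^ (-(1 : ℝ) / 3) / Real.Gamma (1 / 3)) = -(1 / (2 * π * √3)) := by
    rw [mul_neg, div_mul_div_comm, hpow, mul_comm (Real.Gamma _), Gamma_one_third_mul_two_thirds]
    have : √(3 : ℝ) ^ 2 = 3 := Real.sq_sqrt zero_le_three
    field_simp
    linarith
  rw [airyCoeff_zero_eq_ofReal, airyCoeff_one_eq_ofReal, ← Complex.ofReal_mul, hreal]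
  push_cast; rfl

lemma airyCoeff_zero_eq : airyCoeff 0 = √3 / (2 * π) * cubicMoment 0 := by
  have hreal : 3 ^ (-(2 : ℝ) / 3) / Real.Gamma (2 / 3) = √3 / (2 * π) * cubicMoment 0 := by
    rw [cubicMoment_eq_Gamma, div_eq_iff (Real.Gamma_pos_of_pos (by norm_num)).ne']
    norm_num [mul_assoc, Gamma_one_third_mul_two_thirds]
    field_simp
  rw [airyCoeff_zero_eq_ofReal, hreal]
  push_cast; rfl

lemma airyCoeff_one_eq : airyCoeff 1 = -(√3 / (2 * π)) * cubicMoment 1 := by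
  have hreal : -(3 ^ (-(1 : ℝ) / 3) / Real.Gamma (1 / 3)) = -(√3 / (2 * π)) * cubicMoment 1 := by
    rw [cubicMoment_eq_Gamma, neg_mul, neg_inj,
      div_eq_iff (Real.Gamma_pos_of_pos (by norm_num)).ne']
    norm_num [mul_assoc, mul_comm (Real.Gamma (2 / 3)), Gamma_one_third_mul_two_thirds]
    field_simp
  rw [airyCoeff_one_eq_ofReal, hreal]
  push_cast; rfl

lemma airyCoeff_eq (k : ℕ) :
    airyCoeff k = ((-ωc ^ 2) ^ (k + 1) - (-ωc) ^ (k + 1)) / (2 * π * Complex.I) *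
      ((-1) ^ k / (k.factorial : ℂ) * cubicMoment k) := by
  have hpi : (π : ℂ) ≠ 0 := Complex.ofReal_ne_zero.2 pi_ne_zero
  have hI := Complex.I_ne_zero
  induction k using airyCoeff.induct with
  | case1 =>
    rw [airyCoeff_zero_eq, show (-ωc ^ 2) ^ (0 + 1) - (-ωc) ^ (0 + 1) = 1 + 2 * ωc by
      linear_combination -ωc_sq, one_add_two_mul_ωc]
    simp only [pow_zero, Nat.factorial_zero, Nat.cast_one]
    field_simp
  | case2 =>
    rw [airyCoeff_one_eq, show (-ωc ^ 2) ^ (1 + 1) - (-ωc) ^ (1 + 1) = 1 + 2 * ωc by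
      linear_combination ωc * ωc_cube - ωc_sq, one_add_two_mul_ωc]
    simp only [pow_one, Nat.factorial_one, Nat.cast_one]
    field_simp
  | case3 =>
    rw [airyCoeff, show (-ωc ^ 2) ^ (2 + 1) - (-ωc) ^ (2 + 1) = 0 by
      linear_combination (-ωc ^ 3) * ωc_cube, zero_div, zero_mul]
  | case4 k ih =>
    have hfac : ((k + 3).factorial : ℂ) = (k + 3) * (k + 2) * (k + 1) * k.factorial := by
      simp only [Nat.factorial_succ]
      push_cast; ring
    have hk1 : (k : ℂ) + 1 ≠ 0 := k.cast_add_one_ne_zero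
    have hk2 : (k : ℂ) + 2 ≠ 0 := by exact_mod_cast (k + 1).succ_ne_zero
    have hk3 : (k : ℂ) + 3 ≠ 0 := by exact_mod_cast (k + 2).succ_ne_zero
    have hk : (k.factorial : ℂ) ≠ 0 := by exact_mod_cast k.factorial_ne_zero
    change _ = ((-ωc ^ 2) ^ (k + 1 + 3) - (-ωc) ^ (k + 1 + 3)) / _ *
      ((-1) ^ (k + 3) / ((k + 3).factorial : ℂ) * _)
    rw [airyCoeff, ih, cubicMoment_add_three, neg_ωc_pow_add_three, neg_ωc_sq_pow_add_three, hfac,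
      pow_add (-1 : ℂ)]
    push_cast
    field_simp
    ring

lemma Ai_eq_cubicLaplace (z : ℂ) :
    Ai z = (-ωc ^ 2 * cubicLaplace 0 (-ωc ^ 2 * z) + ωc * cubicLaplace 0 (-ωc * z))
      / (2 * π * Complex.I) := by
  have hsum := ((hasSum_cubicLaplace_zero (-ωc ^ 2 * z)).mul_left (-ωc ^ 2)).add
    ((hasSum_cubicLaplace_zero (-ωc * z)).mul_left ωc)
  rw [Ai, ← (hsum.div_const _).tsum_eq]
  refine tsum_congr fun k => ?_
  rw [airyCoeff_eq, show -(-ωc ^ 2 * z) = (-1) * (-ωc ^ 2) * z by ring,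
    show -(-ωc * z) = (-1) * (-ωc) * z by ring]
  simp only [mul_pow, pow_succ]
  ring

lemma hasDerivAt_Ai_cubicLaplace (z : ℂ) :
    HasDerivAt Ai ((-ωc * cubicLaplace 1 (-ωc ^ 2 * z) + ωc ^ 2 * cubicLaplace 1 (-ωc * z))
      / (2 * π * Complex.I)) z := by
  rw [show Ai = _ from funext Ai_eq_cubicLaplace]
  convert! (((hasDerivAt_cubicLaplace_mul_left 0 (-ωc ^ 2) z).const_mul (-ωc ^ 2)).add
    ((hasDerivAt_cubicLaplace_mul_left 0 (-ωc) z).const_mul ωc)).div_const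
      (2 * π * Complex.I) using 2
  linear_combination (ωc * cubicLaplace 1 (-ωc ^ 2 * z)) * ωc_cube

lemma differentiable_Ai : Differentiable ℂ Ai :=
  fun z => (hasDerivAt_Ai_cubicLaplace z).differentiableAt

lemma hasDerivAt_Ai (z : ℂ) : HasDerivAt Ai (deriv Ai z) z := (differentiable_Ai z).hasDerivAt

lemma deriv_Ai (z : ℂ) :
    deriv Ai z = (-ωc * cubicLaplace 1 (-ωc ^ 2 * z) + ωc ^ 2 * cubicLaplace 1 (-ωc * z))
      / (2 * π * Complex.I) := (hasDerivAt_Ai_cubicLaplace z).deriv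

lemma hasDerivAt_deriv_Ai (z : ℂ) : HasDerivAt (deriv Ai) (z * Ai z) z := by
  rw [show deriv Ai = _ from funext deriv_Ai, Ai_eq_cubicLaplace, ← mul_div_assoc]
  convert! (((hasDerivAt_cubicLaplace_mul_left 1 (-ωc ^ 2) z).const_mul (-ωc)).add
    ((hasDerivAt_cubicLaplace_mul_left 1 (-ωc) z).const_mul (ωc ^ 2))).div_const
      (2 * π * Complex.I) using 2
  rw [cubicLaplace_two, cubicLaplace_two]
  linear_combination (z * ωc ^ 2 * cubicLaplace 0 (-ωc ^ 2 * z)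
    - z * ωc * cubicLaplace 0 (-ωc * z)) * ωc_cube

lemma Ai_connection (z : ℂ) : Ai z + ωc * Ai (ωc * z) + ωc ^ 2 * Ai (ωc ^ 2 * z) = 0 := by
  rw [Ai_eq_cubicLaplace, Ai_eq_cubicLaplace, Ai_eq_cubicLaplace,
    show -ωc ^ 2 * (ωc * z) = -z by linear_combination -z * ωc_cube,
    show -ωc * (ωc ^ 2 * z) = -z by linear_combination -z * ωc_cube,
    show -ωc ^ 2 * (ωc ^ 2 * z) = -ωc * z by linear_combination (-ωc * z) * ωc_cube,
    show -ωc * (ωc * z) = -ωc ^ 2 * z by ring]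
  linear_combination (-ωc * cubicLaplace 0 (-ωc * z)) / (2 * π * Complex.I) * ωc_cube

lemma Ai_zero : Ai 0 = airyCoeff 0 := by
  rw [Ai, tsum_eq_single 0 fun k hk => by rw [zero_pow hk, mul_zero], pow_zero, mul_one]

lemma deriv_Ai_zero : deriv Ai 0 = airyCoeff 1 := by
  have hpi : (π : ℂ) ≠ 0 := Complex.ofReal_ne_zero.2 pi_ne_zero
  have hI := Complex.I_ne_zero
  rw [deriv_Ai, airyCoeff_one_eq, mul_zero, mul_zero, cubicLaplace_at_zero,
    show -ωc * (cubicMoment 1 : ℂ) + ωc ^ 2 * cubicMoment 1 = -(1 + 2 * ωc) * cubicMoment 1 by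
      linear_combination (cubicMoment 1 : ℂ) * ωc_sq, one_add_two_mul_ωc]
  field_simp

lemma Ai_zero_mul_deriv_Ai_zero : Ai 0 * deriv Ai 0 = -(1 / (2 * π * √3)) := by
  rw [Ai_zero, deriv_Ai_zero, airyCoeff_zero_mul_one]

lemma Ai_zero_mul_deriv_Ai_zero_ne_zero : Ai 0 * deriv Ai 0 ≠ 0 := by
  rw [Ai_zero_mul_deriv_Ai_zero, neg_ne_zero]
  exact one_div_ne_zero (by exact_mod_cast (show 2 * π * √3 ≠ 0 by positivity))

lemma tendsto_Ai_atTop : Tendsto (fun x : ℝ => Ai x) atTop (𝓝 0) := by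
  have h₁ := tendsto_cubicLaplace_atTop 0 (c := -ωc ^ 2) (by rw [re_neg_ωc_sq]; norm_num)
  have h₂ := tendsto_cubicLaplace_atTop 0 (c := -ωc) (by rw [re_neg_ωc]; norm_num)
  simpa only [mul_zero, add_zero, zero_div, Ai_eq_cubicLaplace] using
    ((h₁.const_mul (-ωc ^ 2)).add (h₂.const_mul ωc)).div_const (2 * π * Complex.I)

lemma tendsto_deriv_Ai_atTop : Tendsto (fun x : ℝ => deriv Ai x) atTop (𝓝 0) := by
  have h₁ := tendsto_cubicLaplace_atTop 1 (c := -ωc ^ 2) (by rw [re_neg_ωc_sq]; norm_num)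
  have h₂ := tendsto_cubicLaplace_atTop 1 (c := -ωc) (by rw [re_neg_ωc]; norm_num)
  simpa only [mul_zero, add_zero, zero_div, deriv_Ai] using
    ((h₁.const_mul (-ωc)).add (h₂.const_mul (ωc ^ 2))).div_const (2 * π * Complex.I)

/-! ### Saddle-point form of the Airy function -/

/-- The integrand of the contour integral of `Ai` at `w ^ 2`, shifted to the saddle point and
normalised by its value there. -/
noncomputable def saddleWeight (w : ℂ) (τ : ℝ) : ℂ :=
  Complex.exp (-w * (τ : ℂ) ^ 2 - Complex.I * (τ : ℂ) ^ 3 / 3)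

/-- The moments `∫ τ ^ k * exp (-w * τ ^ 2 - I * τ ^ 3 / 3)` of the saddle-point integrand. -/
noncomputable def saddle (k : ℕ) (w : ℂ) : ℂ := ∫ τ : ℝ, (τ : ℂ) ^ k * saddleWeight w τ

lemma continuous_saddleWeight (w : ℂ) : Continuous (saddleWeight w) := by
  unfold saddleWeight
  fun_prop

lemma saddleWeight_eq_mul (w : ℂ) (τ : ℝ) :
    saddleWeight w τ = Complex.exp (-w * (τ : ℂ) ^ 2) *
      Complex.exp (Complex.I * ((-(τ ^ 3 / 3) : ℝ) : ℂ)) := by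
  rw [saddleWeight, ← Complex.exp_add]
  push_cast
  ring_nf

lemma norm_pow_mul_saddleWeight (k : ℕ) (w : ℂ) (τ : ℝ) :
    ‖(τ : ℂ) ^ k * saddleWeight w τ‖ = |τ| ^ k * Real.exp (-w.re * τ ^ 2) := by
  rw [saddleWeight_eq_mul, norm_mul, norm_mul, Complex.norm_exp_I_mul_ofReal, mul_one, norm_pow,
    Complex.norm_real, Real.norm_eq_abs, norm_cexp_neg_mul_sq]

lemma integrable_abs_pow_mul_exp_neg_mul_sq (k : ℕ) {a : ℝ} (ha : 0 < a) :
    Integrable (fun τ : ℝ => |τ| ^ k * Real.exp (-a * τ ^ 2)) := by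
  have h := (integrable_rpow_mul_exp_neg_mul_sq ha (s := k)
    (by linarith [k.cast_nonneg (α := ℝ)])).norm
  exact h.congr (Eventually.of_forall fun τ => by simp [Real.norm_eq_abs, Real.rpow_natCast])

lemma integral_abs_pow_mul_exp_neg_mul_sq (k : ℕ) {a : ℝ} (ha : 0 < a) :
    ∫ τ : ℝ, |τ| ^ k * Real.exp (-a * τ ^ 2)
      = a ^ (-((k : ℝ) + 1) / 2) * Real.Gamma (((k : ℝ) + 1) / 2) := by
  have h_even := integral_comp_abs (f := fun x => x ^ k * Real.exp (-a * x ^ 2))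
  have h_half := integral_rpow_mul_exp_neg_mul_rpow (p := 2) (q := k) (b := a) two_pos
    (by linarith [k.cast_nonneg (α := ℝ)]) ha
  simp only [sq_abs] at h_even
  simp only [Real.rpow_two, Real.rpow_natCast] at h_half
  rw [h_even, h_half]
  ring

lemma abs_pow_mul_exp_neg_mul_sq_le (k : ℕ) {a b : ℝ} (hab : a ≤ b) (τ : ℝ) :
    |τ| ^ k * Real.exp (-b * τ ^ 2) ≤ |τ| ^ k * Real.exp (-a * τ ^ 2) := by
  gcongr

lemma integrable_pow_mul_saddleWeight (k : ℕ) {w : ℂ} (hw : 0 < w.re) :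
    Integrable (fun τ : ℝ => (τ : ℂ) ^ k * saddleWeight w τ) :=
  (integrable_abs_pow_mul_exp_neg_mul_sq k hw).mono'
    ((by fun_prop : Continuous fun τ : ℝ => (τ : ℂ) ^ k).mul
      (continuous_saddleWeight w)).aestronglyMeasurable
    (Eventually.of_forall fun τ => (norm_pow_mul_saddleWeight k w τ).le)

lemma norm_saddle_le (k : ℕ) {w : ℂ} {a : ℝ} (ha : 0 < a) (hw : a ≤ w.re) :
    ‖saddle k w‖ ≤ a ^ (-((k : ℝ) + 1) / 2) * Real.Gamma (((k : ℝ) + 1) / 2) := by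
  rw [← integral_abs_pow_mul_exp_neg_mul_sq k ha]
  refine norm_integral_le_of_norm_le (integrable_abs_pow_mul_exp_neg_mul_sq k ha)
    (Eventually.of_forall fun τ => ?_)
  rw [norm_pow_mul_saddleWeight]
  exact abs_pow_mul_exp_neg_mul_sq_le k hw τ

lemma hasDerivAt_saddleWeight_left (w : ℂ) (τ : ℝ) :
    HasDerivAt (fun w => saddleWeight w τ) (-((τ : ℂ) ^ 2 * saddleWeight w τ)) w := by
  have h : HasDerivAt (fun w : ℂ => -w * (τ : ℂ) ^ 2 - Complex.I * (τ : ℂ) ^ 3 / 3)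
      (-(τ : ℂ) ^ 2) w := by
    simpa using ((hasDerivAt_id w).neg.mul_const ((τ : ℂ) ^ 2)).sub_const
      (Complex.I * (τ : ℂ) ^ 3 / 3)
  convert! h.cexp using 1
  rw [saddleWeight]
  ring

lemma hasDerivAt_saddleWeight (w : ℂ) (τ : ℝ) :
    HasDerivAt (saddleWeight w)
      ((-2 * w * τ - Complex.I * (τ : ℂ) ^ 2) * saddleWeight w τ) τ := by
  have h : HasDerivAt (fun x : ℂ => -w * x ^ 2 - Complex.I * x ^ 3 / 3)
      (-2 * w * τ - Complex.I * (τ : ℂ) ^ 2) (τ : ℂ) := by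
    convert! ((hasDerivAt_pow 2 (τ : ℂ)).const_mul (-w)).sub
      (((hasDerivAt_pow 3 (τ : ℂ)).const_mul Complex.I).div_const 3) using 1
    norm_num
    ring
  convert! h.cexp.comp_ofReal using 1
  rw [saddleWeight]
  ring

lemma hasDerivAt_saddle (k : ℕ) {w : ℂ} (hw : 0 < w.re) :
    HasDerivAt (saddle k) (-saddle (k + 2) w) w := by
  have key := hasDerivAt_integral_of_dominated_loc_of_deriv_le
    (μ := (volume : Measure ℝ)) (s := Metric.ball w (w.re / 2)) (x₀ := w)
    (F := fun w τ => (τ : ℂ) ^ k * saddleWeight w τ)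
    (F' := fun w τ => -((τ : ℂ) ^ (k + 2) * saddleWeight w τ))
    (bound := fun τ => |τ| ^ (k + 2) * Real.exp (-(w.re / 2) * τ ^ 2))
    (Metric.ball_mem_nhds w (by positivity))
    (Eventually.of_forall fun w => ((by fun_prop : Continuous fun τ : ℝ => (τ : ℂ) ^ k).mul
      (continuous_saddleWeight w)).aestronglyMeasurable)
    (integrable_pow_mul_saddleWeight k hw)
    (integrable_pow_mul_saddleWeight (k + 2) hw).neg.aestronglyMeasurable ?_
    (integrable_abs_pow_mul_exp_neg_mul_sq (k + 2) (by positivity)) ?_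
  · have h := key.2
    rw [integral_neg] at h
    exact h
  · filter_upwards with τ x hx
    have h_re : w.re / 2 ≤ x.re := by
      have h := (abs_le.1 (Complex.abs_re_le_norm (x - w))).1
      rw [mem_ball_iff_norm] at hx
      rw [Complex.sub_re] at h
      linarith
    rw [norm_neg, norm_pow_mul_saddleWeight]
    exact abs_pow_mul_exp_neg_mul_sq_le (k + 2) h_re τ
  · filter_upwards with τ x _
    convert! (hasDerivAt_saddleWeight_left x τ).const_mul ((τ : ℂ) ^ k) using 1
    ring

lemma saddle_recurrence (k : ℕ) {w : ℂ} (hw : 0 < w.re) :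
    k * saddle (k - 1) w = 2 * w * saddle (k + 1) w + Complex.I * saddle (k + 2) w := by
  have h_prev := (integrable_pow_mul_saddleWeight (k - 1) hw).const_mul (k : ℂ)
  have h_one := (integrable_pow_mul_saddleWeight (k + 1) hw).const_mul (-2 * w)
  have h_two := (integrable_pow_mul_saddleWeight (k + 2) hw).const_mul (-Complex.I)
  have h_deriv (τ : ℝ) : HasDerivAt (fun τ : ℝ => (τ : ℂ) ^ k * saddleWeight w τ)
      (k * ((τ : ℂ) ^ (k - 1) * saddleWeight w τ) +
        (-2 * w * ((τ : ℂ) ^ (k + 1) * saddleWeight w τ) +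
          -Complex.I * ((τ : ℂ) ^ (k + 2) * saddleWeight w τ))) τ := by
    convert! ((hasDerivAt_pow k (τ : ℂ)).comp_ofReal).mul (hasDerivAt_saddleWeight w τ) using 1
    ring
  have h := integral_eq_zero_of_hasDerivAt_of_integrable h_deriv (h_prev.add (h_one.add h_two))
    (integrable_pow_mul_saddleWeight k hw)
  rw [integral_add h_prev (by exact h_one.add h_two), integral_add h_one h_two,
    integral_const_mul, integral_const_mul, integral_const_mul] at h
  unfold saddle
  linear_combination h

lemma two_mul_mul_saddle_one {w : ℂ} (hw : 0 < w.re) :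
    2 * w * saddle 1 w = -Complex.I * saddle 2 w := by
  linear_combination -(saddle_recurrence 0 hw) + (Nat.cast_zero (R := ℂ)) * saddle (0 - 1) w

lemma saddle_zero_eq {w : ℂ} (hw : 0 < w.re) :
    saddle 0 w = 2 * w * saddle 2 w + Complex.I * saddle 3 w := by
  linear_combination saddle_recurrence 1 hw - (Nat.cast_one (R := ℂ)) * saddle 0 w

/-- The saddle-point form of the recessive Airy solution at `w ^ 2`. -/
noncomputable def airySaddle (w : ℂ) : ℂ := Complex.exp (-(2 * w ^ 3 / 3)) * saddle 0 w

/-- The derivative of `airySaddle` with respect to `w ^ 2`. -/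
noncomputable def airySaddleSlope (w : ℂ) : ℂ :=
  -(Complex.exp (-(2 * w ^ 3 / 3)) * (w * saddle 0 w + Complex.I * saddle 1 w))

lemma hasDerivAt_cexp_neg_two_mul_cube_div_three (w : ℂ) :
    HasDerivAt (fun w : ℂ => Complex.exp (-(2 * w ^ 3 / 3)))
      (Complex.exp (-(2 * w ^ 3 / 3)) * (-2 * w ^ 2)) w := by
  convert! (((hasDerivAt_pow 3 w).const_mul (2 : ℂ)).div_const 3).neg.cexp using 1
  norm_num
  ring

lemma hasDerivAt_airySaddle {w : ℂ} (hw : 0 < w.re) :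
    HasDerivAt airySaddle (2 * w * airySaddleSlope w) w := by
  convert! (hasDerivAt_cexp_neg_two_mul_cube_div_three w).mul (hasDerivAt_saddle 0 hw) using 1
  rw [airySaddleSlope]
  linear_combination (-Complex.exp (-(2 * w ^ 3 / 3)) * Complex.I) * two_mul_mul_saddle_one hw
    + Complex.exp (-(2 * w ^ 3 / 3)) * saddle 2 w * Complex.I_sq

lemma hasDerivAt_airySaddleSlope {w : ℂ} (hw : 0 < w.re) :
    HasDerivAt airySaddleSlope (2 * w ^ 3 * airySaddle w) w := by
  convert! ((hasDerivAt_cexp_neg_two_mul_cube_div_three w).mul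
    (((hasDerivAt_id w).mul (hasDerivAt_saddle 0 hw)).add
      ((hasDerivAt_saddle 1 hw).const_mul Complex.I))).neg using 1
  simp only [airySaddle, id, Pi.add_apply, Pi.mul_apply]
  linear_combination (Complex.exp (-(2 * w ^ 3 / 3))) * saddle_zero_eq hw
    - (Complex.exp (-(2 * w ^ 3 / 3)) * w * Complex.I) * two_mul_mul_saddle_one hw
    + Complex.exp (-(2 * w ^ 3 / 3)) * w * saddle 2 w * Complex.I_sq

lemma hasDerivAt_Ai_sq (w : ℂ) : HasDerivAt (fun w => Ai (w ^ 2)) (2 * w * deriv Ai (w ^ 2)) w := by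
  convert! (hasDerivAt_Ai (w ^ 2)).comp w (hasDerivAt_pow 2 w) using 1
  norm_num
  ring

lemma hasDerivAt_deriv_Ai_sq (w : ℂ) :
    HasDerivAt (fun w => deriv Ai (w ^ 2)) (2 * w ^ 3 * Ai (w ^ 2)) w := by
  convert! (hasDerivAt_deriv_Ai (w ^ 2)).comp w (hasDerivAt_pow 2 w) using 1
  norm_num
  ring

lemma norm_cexp_neg_two_mul_cube_div_three (w : ℂ) :
    ‖Complex.exp (-(2 * w ^ 3 / 3))‖ = Real.exp (-(2 / 3 * (w ^ 3).re)) := by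
  have h : -(2 * w ^ 3 / 3) = ((-(2 / 3) : ℝ) : ℂ) * w ^ 3 := by push_cast; ring
  rw [Complex.norm_exp, h, Complex.re_ofReal_mul, neg_mul]

lemma exp_neg_cube_mul_le {x : ℝ} (hx : 1 ≤ x) : Real.exp (-(2 / 3 * x ^ 3)) * x ≤ 2 := by
  have h_le : x ≤ 3 / 2 * Real.exp (2 / 3 * x ^ 3) := by
    nlinarith [Real.add_one_le_exp (2 / 3 * x ^ 3), mul_nonneg (sub_nonneg.2 hx) (sub_nonneg.2 hx)]
  rw [Real.exp_neg, inv_mul_le_iff₀ (Real.exp_pos _)]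
  linarith [Real.exp_pos (2 / 3 * x ^ 3)]

lemma norm_saddle_le_Gamma (k : ℕ) {x : ℝ} (hx : 1 ≤ x) :
    ‖saddle k x‖ ≤ Real.Gamma (((k : ℝ) + 1) / 2) := by
  simpa using norm_saddle_le k one_pos (w := x) (by simpa using hx)

lemma norm_airySaddle_le {x : ℝ} (hx : 1 ≤ x) :
    ‖airySaddle x‖ ≤ Real.Gamma (((0 : ℕ) + 1) / 2) := by
  rw [airySaddle, norm_mul, norm_cexp_neg_two_mul_cube_div_three, ← Complex.ofReal_pow,
    Complex.ofReal_re]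
  have h_exp : Real.exp (-(2 / 3 * x ^ 3)) ≤ 1 := Real.exp_le_one_iff.2 (by
    have : 0 ≤ x ^ 3 := by positivity
    linarith)
  exact (mul_le_of_le_one_left (norm_nonneg _) h_exp).trans (norm_saddle_le_Gamma 0 hx)

lemma norm_airySaddleSlope_le {x : ℝ} (hx : 1 ≤ x) :
    ‖airySaddleSlope x‖ ≤
      2 * (Real.Gamma (((0 : ℕ) + 1) / 2) + Real.Gamma (((1 : ℕ) + 1) / 2)) := by
  rw [airySaddleSlope, norm_neg, norm_mul, norm_cexp_neg_two_mul_cube_div_three,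
    ← Complex.ofReal_pow, Complex.ofReal_re]
  have h_sum : ‖(x : ℂ) * saddle 0 x + Complex.I * saddle 1 x‖
      ≤ x * (‖saddle 0 x‖ + ‖saddle 1 x‖) := by
    refine (norm_add_le _ _).trans ?_
    rw [norm_mul, norm_mul, Complex.norm_I, Complex.norm_real, Real.norm_of_nonneg (by linarith)]
    nlinarith [norm_nonneg (saddle 1 x)]
  calc _ ≤ Real.exp (-(2 / 3 * x ^ 3)) * (x * (‖saddle 0 x‖ + ‖saddle 1 x‖)) := by gcongr
    _ = Real.exp (-(2 / 3 * x ^ 3)) * x * (‖saddle 0 x‖ + ‖saddle 1 x‖) := by ring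
    _ ≤ _ := by
      gcongr
      exacts [exp_neg_cube_mul_le hx, norm_saddle_le_Gamma 0 hx, norm_saddle_le_Gamma 1 hx]

lemma tendsto_airySaddle_wronskian :
    Tendsto (fun x : ℝ => airySaddle x * deriv Ai ((x : ℂ) ^ 2) -
      airySaddleSlope x * Ai ((x : ℂ) ^ 2)) atTop (𝓝 0) := by
  have h_sq : Tendsto (fun x : ℝ => x ^ 2) atTop atTop := tendsto_pow_atTop two_ne_zero
  have h_deriv : Tendsto (fun x : ℝ => deriv Ai ((x : ℂ) ^ 2)) atTop (𝓝 0) :=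
    (tendsto_deriv_Ai_atTop.comp h_sq).congr fun x => by simp
  have h_Ai : Tendsto (fun x : ℝ => Ai ((x : ℂ) ^ 2)) atTop (𝓝 0) :=
    (tendsto_Ai_atTop.comp h_sq).congr fun x => by simp
  rw [← sub_zero (0 : ℂ)]
  refine .sub ?_ ?_
  · exact (h_deriv.zero_mul_isBoundedUnder_le (isBoundedUnder_of_eventually_le
      ((eventually_ge_atTop 1).mono fun x hx => norm_airySaddle_le hx))).congr
        fun x => mul_comm _ _
  · exact (h_Ai.zero_mul_isBoundedUnder_le (isBoundedUnder_of_eventually_le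
      ((eventually_ge_atTop 1).mono fun x hx => norm_airySaddleSlope_le hx))).congr
        fun x => mul_comm _ _

lemma airySaddle_mul_deriv_Ai_sq {w : ℂ} (hw : 0 < w.re) :
    airySaddle w * deriv Ai (w ^ 2) = airySaddleSlope w * Ai (w ^ 2) := by
  -- The Wronskian of two solutions is constant, and both solutions are recessive at `+∞`.
  set wronskian : ℂ → ℂ := fun w => airySaddle w * deriv Ai (w ^ 2) -
    airySaddleSlope w * Ai (w ^ 2)
  have h_deriv (v : ℂ) (hv : 0 < v.re) : HasDerivAt wronskian 0 v := by
    convert! ((hasDerivAt_airySaddle hv).mul (hasDerivAt_deriv_Ai_sq v)).sub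
      ((hasDerivAt_airySaddleSlope hv).mul (hasDerivAt_Ai_sq v)) using 1
    ring
  have h_const (x : ℝ) (hx : 0 < x) : wronskian w = wronskian x :=
    (isOpen_lt continuous_const Complex.continuous_re).is_const_of_deriv_eq_zero
      (convex_halfSpace_re_gt 0).isPreconnected
      (fun v hv => (h_deriv v hv).differentiableAt.differentiableWithinAt)
      (fun v hv => (h_deriv v hv).deriv) hw (by simpa using hx)
  have h_lim : Tendsto (fun x : ℝ => wronskian x) atTop (𝓝 (wronskian w)) :=
    tendsto_const_nhds.congr' ((eventually_gt_atTop 0).mono h_const)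
  exact sub_eq_zero.1 (tendsto_nhds_unique h_lim tendsto_airySaddle_wronskian)

lemma deriv_Ai_sq_mul_saddle {w : ℂ} (hw : 0 < w.re) :
    deriv Ai (w ^ 2) * saddle 0 w
      = -(Ai (w ^ 2) * (w * saddle 0 w + Complex.I * saddle 1 w)) := by
  have h := airySaddle_mul_deriv_Ai_sq hw
  simp only [airySaddle, airySaddleSlope] at h
  refine mul_left_cancel₀ (Complex.exp_ne_zero (-(2 * w ^ 3 / 3))) ?_
  linear_combination h

/-! ### Saddle-point asymptotics -/

/-- The region in which the saddle-point asymptotics of `Ai (w ^ 2)` are used. -/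
def airyCone (μ : ℝ) : Set ℂ := {w | μ < w.re ∧ ‖w‖ < 4 * w.re}

lemma airyCone_anti {μ ν : ℝ} (h : μ ≤ ν) : airyCone ν ⊆ airyCone μ :=
  fun _ hw => ⟨h.trans_lt hw.1, hw.2⟩

lemma le_norm_of_mem_airyCone {μ : ℝ} {w : ℂ} (hw : w ∈ airyCone μ) : μ ≤ ‖w‖ :=
  hw.1.le.trans (Complex.re_le_norm w)

lemma isOpen_airyCone (μ : ℝ) : IsOpen (airyCone μ) :=
  (isOpen_lt continuous_const Complex.continuous_re).inter
    (isOpen_lt continuous_norm (continuous_const.mul Complex.continuous_re))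

lemma convex_airyCone (μ : ℝ) : Convex ℝ (airyCone μ) := by
  have h_norm : ConvexOn ℝ univ (fun w : ℂ => ‖w‖ - 4 * w.re) :=
    convexOn_univ_norm.sub (((4 : ℝ) • Complex.reLm).concaveOn convex_univ)
  convert! (convex_halfSpace_re_gt μ).inter (h_norm.convex_lt 0) using 1
  ext w
  simp [airyCone]

lemma norm_saddle_zero_sub_le {w : ℂ} (hw : 0 < w.re) :
    ‖saddle 0 w - (π / w) ^ (1 / 2 : ℂ)‖ ≤ (w.re ^ 2)⁻¹ / 3 := by
  have h_bound (τ : ℝ) : ‖(τ : ℂ) ^ 0 * saddleWeight w τ - Complex.exp (-w * (τ : ℂ) ^ 2)‖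
      ≤ |τ| ^ 3 * Real.exp (-w.re * τ ^ 2) / 3 := by
    have h_phase := Real.norm_exp_I_mul_ofReal_sub_one_le (x := -(τ ^ 3 / 3))
    rw [norm_neg, Real.norm_eq_abs, abs_div, abs_pow, abs_of_pos (three_pos : (0 : ℝ) < 3)]
      at h_phase
    rw [pow_zero, one_mul, saddleWeight_eq_mul, ← mul_sub_one, norm_mul, norm_cexp_neg_mul_sq]
    calc _ ≤ Real.exp (-w.re * τ ^ 2) * (|τ| ^ 3 / 3) := by gcongr
      _ = _ := by ring
  rw [← integral_gaussian_complex hw, saddle, ← integral_sub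
    (integrable_pow_mul_saddleWeight 0 hw) (integrable_cexp_neg_mul_sq hw)]
  refine (norm_integral_le_of_norm_le ((integrable_abs_pow_mul_exp_neg_mul_sq 3 hw).div_const 3)
    (Eventually.of_forall h_bound)).trans_eq ?_
  rw [integral_div, integral_abs_pow_mul_exp_neg_mul_sq 3 hw]
  norm_num [Real.rpow_neg hw.le]

lemma norm_cpow_one_half (z : ℂ) : ‖z ^ (1 / 2 : ℂ)‖ = √‖z‖ := by
  rw [show (1 / 2 : ℂ) = ((1 / 2 : ℝ) : ℂ) by norm_num, Complex.norm_cpow_real,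
    ← Real.sqrt_eq_rpow]

lemma sqrt_pi_le_two : √π ≤ 2 := by
  rw [Real.sqrt_le_left (by norm_num)]
  linarith [Real.pi_lt_four]

lemma abs_sqrt_mul_norm_saddle_zero_sub_le {w : ℂ} (hw : w ∈ airyCone 4) :
    |√‖w‖ * ‖saddle 0 w‖ - √π| ≤ 2 / 3 := by
  have hre : 0 < w.re := by linarith [hw.1]
  set s := √‖w‖
  have hs_sq : s ^ 2 = ‖w‖ := Real.sq_sqrt (norm_nonneg _)
  have hs_two : 2 ≤ s := Real.le_sqrt_of_sq_le (by linarith [le_norm_of_mem_airyCone hw])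
  have h_error : (w.re ^ 2)⁻¹ / 3 ≤ 16 / 3 / s ^ 4 :=
    calc _ ≤ ((s ^ 2 / 4) ^ 2)⁻¹ / 3 := by
          gcongr
          rw [hs_sq]
          linarith [hw.2]
      _ = _ := by field_simp; norm_num
  have h_abs : |‖saddle 0 w‖ - √π / s| ≤ 16 / 3 / s ^ 4 := by
    have h_main : ‖((π : ℂ) / w) ^ (1 / 2 : ℂ)‖ = √π / s := by
      rw [norm_cpow_one_half, norm_div, Complex.norm_real, Real.norm_of_nonneg pi_pos.le,
        Real.sqrt_div pi_pos.le]
    rw [← h_main]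
    exact ((abs_norm_sub_norm_le _ _).trans (norm_saddle_zero_sub_le hre)).trans h_error
  calc |s * ‖saddle 0 w‖ - √π| = |s * (‖saddle 0 w‖ - √π / s)| := by field_simp
    _ = s * |‖saddle 0 w‖ - √π / s| := by rw [abs_mul, abs_of_nonneg (by linarith : 0 ≤ s)]
    _ ≤ s * (16 / 3 / s ^ 4) := by gcongr
    _ = 16 / 3 / s ^ 3 := by field_simp
    _ ≤ 16 / 3 / 2 ^ 3 := by gcongr
    _ = 2 / 3 := by norm_num

lemma one_le_sqrt_mul_norm_saddle_zero {w : ℂ} (hw : w ∈ airyCone 4) :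
    1 ≤ √‖w‖ * ‖saddle 0 w‖ := by
  have h_pi : (1.7 : ℝ) ≤ √π := Real.le_sqrt_of_sq_le (by linarith [Real.pi_gt_three])
  linarith [(abs_le.1 (abs_sqrt_mul_norm_saddle_zero_sub_le hw)).1]

lemma sqrt_mul_norm_saddle_zero_le {w : ℂ} (hw : w ∈ airyCone 4) :
    √‖w‖ * ‖saddle 0 w‖ ≤ 3 := by
  linarith [(abs_le.1 (abs_sqrt_mul_norm_saddle_zero_sub_le hw)).2, sqrt_pi_le_two]

lemma saddle_zero_ne_zero {w : ℂ} (hw : w ∈ airyCone 4) : saddle 0 w ≠ 0 := by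
  intro h
  have := one_le_sqrt_mul_norm_saddle_zero hw
  rw [h] at this
  norm_num at this

lemma airySaddle_ne_zero {w : ℂ} (hw : w ∈ airyCone 4) : airySaddle w ≠ 0 :=
  mul_ne_zero (Complex.exp_ne_zero _) (saddle_zero_ne_zero hw)

lemma norm_saddle_two_le {w : ℂ} (hw : w ∈ airyCone 4) :
    ‖saddle 2 w‖ ≤ 8 / ‖w‖ * ‖saddle 0 w‖ := by
  have hw0 : 0 < ‖w‖ := by linarith [le_norm_of_mem_airyCone hw]
  have h_Gamma : Real.Gamma (((2 : ℕ) + 1) / 2) ≤ 1 := by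
    rw [show (((2 : ℕ) : ℝ) + 1) / 2 = 1 / 2 + 1 by norm_num, Real.Gamma_add_one (by norm_num),
      Real.Gamma_one_half_eq]
    linarith [sqrt_pi_le_two]
  have h_pow : (‖w‖ / 4) ^ (-(((2 : ℕ) : ℝ) + 1) / 2) = 8 / (‖w‖ * √‖w‖) := by
    have ha : 0 < ‖w‖ / 4 := by positivity
    rw [show -(((2 : ℕ) : ℝ) + 1) / 2 = -(1 + 1 / 2) by norm_num, Real.rpow_neg ha.le,
      Real.rpow_add ha, Real.rpow_one, ← Real.sqrt_eq_rpow, Real.sqrt_div (norm_nonneg _),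
      show (4 : ℝ) = 2 ^ 2 by norm_num, Real.sqrt_sq (by norm_num)]
    field_simp
    norm_num
  calc ‖saddle 2 w‖ ≤ 8 / (‖w‖ * √‖w‖) * Real.Gamma (((2 : ℕ) + 1) / 2) :=
        h_pow ▸ norm_saddle_le 2 (by positivity) (by linarith [hw.2])
    _ ≤ 8 / (‖w‖ * √‖w‖) * (√‖w‖ * ‖saddle 0 w‖) := by
        gcongr
        exact h_Gamma.trans (one_le_sqrt_mul_norm_saddle_zero hw)
    _ = _ := by field_simp

/-- The correction `e(w)` in `Ai'(w²) = Ai(w²)(-w + e(w))`. -/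
noncomputable def airyCorr (w : ℂ) : ℂ := -(Complex.I * saddle 1 w) / saddle 0 w

lemma norm_airyCorr_le {w : ℂ} (hw : w ∈ airyCone 4) : ‖airyCorr w‖ ≤ 4 / ‖w‖ ^ 2 := by
  have hw0 : 0 < ‖w‖ := by linarith [le_norm_of_mem_airyCone hw]
  have h_one : 2 * ‖w‖ * ‖saddle 1 w‖ = ‖saddle 2 w‖ := by
    simpa using congrArg norm (two_mul_mul_saddle_one (w := w) (by linarith [hw.1]))
  rw [airyCorr, norm_div, norm_neg, norm_mul, Complex.norm_I, one_mul,
    div_le_iff₀ (norm_pos_iff.2 (saddle_zero_ne_zero hw))]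
  calc ‖saddle 1 w‖ = ‖saddle 2 w‖ / (2 * ‖w‖) := by rw [← h_one]; field_simp
    _ ≤ 8 / ‖w‖ * ‖saddle 0 w‖ / (2 * ‖w‖) := by gcongr; exact norm_saddle_two_le hw
    _ = _ := by field_simp; ring

lemma deriv_Ai_sq {w : ℂ} (hw : w ∈ airyCone 4) :
    deriv Ai (w ^ 2) = Ai (w ^ 2) * (-w + airyCorr w) := by
  have h0 := saddle_zero_ne_zero hw
  refine mul_right_cancel₀ h0 ((deriv_Ai_sq_mul_saddle (by linarith [hw.1])).trans ?_)
  unfold airyCorr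
  field_simp
  ring

lemma exists_Ai_sq_eq_mul_airySaddle :
    ∃ c : ℂ, ∀ w ∈ airyCone 4, Ai (w ^ 2) = c * airySaddle w := by
  have h_deriv : ∀ w ∈ airyCone 4, HasDerivAt (fun w => Ai (w ^ 2) / airySaddle w) 0 w := by
    intro w hw
    have hre : 0 < w.re := by linarith [hw.1]
    convert! (hasDerivAt_Ai_sq w).div (hasDerivAt_airySaddle hre) (airySaddle_ne_zero hw) using 1
    rw [eq_comm, div_eq_zero_iff]
    left
    linear_combination (2 * w) * airySaddle_mul_deriv_Ai_sq hre
  have h_five : (5 : ℂ) ∈ airyCone 4 := by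
    simp only [airyCone, mem_ofPred_eq]
    norm_num
  refine ⟨Ai (5 ^ 2) / airySaddle 5, fun w hw => ?_⟩
  rw [← div_eq_iff (airySaddle_ne_zero hw)]
  exact (isOpen_airyCone 4).is_const_of_deriv_eq_zero (convex_airyCone 4).isPreconnected
    (fun v hv => (h_deriv v hv).differentiableAt.differentiableWithinAt)
    (fun v hv => (h_deriv v hv).deriv) hw h_five

lemma norm_saddle_zero_le_mul_exp {w₁ w₂ : ℂ} {μ : ℝ} (hμ : 4 ≤ μ) (h₁ : w₁ ∈ airyCone μ)
    (h₂ : w₂ ∈ airyCone μ) :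
    ‖saddle 0 w₁‖ ≤ ‖saddle 0 w₂‖ * Real.exp (8 / μ * ‖w₁ - w₂‖) := by
  set γ : ℝ → ℂ := fun t => w₂ + t * (w₁ - w₂) with hγ
  have h_mem : ∀ t ∈ Icc (0 : ℝ) 1, γ t ∈ airyCone μ := fun t ht => by
    simpa [hγ, Complex.real_smul] using (convex_airyCone μ).add_smul_sub_mem h₂ h₁ ht
  have h_deriv : ∀ t ∈ Icc (0 : ℝ) 1,
      HasDerivAt (fun t => saddle 0 (γ t)) (-saddle 2 (γ t) * (w₁ - w₂)) t := by
    intro t ht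
    have h_line : HasDerivAt (fun x : ℂ => w₂ + x * (w₁ - w₂)) (w₁ - w₂) (t : ℂ) := by
      simpa using ((hasDerivAt_id (t : ℂ)).mul_const (w₁ - w₂)).const_add w₂
    exact (HasDerivAt.comp (t : ℂ)
      (hasDerivAt_saddle 0 (by linarith [(h_mem t ht).1])) h_line).comp_ofReal
  have h_bound : ∀ t ∈ Ico (0 : ℝ) 1, ‖-saddle 2 (γ t) * (w₁ - w₂)‖
      ≤ 8 / μ * ‖w₁ - w₂‖ * ‖saddle 0 (γ t)‖ + 0 := by
    intro t ht
    have h := h_mem t (Ico_subset_Icc_self ht)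
    have h_norm := le_norm_of_mem_airyCone h
    rw [norm_mul, norm_neg, add_zero]
    calc _ ≤ 8 / ‖γ t‖ * ‖saddle 0 (γ t)‖ * ‖w₁ - w₂‖ := by
          gcongr
          exact norm_saddle_two_le (airyCone_anti hμ h)
      _ ≤ 8 / μ * ‖saddle 0 (γ t)‖ * ‖w₁ - w₂‖ := by gcongr
      _ = _ := by ring
  simpa [gronwallBound_ε0, hγ] using norm_le_gronwallBound_of_norm_deriv_right_le
    (a := 0) (b := 1) (f := fun t => saddle 0 (γ t)) (δ := ‖saddle 0 w₂‖)
    (fun t ht => (h_deriv t ht).continuousAt.continuousWithinAt)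
    (fun t ht => (h_deriv t (Ico_subset_Icc_self ht)).hasDerivWithinAt) (by simp [hγ]) h_bound
    1 (by simp)

/-! ### Factorisation of the resonance determinant -/

lemma hasDerivAt_Ai_mul_left (c ζ : ℂ) :
    HasDerivAt (fun ζ => Ai (c * ζ)) (deriv Ai (c * ζ) * c) ζ := by
  have h := (hasDerivAt_Ai (c * ζ)).comp ζ ((hasDerivAt_id ζ).const_mul c)
  rw [mul_one] at h
  exact h

lemma hasDerivAt_deriv_Ai_mul_left (c ζ : ℂ) :
    HasDerivAt (fun ζ => deriv Ai (c * ζ)) (c * ζ * Ai (c * ζ) * c) ζ := by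
  have h := (hasDerivAt_deriv_Ai (c * ζ)).comp ζ ((hasDerivAt_id ζ).const_mul c)
  rw [mul_one] at h
  exact h

lemma Ai_wronskian {a b : ℂ} (ha : a ^ 3 = 1) (hb : b ^ 3 = 1) (ζ : ℂ) :
    Ai (a * ζ) * (b * deriv Ai (b * ζ)) - a * deriv Ai (a * ζ) * Ai (b * ζ)
      = Ai 0 * deriv Ai 0 * (b - a) := by
  have h_deriv (ζ : ℂ) : HasDerivAt (fun ζ => Ai (a * ζ) * (b * deriv Ai (b * ζ))
      - a * deriv Ai (a * ζ) * Ai (b * ζ)) 0 ζ := by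
    convert! ((hasDerivAt_Ai_mul_left a ζ).mul
      ((hasDerivAt_deriv_Ai_mul_left b ζ).const_mul b)).sub
      (((hasDerivAt_deriv_Ai_mul_left a ζ).const_mul a).mul (hasDerivAt_Ai_mul_left b ζ)) using 1
    linear_combination (ζ * Ai (a * ζ) * Ai (b * ζ)) * (ha - hb)
  have h_const := is_const_of_deriv_eq_zero (fun ζ => (h_deriv ζ).differentiableAt)
    (fun ζ => (h_deriv ζ).deriv) ζ 0
  simp only [mul_zero] at h_const
  linear_combination h_const

lemma norm_eq_one_of_cube_eq_one {m : ℂ} (hm : m ^ 3 = 1) : ‖m‖ = 1 :=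
  Complex.norm_eq_one_of_pow_eq_one hm three_ne_zero

lemma norm_ωc : ‖ωc‖ = 1 := norm_eq_one_of_cube_eq_one ωc_cube

lemma ωc_sq_pow_three : (ωc ^ 2) ^ 3 = 1 := by
  linear_combination (ωc ^ 3 + 1) * ωc_cube

lemma ωc_sq_ne_one : ωc ^ 2 ≠ 1 := by
  intro h
  have h_one : ωc = 1 := by linear_combination ωc_cube - ωc * h
  have h_sq := ωc_sq
  rw [h_one] at h_sq
  norm_num at h_sq

lemma Ai_sq_connection (p : ℂ) :
    Ai (p ^ 2) + ωc * Ai ((ωc ^ 2 * p) ^ 2) + ωc ^ 2 * Ai ((-ωc * p) ^ 2) = 0 := by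
  rw [show (ωc ^ 2 * p) ^ 2 = ωc * p ^ 2 by linear_combination ωc * p ^ 2 * ωc_cube,
    show (-ωc * p) ^ 2 = ωc ^ 2 * p ^ 2 by ring]
  exact Ai_connection (p ^ 2)

/-- The points `p` at which the saddle-point asymptotics hold both for `Ai ((m * p) ^ 2)` and for
`Ai (ω² * p ^ 2)`. -/
def airyChannel (m : ℂ) (μ : ℝ) : Set ℂ := {p | m * p ∈ airyCone μ ∧ -ωc * p ∈ airyCone μ}

/-- The ratio of the Airy solutions `Ai ((m * p) ^ 2)` and `Ai (ω² * p ^ 2)`. -/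
noncomputable def airyRatio (m p : ℂ) : ℂ := Ai ((m * p) ^ 2) / Ai ((-ωc * p) ^ 2)

/-- The correction to `2 * p` in the reciprocal of `Ai ((m * p) ^ 2) * Ai (ω² * p ^ 2)`. -/
noncomputable def channelCorr (m p : ℂ) : ℂ :=
  ωc ^ 2 * airyCorr (-ωc * p) - m ^ 2 * airyCorr (m * p)

section Channel

variable {m p p' : ℂ} {μ : ℝ}

lemma airyChannel_anti {ν : ℝ} (h : μ ≤ ν) : airyChannel m ν ⊆ airyChannel m μ :=
  fun _ hp => ⟨airyCone_anti h hp.1, airyCone_anti h hp.2⟩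

lemma norm_channelCorr_le (hm : m ^ 3 = 1) (hp : p ∈ airyChannel m 4) :
    ‖channelCorr m p‖ ≤ 8 / ‖p‖ ^ 2 := by
  have h_dominated := norm_airyCorr_le hp.1
  have h_dominating := norm_airyCorr_le hp.2
  rw [norm_mul, norm_eq_one_of_cube_eq_one hm, one_mul] at h_dominated
  rw [norm_mul, norm_neg, norm_ωc, one_mul] at h_dominating
  calc ‖channelCorr m p‖ ≤ ‖ωc ^ 2 * airyCorr (-ωc * p)‖ + ‖m ^ 2 * airyCorr (m * p)‖ :=
        norm_sub_le _ _
    _ ≤ 4 / ‖p‖ ^ 2 + 4 / ‖p‖ ^ 2 := by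
        simpa [norm_ωc, norm_eq_one_of_cube_eq_one hm] using add_le_add h_dominating h_dominated
    _ = 8 / ‖p‖ ^ 2 := by ring

lemma Ai_mul_Ai_mul (hm : m ^ 3 = 1) (hp : p ∈ airyChannel m 4) :
    Ai ((m * p) ^ 2) * Ai ((-ωc * p) ^ 2) * (2 * p + channelCorr m p)
      = Ai 0 * deriv Ai 0 * (ωc ^ 2 - m ^ 2) := by
  have h := Ai_wronskian (a := m ^ 2) (b := ωc ^ 2)
    (by linear_combination (m ^ 3 + 1) * hm) ωc_sq_pow_three (p ^ 2)
  rw [show m ^ 2 * p ^ 2 = (m * p) ^ 2 by ring, show ωc ^ 2 * p ^ 2 = (-ωc * p) ^ 2 by ring,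
    deriv_Ai_sq hp.1, deriv_Ai_sq hp.2] at h
  rw [← h, channelCorr]
  linear_combination (-Ai ((m * p) ^ 2) * Ai ((-ωc * p) ^ 2) * p) * (hm + ωc_cube)

lemma Ai_mul_Ai_ne_zero (hm : m ^ 3 = 1) (hmω : m ^ 2 ≠ ωc ^ 2) (hp : p ∈ airyChannel m 4) :
    Ai ((m * p) ^ 2) * Ai ((-ωc * p) ^ 2) ≠ 0 := by
  refine left_ne_zero_of_mul (b := 2 * p + channelCorr m p) ?_
  rw [Ai_mul_Ai_mul hm hp]
  exact mul_ne_zero Ai_zero_mul_deriv_Ai_zero_ne_zero (sub_ne_zero.2 hmω.symm)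

lemma norm_airyRatio (hm : m ^ 3 = 1) (hmω : m ^ 2 ≠ ωc ^ 2) (hp : p ∈ airyChannel m 4) :
    ‖airyRatio m p‖
      = Real.exp (-(4 / 3 * (p ^ 3).re)) * (‖saddle 0 (m * p)‖ / ‖saddle 0 (-ωc * p)‖) := by
  obtain ⟨c, hc⟩ := exists_Ai_sq_eq_mul_airySaddle
  have hc0 : c ≠ 0 := by
    have h := left_ne_zero_of_mul (Ai_mul_Ai_ne_zero hm hmω hp)
    rw [hc _ hp.1] at h
    exact left_ne_zero_of_mul h
  have h_exp : Real.exp (-(2 / 3 * (p ^ 3).re)) / Real.exp (2 / 3 * (p ^ 3).re)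
      = Real.exp (-(4 / 3 * (p ^ 3).re)) := by
    rw [← Real.exp_sub]
    ring_nf
  rw [airyRatio, hc _ hp.1, hc _ hp.2, mul_div_mul_left _ _ hc0, airySaddle, airySaddle, norm_div,
    norm_mul, norm_mul, norm_cexp_neg_two_mul_cube_div_three,
    norm_cexp_neg_two_mul_cube_div_three, mul_div_mul_comm, mul_pow m, hm, one_mul,
    show (-ωc * p) ^ 3 = -p ^ 3 by linear_combination (-p ^ 3) * ωc_cube, Complex.neg_re, mul_neg,
    neg_neg, h_exp]

lemma norm_airyRatio_mem_Icc (hm : m ^ 3 = 1) (hmω : m ^ 2 ≠ ωc ^ 2) (hp : p ∈ airyChannel m 4) :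
    ‖airyRatio m p‖ ∈ Icc (Real.exp (-(4 / 3 * (p ^ 3).re)) / 3)
      (3 * Real.exp (-(4 / 3 * (p ^ 3).re))) := by
  have l₁ := one_le_sqrt_mul_norm_saddle_zero hp.1
  have u₁ := sqrt_mul_norm_saddle_zero_le hp.1
  have l₂ := one_le_sqrt_mul_norm_saddle_zero hp.2
  have u₂ := sqrt_mul_norm_saddle_zero_le hp.2
  rw [norm_mul, norm_eq_one_of_cube_eq_one hm, one_mul] at l₁ u₁
  rw [norm_mul, norm_neg, norm_ωc, one_mul] at l₂ u₂
  have h_sqrt : √‖p‖ ≠ 0 := left_ne_zero_of_mul (by linarith : √‖p‖ * ‖saddle 0 (m * p)‖ ≠ 0)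
  rw [norm_airyRatio hm hmω hp, ← mul_div_mul_left ‖saddle 0 (m * p)‖ _ h_sqrt]
  refine ⟨?_, ?_⟩
  · rw [div_eq_mul_inv, ← one_div]
    gcongr
  · rw [mul_comm]
    gcongr
    exact (div_le_div₀ (by norm_num) u₁ one_pos l₂).trans_eq (div_one 3)

lemma airyRatio_ne_zero (hm : m ^ 3 = 1) (hmω : m ^ 2 ≠ ωc ^ 2) (hp : p ∈ airyChannel m 4) :
    airyRatio m p ≠ 0 :=
  div_ne_zero (left_ne_zero_of_mul (Ai_mul_Ai_ne_zero hm hmω hp))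
    (right_ne_zero_of_mul (Ai_mul_Ai_ne_zero hm hmω hp))

lemma norm_saddle_div_saddle_le (hμ : 4 ≤ μ) (hm : ‖m‖ = 1) (hp : p ∈ airyChannel m μ)
    (hp' : p' ∈ airyChannel m μ) :
    ‖saddle 0 (m * p)‖ / ‖saddle 0 (-ωc * p)‖ ≤
      ‖saddle 0 (m * p')‖ / ‖saddle 0 (-ωc * p')‖ * Real.exp (16 / μ * ‖p - p'‖) := by
  have h_num := norm_saddle_zero_le_mul_exp hμ hp.1 hp'.1
  have h_den := norm_saddle_zero_le_mul_exp hμ hp'.2 hp.2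
  rw [← mul_sub, norm_mul, hm, one_mul] at h_num
  rw [← mul_sub, norm_mul, norm_neg, norm_ωc, one_mul, norm_sub_rev] at h_den
  have h_pos : 0 < ‖saddle 0 (-ωc * p)‖ :=
    norm_pos_iff.2 (saddle_zero_ne_zero (airyCone_anti hμ hp.2))
  have h_pos' : 0 < ‖saddle 0 (-ωc * p')‖ :=
    norm_pos_iff.2 (saddle_zero_ne_zero (airyCone_anti hμ hp'.2))
  rw [show 16 / μ * ‖p - p'‖ = 8 / μ * ‖p - p'‖ + 8 / μ * ‖p - p'‖ by ring, Real.exp_add,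
    div_mul_eq_mul_div, div_le_div_iff₀ h_pos h_pos']
  calc _ ≤ ‖saddle 0 (m * p')‖ * Real.exp (8 / μ * ‖p - p'‖) *
        (‖saddle 0 (-ωc * p)‖ * Real.exp (8 / μ * ‖p - p'‖)) := by gcongr
    _ = _ := by ring

lemma norm_airyRatio_le_mul_exp (hμ : 4 ≤ μ) (hm : m ^ 3 = 1) (hmω : m ^ 2 ≠ ωc ^ 2)
    (hp : p ∈ airyChannel m μ) (hp' : p' ∈ airyChannel m μ) :
    ‖airyRatio m p‖ ≤ ‖airyRatio m p'‖ *
      Real.exp (-(4 / 3 * (p ^ 3 - p' ^ 3).re) + 16 / μ * ‖p - p'‖) := by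
  have h_exp : Real.exp (-(4 / 3 * (p ^ 3).re)) =
      Real.exp (-(4 / 3 * (p' ^ 3).re)) * Real.exp (-(4 / 3 * (p ^ 3 - p' ^ 3).re)) := by
    rw [← Real.exp_add, Complex.sub_re]
    ring_nf
  rw [norm_airyRatio hm hmω (airyChannel_anti hμ hp),
    norm_airyRatio hm hmω (airyChannel_anti hμ hp'), h_exp, Real.exp_add]
  calc _ ≤ _ := mul_le_mul_of_nonneg_left (norm_saddle_div_saddle_le hμ
        (norm_eq_one_of_cube_eq_one hm) hp hp') (by positivity)
    _ = _ := by ring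

end Channel

lemma exp_neg_pi_mul_I_div_six :
    Complex.exp (-(π : ℂ) * Complex.I / 6) = (√3 / 2 : ℝ) - 1 / 2 * Complex.I := by
  rw [show -(π : ℂ) * Complex.I / 6 = ((-(π / 6) : ℝ) : ℂ) * Complex.I by push_cast; ring,
    Complex.exp_mul_I, ← Complex.ofReal_cos, ← Complex.ofReal_sin, Real.cos_neg, Real.sin_neg,
    Real.cos_pi_div_six, Real.sin_pi_div_six]
  push_cast
  ring

lemma Wf_eq (f : ℝ) :
    Wf f = -(Ai 0 * deriv Ai 0 * (1 - ωc)) * ((f ^ ((1 : ℝ) / 3) : ℝ) : ℂ) := by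
  have h3 : ((√3 : ℝ) : ℂ) ≠ 0 := by simp
  have hπ : (π : ℂ) ≠ 0 := by exact_mod_cast pi_ne_zero
  rw [Wf, exp_neg_pi_mul_I_div_six, Ai_zero_mul_deriv_Ai_zero, ωc_eq]
  push_cast
  field_simp
  linear_combination (((f ^ ((1 : ℝ) / 3) : ℝ) : ℂ)) * ofReal_sqrt_three_sq

lemma mul_Wf_ne_zero {η f : ℝ} (hη : η ≠ 0) (hf : 0 < f) : (η : ℂ) * Wf f ≠ 0 := by
  have hF : ((f ^ ((1 : ℝ) / 3) : ℝ) : ℂ) ≠ 0 := by exact_mod_cast (Real.rpow_pos_of_pos hf _).ne'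
  exact mul_ne_zero (by exact_mod_cast hη) (div_ne_zero (mul_ne_zero hF (Complex.exp_ne_zero _))
    (by exact_mod_cast two_pi_pos.ne'))

lemma rpow_neg_two_thirds {f : ℝ} (hf : 0 < f) :
    ((f ^ (-(2 : ℝ) / 3) : ℝ) : ℂ) = 1 / ((f ^ ((1 : ℝ) / 3) : ℝ) : ℂ) ^ 2 := by
  rw [← Complex.ofReal_pow, ← Real.rpow_natCast, ← Real.rpow_mul hf.le,
    show -(2 : ℝ) / 3 = -(1 / 3 * ((2 : ℕ) : ℝ)) by norm_num, Real.rpow_neg hf.le]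
  push_cast
  simp [one_div]

lemma Df_eq_det {κ η f : ℝ} {z pp pm : ℂ}
    (hp : pp ^ 2 = -(z - κ * f) * ((f ^ (-(2 : ℝ) / 3) : ℝ) : ℂ))
    (hm : pm ^ 2 = -(z + κ * f) * ((f ^ (-(2 : ℝ) / 3) : ℝ) : ℂ)) :
    Df κ η f z = (1 + Ai ((ωc ^ 2 * pp) ^ 2) * Ai (pp ^ 2) / (η * Wf f)) *
        (1 + Ai ((ωc ^ 2 * pm) ^ 2) * Ai (pm ^ 2) / (η * Wf f)) -
      (Ai ((ωc ^ 2 * pm) ^ 2) * Ai (pp ^ 2) / (η * Wf f)) ^ 2 := by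
  rw [show (ωc ^ 2 * pp) ^ 2 = -ωc * (z - κ * f) * ((f ^ (-(2 : ℝ) / 3) : ℝ) : ℂ) by
      linear_combination ωc * pp ^ 2 * ωc_cube + ωc * hp,
    show (ωc ^ 2 * pm) ^ 2 = -ωc * (z + κ * f) * ((f ^ (-(2 : ℝ) / 3) : ℝ) : ℂ) by
      linear_combination ωc * pm ^ 2 * ωc_cube + ωc * hm, hp, hm, Df, alphaP, alphaM, betaP, betaM]
  ring

/-- The reciprocal of the diagonal coupling `α / (ηW)` at `p`, up to sign and a factor `1 + E` with
`E` a multiple of `airyRatio m p`. -/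
noncomputable def invCoupling (η F : ℝ) (m p : ℂ) : ℂ := η * F * (2 * p + channelCorr m p)

section Coupling

variable {η f : ℝ} {p : ℂ} {t u v s K W F H : ℂ}

lemma direct_coupling_of_connection (hW : W = -(K * (1 - ωc)) * F) (ht : t ≠ 0)
    (hk : v * t * s = K * (ωc ^ 2 - 1 ^ 2)) (hc : v + ωc * u + ωc ^ 2 * t = 0) :
    t ^ 2 * (ωc * (v / t)) * (H * F * s) = -(H * W) ∧ u = -ωc * t * (1 + ωc * (v / t)) ∧
      v = ωc ^ 2 * (ωc * (v / t)) * t := by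
  refine ⟨?_, ?_, ?_⟩
  · rw [hW]
    field_simp
    linear_combination (H * F * ωc) * hk + (H * F * K) * ωc_cube
  · field_simp
    linear_combination ωc ^ 2 * hc - (u + ωc * t) * ωc_cube
  · field_simp
    linear_combination (-v) * ωc_cube

lemma rotated_coupling_of_connection (hW : W = -(K * (1 - ωc)) * F) (ht : t ≠ 0)
    (hk : u * t * s = K * (ωc ^ 2 - (ωc ^ 2) ^ 2)) (hc : v + ωc * u + ωc ^ 2 * t = 0) :
    t ^ 2 * (ωc ^ 2 * (u / t)) * (H * F * s) = H * W ∧ u = ωc * (ωc ^ 2 * (u / t)) * t ∧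
      v = -ωc ^ 2 * t * (1 + ωc ^ 2 * (u / t)) := by
  refine ⟨?_, ?_, ?_⟩
  · rw [hW]
    field_simp
    linear_combination (H * F * ωc ^ 2) * hk + (H * F * K) * (ωc - (ωc ^ 3 + 1)) * ωc_cube
  · field_simp
    linear_combination (-u) * ωc_cube
  · field_simp
    linear_combination hc + ωc * u * ωc_cube

lemma one_sq_ne_ωc_sq : (1 : ℂ) ^ 2 ≠ ωc ^ 2 := by
  simpa using ωc_sq_ne_one.symm

lemma ωc_sq_sq_ne_ωc_sq : (ωc ^ 2) ^ 2 ≠ ωc ^ 2 := by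
  intro h
  have h_sq : ωc = ωc ^ 2 := by linear_combination h - ωc * ωc_cube
  exact ωc_sq_ne_one (by linear_combination ωc_cube + ωc * h_sq)

lemma direct_coupling (hp : p ∈ airyChannel 1 4) :
    Ai ((-ωc * p) ^ 2) ^ 2 * (ωc * airyRatio 1 p) * invCoupling η (f ^ ((1 : ℝ) / 3)) 1 p
        = -(η * Wf f) ∧
      Ai ((ωc ^ 2 * p) ^ 2) = -ωc * Ai ((-ωc * p) ^ 2) * (1 + ωc * airyRatio 1 p) ∧
      Ai (p ^ 2) = ωc ^ 2 * (ωc * airyRatio 1 p) * Ai ((-ωc * p) ^ 2) := by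
  have h_prod := Ai_mul_Ai_mul (one_pow 3) hp
  rw [one_mul] at h_prod
  rw [airyRatio, one_mul]
  exact direct_coupling_of_connection (Wf_eq f)
    (right_ne_zero_of_mul (Ai_mul_Ai_ne_zero (one_pow 3) one_sq_ne_ωc_sq hp)) h_prod
    (Ai_sq_connection p)

lemma rotated_coupling (hp : p ∈ airyChannel (ωc ^ 2) 4) :
    Ai ((-ωc * p) ^ 2) ^ 2 * (ωc ^ 2 * airyRatio (ωc ^ 2) p) *
        invCoupling η (f ^ ((1 : ℝ) / 3)) (ωc ^ 2) p = η * Wf f ∧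
      Ai ((ωc ^ 2 * p) ^ 2)
        = ωc * (ωc ^ 2 * airyRatio (ωc ^ 2) p) * Ai ((-ωc * p) ^ 2) ∧
      Ai (p ^ 2) = -ωc ^ 2 * Ai ((-ωc * p) ^ 2) * (1 + ωc ^ 2 * airyRatio (ωc ^ 2) p) :=
  rotated_coupling_of_connection (Wf_eq f)
    (right_ne_zero_of_mul (Ai_mul_Ai_ne_zero ωc_sq_pow_three ωc_sq_sq_ne_ωc_sq hp))
    (Ai_mul_Ai_mul ωc_sq_pow_three hp) (Ai_sq_connection p)

end Coupling

section DetAlgebra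

variable {tp tm up um vp vm Ep Em ap am H : ℂ}

lemma det_mul_eq_direct (hH : H ≠ 0)
    (hp : tp ^ 2 * Ep * ap = -H) (hm : tm ^ 2 * Em * am = -H)
    (hup : up = -ωc * tp * (1 + Ep)) (hum : um = -ωc * tm * (1 + Em))
    (hvp : vp = ωc ^ 2 * Ep * tp) (hvm : vm = ωc ^ 2 * Em * tm) :
    ((1 + up * vp / H) * (1 + um * vm / H) - (um * vp / H) ^ 2) * (ap * am)
      = (1 + ap) * (1 + am) - Ep / Em + Em * (ap + 1) + Ep * (am - 1) := by
  have hEm : Em ≠ 0 := by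
    rintro rfl
    exact hH (by simpa using hm.symm)
  have h_diag_p : up * vp / H * ap = 1 + Ep := by
    rw [hup, hvp]
    field_simp
    linear_combination (-ωc ^ 3 * (1 + Ep)) * hp + H * (1 + Ep) * ωc_cube
  have h_diag_m : um * vm / H * am = 1 + Em := by
    rw [hum, hvm]
    field_simp
    linear_combination (-ωc ^ 3 * (1 + Em)) * hm + H * (1 + Em) * ωc_cube
  have h_off : (um * vp / H) ^ 2 * (ap * am) = Ep / Em + 2 * Ep + Ep * Em := by
    rw [hum, hvp]
    field_simp
    linear_combination (ωc ^ 6 * (1 + Em) ^ 2 * Ep) * (tm ^ 2 * Em * am * hp - H * hm)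
      + H ^ 2 * (1 + Em) ^ 2 * Ep * (ωc ^ 3 + 1) * ωc_cube
  linear_combination (am + um * vm / H * am) * h_diag_p + (ap + 1 + Ep) * h_diag_m - h_off

lemma det_mul_eq_rotated (hH : H ≠ 0)
    (hp : tp ^ 2 * Ep * ap = H) (hm : tm ^ 2 * Em * am = H)
    (hup : up = ωc * Ep * tp) (hum : um = ωc * Em * tm)
    (hvp : vp = -ωc ^ 2 * tp * (1 + Ep)) (hvm : vm = -ωc ^ 2 * tm * (1 + Em)) :
    ((1 + up * vp / H) * (1 + um * vm / H) - (um * vp / H) ^ 2) * (ap * am)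
      = (ap - 1) * (am - 1) - Em / Ep - Em * (ap + 1) - Ep * (am - 1) := by
  have hEp : Ep ≠ 0 := by
    rintro rfl
    exact hH (by simpa using hp.symm)
  have h_diag_p : up * vp / H * ap = -(1 + Ep) := by
    rw [hup, hvp]
    field_simp
    linear_combination (-ωc ^ 3 * (1 + Ep)) * hp - H * (1 + Ep) * ωc_cube
  have h_diag_m : um * vm / H * am = -(1 + Em) := by
    rw [hum, hvm]
    field_simp
    linear_combination (-ωc ^ 3 * (1 + Em)) * hm - H * (1 + Em) * ωc_cube
  have h_off : (um * vp / H) ^ 2 * (ap * am) = Em / Ep + 2 * Em + Ep * Em := by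
    rw [hum, hvp]
    field_simp
    linear_combination (ωc ^ 6 * (1 + Ep) ^ 2 * Em) * (tm ^ 2 * Em * am * hp + H * hm)
      + H ^ 2 * (1 + Ep) ^ 2 * Em * (ωc ^ 3 + 1) * ωc_cube
  linear_combination (am + um * vm / H * am) * h_diag_p + (ap - 1 - Ep) * h_diag_m - h_off

end DetAlgebra

section Factorisation

variable {κ η f : ℝ} {z pp pm : ℂ}

lemma Df_mul_eq_direct (hη : η ≠ 0) (hf : 0 < f)
    (hp : pp ^ 2 = -(z - κ * f) * ((f ^ (-(2 : ℝ) / 3) : ℝ) : ℂ))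
    (hm : pm ^ 2 = -(z + κ * f) * ((f ^ (-(2 : ℝ) / 3) : ℝ) : ℂ))
    (hpc : pp ∈ airyChannel 1 4) (hmc : pm ∈ airyChannel 1 4) :
    Df κ η f z *
        (invCoupling η (f ^ ((1 : ℝ) / 3)) 1 pp * invCoupling η (f ^ ((1 : ℝ) / 3)) 1 pm)
      = (1 + invCoupling η (f ^ ((1 : ℝ) / 3)) 1 pp) * (1 + invCoupling η (f ^ ((1 : ℝ) / 3)) 1 pm)
        - ωc * airyRatio 1 pp / (ωc * airyRatio 1 pm)
        + ωc * airyRatio 1 pm * (invCoupling η (f ^ ((1 : ℝ) / 3)) 1 pp + 1)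
        + ωc * airyRatio 1 pp * (invCoupling η (f ^ ((1 : ℝ) / 3)) 1 pm - 1) := by
  obtain ⟨h_couple_p, h_rot_p, h_sq_p⟩ := direct_coupling (η := η) (f := f) hpc
  obtain ⟨h_couple_m, h_rot_m, h_sq_m⟩ := direct_coupling (η := η) (f := f) hmc
  rw [Df_eq_det hp hm]
  exact det_mul_eq_direct (mul_Wf_ne_zero hη hf) h_couple_p h_couple_m h_rot_p h_rot_m h_sq_p h_sq_m

lemma Df_mul_eq_rotated (hη : η ≠ 0) (hf : 0 < f)
    (hp : pp ^ 2 = -(z - κ * f) * ((f ^ (-(2 : ℝ) / 3) : ℝ) : ℂ))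
    (hm : pm ^ 2 = -(z + κ * f) * ((f ^ (-(2 : ℝ) / 3) : ℝ) : ℂ))
    (hpc : pp ∈ airyChannel (ωc ^ 2) 4) (hmc : pm ∈ airyChannel (ωc ^ 2) 4) :
    Df κ η f z * (invCoupling η (f ^ ((1 : ℝ) / 3)) (ωc ^ 2) pp *
        invCoupling η (f ^ ((1 : ℝ) / 3)) (ωc ^ 2) pm)
      = (invCoupling η (f ^ ((1 : ℝ) / 3)) (ωc ^ 2) pp - 1) *
          (invCoupling η (f ^ ((1 : ℝ) / 3)) (ωc ^ 2) pm - 1)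
        - ωc ^ 2 * airyRatio (ωc ^ 2) pm / (ωc ^ 2 * airyRatio (ωc ^ 2) pp)
        - ωc ^ 2 * airyRatio (ωc ^ 2) pm * (invCoupling η (f ^ ((1 : ℝ) / 3)) (ωc ^ 2) pp + 1)
        - ωc ^ 2 * airyRatio (ωc ^ 2) pp *
          (invCoupling η (f ^ ((1 : ℝ) / 3)) (ωc ^ 2) pm - 1) := by
  obtain ⟨h_couple_p, h_rot_p, h_sq_p⟩ := rotated_coupling (η := η) (f := f) hpc
  obtain ⟨h_couple_m, h_rot_m, h_sq_m⟩ := rotated_coupling (η := η) (f := f) hmc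
  rw [Df_eq_det hp hm]
  exact det_mul_eq_rotated (mul_Wf_ne_zero hη hf) h_couple_p h_couple_m h_rot_p h_rot_m h_sq_p
    h_sq_m

end Factorisation

/-! ### Square roots in the closed first quadrant -/

/-- The closed first quadrant, the range of the square root on the closed upper half-plane. -/
def quadrant : Set ℂ := {q | 0 ≤ q.re ∧ 0 ≤ q.im}

lemma sq_norm_eq_re_sq_add_im_sq (w : ℂ) : ‖w‖ ^ 2 = w.re ^ 2 + w.im ^ 2 := by
  rw [Complex.sq_norm, Complex.normSq_apply]
  ring

lemma two_mul_re_sq (q : ℂ) : 2 * q.re ^ 2 = ‖q ^ 2‖ + (q ^ 2).re := by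
  rw [norm_pow, sq_norm_eq_re_sq_add_im_sq, sq q, Complex.mul_re]
  ring

lemma re_cube (q : ℂ) : (q ^ 3).re = q.re * (4 * q.re ^ 2 - 3 * ‖q‖ ^ 2) := by
  rw [sq_norm_eq_re_sq_add_im_sq]
  simp only [pow_succ, pow_zero, one_mul, Complex.mul_re, Complex.mul_im]
  ring

lemma exists_quadrant_sqrt {ζ : ℂ} (h : 0 ≤ ζ.im) : ∃ q ∈ quadrant, q ^ 2 = ζ := by
  have h_add : 0 ≤ (‖ζ‖ + ζ.re) / 2 := by
    linarith [(abs_le.1 (Complex.abs_re_le_norm ζ)).1]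
  have h_sub : 0 ≤ (‖ζ‖ - ζ.re) / 2 := by
    linarith [(abs_le.1 (Complex.abs_re_le_norm ζ)).2]
  refine ⟨⟨√((‖ζ‖ + ζ.re) / 2), √((‖ζ‖ - ζ.re) / 2)⟩, ⟨Real.sqrt_nonneg _, Real.sqrt_nonneg _⟩,
    Complex.ext ?_ ?_⟩
  · rw [sq, Complex.mul_re, Real.mul_self_sqrt h_add, Real.mul_self_sqrt h_sub]
    ring
  · rw [sq, Complex.mul_im, mul_comm (√((‖ζ‖ - ζ.re) / 2)), ← Real.sqrt_mul h_add,
      show (‖ζ‖ + ζ.re) / 2 * ((‖ζ‖ - ζ.re) / 2) = (ζ.im / 2) ^ 2 by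
        linear_combination sq_norm_eq_re_sq_add_im_sq ζ / 4, Real.sqrt_sq (by positivity)]
    ring

lemma add_sq_norm_le_sq_norm_add {a b : ℂ} (ha : a ∈ quadrant) (hb : b ∈ quadrant) :
    ‖a‖ ^ 2 + ‖b‖ ^ 2 ≤ ‖a + b‖ ^ 2 := by
  simp only [sq_norm_eq_re_sq_add_im_sq, Complex.add_re, Complex.add_im]
  nlinarith [mul_nonneg ha.1 hb.1, mul_nonneg ha.2 hb.2]

lemma norm_le_norm_add_of_mem_quadrant {a b : ℂ} (ha : a ∈ quadrant) (hb : b ∈ quadrant) :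
    ‖b‖ ≤ ‖a + b‖ :=
  le_of_sq_le_sq (by linarith [add_sq_norm_le_sq_norm_add ha hb, sq_nonneg ‖a‖]) (norm_nonneg _)

lemma norm_sub_mul_norm_le {a b : ℂ} (ha : a ∈ quadrant) (hb : b ∈ quadrant) :
    ‖a - b‖ * ‖b‖ ≤ ‖a ^ 2 - b ^ 2‖ := by
  rw [sq_sub_sq, mul_comm, norm_mul]
  gcongr
  exact norm_le_norm_add_of_mem_quadrant ha hb

/-- The square roots `q`, `qp`, `qm` in the closed first quadrant of `-z`, `-(z - κ * f)` and
`-(z + κ * f)`, for `z = -q ^ 2`. -/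
structure QuadrantRoots (κ f : ℝ) (q qp qm : ℂ) : Prop where
  mem : q ∈ quadrant
  p_mem : qp ∈ quadrant
  m_mem : qm ∈ quadrant
  p_sq : qp ^ 2 = q ^ 2 + (κ * f : ℝ)
  m_sq : qm ^ 2 = q ^ 2 - (κ * f : ℝ)

lemma exists_quadrantRoots (κ f : ℝ) {z : ℂ} (hz : z.im ≤ 0) :
    ∃ q qp qm, q ^ 2 = -z ∧ QuadrantRoots κ f q qp qm := by
  have h_im (c : ℝ) : 0 ≤ (-z + c).im := by simpa using hz
  obtain ⟨q, hq, hq_sq⟩ := exists_quadrant_sqrt (h_im 0)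
  obtain ⟨qp, hp, hp_sq⟩ := exists_quadrant_sqrt (h_im (κ * f))
  obtain ⟨qm, hm, hm_sq⟩ := exists_quadrant_sqrt (h_im (-(κ * f)))
  rw [Complex.ofReal_zero, add_zero] at hq_sq
  exact ⟨q, qp, qm, hq_sq, hq, hp, hm, by rw [hp_sq, hq_sq],
    by rw [hm_sq, hq_sq, Complex.ofReal_neg, sub_eq_add_neg]⟩

namespace QuadrantRoots

variable {κ f : ℝ} {q qp qm : ℂ}

lemma norm_p_sub_le (h : QuadrantRoots κ f q qp qm) (hκf : 0 ≤ κ * f) (hq : 0 < ‖q‖) :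
    ‖qp - q‖ ≤ κ * f / ‖q‖ := by
  rw [le_div_iff₀ hq, ← Complex.norm_of_nonneg hκf]
  simpa [h.p_sq] using norm_sub_mul_norm_le h.p_mem h.mem

lemma norm_m_sub_le (h : QuadrantRoots κ f q qp qm) (hκf : 0 ≤ κ * f) (hq : 0 < ‖q‖) :
    ‖qm - q‖ ≤ κ * f / ‖q‖ := by
  rw [le_div_iff₀ hq, ← Complex.norm_of_nonneg hκf]
  simpa [h.m_sq] using norm_sub_mul_norm_le h.m_mem h.mem

lemma norm_sq_le (h : QuadrantRoots κ f q qp qm) (hκf : 0 ≤ κ * f) :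
    ‖q ^ 2‖ ≤ ‖qp ^ 2‖ + κ * f := by
  calc ‖q ^ 2‖ = ‖qp ^ 2 - ((κ * f : ℝ) : ℂ)‖ := by rw [h.p_sq, add_sub_cancel_right]
    _ ≤ ‖qp ^ 2‖ + ‖((κ * f : ℝ) : ℂ)‖ := norm_sub_le _ _
    _ = ‖qp ^ 2‖ + κ * f := by rw [Complex.norm_of_nonneg hκf]

lemma re_p_sq (h : QuadrantRoots κ f q qp qm) : (qp ^ 2).re = (q ^ 2).re + κ * f := by
  rw [h.p_sq, Complex.add_re, Complex.ofReal_re]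

lemma re_le_p_re (h : QuadrantRoots κ f q qp qm) (hκf : 0 ≤ κ * f) : q.re ≤ qp.re :=
  le_of_sq_le_sq
    (by linarith [two_mul_re_sq q, two_mul_re_sq qp, h.norm_sq_le hκf, h.re_p_sq]) h.p_mem.1

lemma norm_le_norm_add (h : QuadrantRoots κ f q qp qm) : ‖q‖ ≤ ‖qp + qm‖ := by
  have h_sum : (2 : ℂ) * q ^ 2 = qp ^ 2 + qm ^ 2 := by
    rw [h.p_sq, h.m_sq]
    ring
  have h_two : 2 * ‖q‖ ^ 2 ≤ ‖qp‖ ^ 2 + ‖qm‖ ^ 2 := by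
    calc 2 * ‖q‖ ^ 2 = ‖qp ^ 2 + qm ^ 2‖ := by simp [← h_sum]
      _ ≤ ‖qp ^ 2‖ + ‖qm ^ 2‖ := norm_add_le _ _
      _ = ‖qp‖ ^ 2 + ‖qm‖ ^ 2 := by simp only [norm_pow]
  exact le_of_sq_le_sq
    (by linarith [add_sq_norm_le_sq_norm_add h.p_mem h.m_mem, sq_nonneg ‖q‖]) (norm_nonneg _)

lemma norm_p_sub_m_le (h : QuadrantRoots κ f q qp qm) (hκf : 0 ≤ κ * f) (hq : 0 < ‖q‖) :
    ‖qp - qm‖ ≤ 2 * κ * f / ‖q‖ := by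
  rw [le_div_iff₀ hq]
  calc ‖qp - qm‖ * ‖q‖ ≤ ‖qp - qm‖ * ‖qp + qm‖ := by gcongr; exact h.norm_le_norm_add
    _ = ‖((2 * (κ * f) : ℝ) : ℂ)‖ := by
      rw [← norm_mul]
      congr 1
      have h_p := h.p_sq
      have h_m := h.m_sq
      push_cast at h_p h_m ⊢
      linear_combination h_p - h_m
    _ = 2 * κ * f := by rw [Complex.norm_of_nonneg (by positivity), mul_assoc]

lemma re_cube_sub_ge (h : QuadrantRoots κ f q qp qm) (hκf : 0 ≤ κ * f) (hq : 0 < ‖q‖) :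
    2 * κ * f * q.re - (2 * κ * f / ‖q‖) ^ 3 / 3 ≤ 4 / 3 * (qp ^ 3 - qm ^ 3).re := by
  -- `4 (a³ - b³) = 3 (a² - b²) (a + b) + (a - b)³`
  have h_cubes : ((4 / 3 : ℝ) : ℂ) * (qp ^ 3 - qm ^ 3)
      = ((2 * κ * f : ℝ) : ℂ) * (qp + qm) + ((1 / 3 : ℝ) : ℂ) * (qp - qm) ^ 3 := by
    have h_p := h.p_sq
    have h_m := h.m_sq
    push_cast at h_p h_m ⊢
    linear_combination (qp + qm) * (h_p - h_m)
  have h_re := congrArg Complex.re h_cubes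
  rw [Complex.add_re, Complex.re_ofReal_mul, Complex.re_ofReal_mul, Complex.re_ofReal_mul,
    Complex.add_re] at h_re
  have h_cube : -((2 * κ * f / ‖q‖) ^ 3) ≤ ((qp - qm) ^ 3).re := by
    refine neg_le.1 ((neg_le_abs _).trans ((Complex.abs_re_le_norm _).trans ?_))
    rw [norm_pow]
    exact pow_le_pow_left₀ (norm_nonneg _) (h.norm_p_sub_m_le hκf hq) 3
  have h_lin : 2 * (κ * f) * q.re ≤ 2 * (κ * f) * (qp.re + qm.re) := by
    gcongr
    linarith [h.re_le_p_re hκf, h.m_mem.1]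
  linarith

lemma re_p_cube_le (h : QuadrantRoots κ f q qp qm) (hκf : 0 ≤ κ * f)
    (hsmall : 20 * (κ * f) ≤ ‖q‖ ^ 2) (hre : q.re ≤ ‖q‖ / 2) :
    (qp ^ 3).re ≤ -(q.re * ‖q‖ ^ 2) := by
  have h_norm := h.norm_sq_le hκf
  have h_q := two_mul_re_sq q
  have h_p := two_mul_re_sq qp
  rw [norm_pow] at h_q h_p
  rw [norm_pow, norm_pow] at h_norm
  have h_re_sq : q.re ^ 2 ≤ ‖q‖ ^ 2 / 4 := by nlinarith [h.mem.1]
  have h_factor : 4 * qp.re ^ 2 - 3 * ‖qp‖ ^ 2 ≤ -‖q‖ ^ 2 := by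
    linarith [h.re_p_sq, sq_nonneg ‖q‖]
  calc (qp ^ 3).re = qp.re * (4 * qp.re ^ 2 - 3 * ‖qp‖ ^ 2) := re_cube qp
    _ ≤ qp.re * -‖q‖ ^ 2 := mul_le_mul_of_nonneg_left h_factor h.p_mem.1
    _ ≤ q.re * -‖q‖ ^ 2 :=
      mul_le_mul_of_nonpos_right (h.re_le_p_re hκf) (neg_nonpos.2 (sq_nonneg _))
    _ = -(q.re * ‖q‖ ^ 2) := by ring

end QuadrantRoots

lemma abs_re_cube_sub_le {κ f : ℝ} {q w : ℂ} (hq : 0 < ‖q‖) (hw : ‖w - q‖ ≤ κ * f / ‖q‖)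
    (hsmall : ‖w - q‖ ≤ ‖q‖ / 20) : |(w ^ 3).re - (q ^ 3).re| ≤ 4 * κ * f * ‖q‖ := by
  have hwn : ‖w‖ ≤ 21 / 20 * ‖q‖ := by linarith [norm_le_norm_add_norm_sub' w q]
  have h_quad : ‖w * w + w * q + q * q‖ ≤ 4 * ‖q‖ ^ 2 := by
    refine (norm_add₃_le).trans ?_
    simp only [norm_mul]
    nlinarith [norm_nonneg w]
  calc |(w ^ 3).re - (q ^ 3).re| ≤ ‖w ^ 3 - q ^ 3‖ := by
        rw [← Complex.sub_re]
        exact Complex.abs_re_le_norm _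
    _ = ‖w - q‖ * ‖w * w + w * q + q * q‖ := by
        rw [← norm_mul]
        congr 1
        ring
    _ ≤ κ * f / ‖q‖ * (4 * ‖q‖ ^ 2) :=
        mul_le_mul hw h_quad (norm_nonneg _) ((norm_nonneg _).trans hw)
    _ = 4 * κ * f * ‖q‖ := by field_simp

lemma half_norm_le_re_neg_ωc_mul {q : ℂ} (h : q ∈ quadrant) : ‖q‖ / 2 ≤ (-ωc * q).re := by
  have h_re : (-ωc * q).re = (q.re + √3 * q.im) / 2 := by
    rw [ωc_eq]
    simp [Complex.mul_re, Complex.mul_im]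
    ring
  have h_sqrt : √3 ^ 2 = 3 := Real.sq_sqrt (by norm_num)
  have h_nonneg : 0 ≤ √3 * q.im := mul_nonneg (Real.sqrt_nonneg 3) h.2
  have h_norm : ‖q‖ ≤ q.re + √3 * q.im := le_of_sq_le_sq
    (by nlinarith [sq_norm_eq_re_sq_add_im_sq q, mul_nonneg h.1 h_nonneg, sq_nonneg q.im])
    (add_nonneg h.1 h_nonneg)
  linarith

lemma half_norm_le_re_ωc_sq_mul {q : ℂ} (h : q ∈ quadrant) (hq : q.re ≤ ‖q‖ / 2) :
    ‖q‖ / 2 ≤ (ωc ^ 2 * q).re := by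
  have h_re : (ωc ^ 2 * q).re = (√3 * q.im - q.re) / 2 := by
    rw [ωc_sq, ωc_eq]
    simp [Complex.mul_re, Complex.mul_im]
    ring
  have h_sq : (√3 * q.im) ^ 2 = 3 * q.im ^ 2 := by
    rw [mul_pow, Real.sq_sqrt (by norm_num)]
  have h_norm : q.re + ‖q‖ ≤ √3 * q.im := le_of_sq_le_sq
    (by nlinarith [sq_norm_eq_re_sq_add_im_sq q, mul_nonneg h.1 (sub_nonneg.2 hq),
      mul_nonneg (norm_nonneg q) (sub_nonneg.2 hq)])
    (mul_nonneg (Real.sqrt_nonneg 3) h.2)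
  linarith

/-! ### Channel estimates -/

/-- The constant of the error terms in `ChannelBounds`. -/
noncomputable def channelConst (κ η : ℝ) : ℝ := 16 * η + 2 * η * κ + 80 * κ + 8 / 3 * κ ^ 3

/-- The multiple of `f / ‖q‖ ^ 2` that `q.re` has to exceed for the tunnelling factor
`exp (-2 * κ * q.re)` to be separated from `1`. -/
noncomputable def gapConst (κ η : ℝ) : ℝ :=
  (4 * channelConst κ η + 2 * channelConst κ η * (1 + 2 * η) + 1) * (1 + 2 * κ) * (1 + 2 * η) /
    (2 * κ * η)

/-- The size of the spectral scale beyond which the exponentials dominate the determinant. -/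
noncomputable def scaleConst (η : ℝ) : ℝ :=
  18 * (2 * (2 * η + 2) ^ 2 + 3) + 24 * (η + 1) / η ^ 2

/-- The large parameter `f⁻¹ + |z|` of the resonance problem at `z = -q ^ 2`. -/
noncomputable def spectralScale (f : ℝ) (q : ℂ) : ℝ := f⁻¹ + ‖q‖ ^ 2

/-- The smallness of the field `f` relative to the size of the spectral parameter `-q ^ 2`, whose
relative error scale is `f / ‖q‖ ^ 2`. -/
structure SmallField (κ η f : ℝ) (q : ℂ) : Prop where
  κ_pos : 0 < κ
  η_pos : 0 < η
  field_pos : 0 < f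
  field_le_norm : f ≤ ‖q‖
  field_le_sq : f ≤ ‖q‖ ^ 2
  shift_le_sq : 20 * (κ * f) ≤ ‖q‖ ^ 2
  field_le_cube : 1000 * f ≤ ‖q‖ ^ 3
  const_le_one : channelConst κ η * (f / ‖q‖ ^ 2) ≤ 1
  const_le_norm : channelConst κ η * (f / ‖q‖ ^ 2) ≤ κ * ‖q‖
  const_mul_le_norm : channelConst κ η * (1 + ‖q‖) * (f / ‖q‖ ^ 2) ≤ η * ‖q‖
  gap_le_one : gapConst κ η * (f / ‖q‖ ^ 2) ≤ 1
  gap_le_norm : gapConst κ η * (f / ‖q‖ ^ 2) ≤ ‖q‖ / 2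
  scaleConst_lt : scaleConst η < f⁻¹
  κ_le_log : 6 * κ ≤ Real.log f⁻¹
  gap_le_log : gapConst κ η ≤ Real.log f⁻¹

lemma channelConst_pos {κ η : ℝ} (hκ : 0 < κ) (hη : 0 < η) : 0 < channelConst κ η := by
  unfold channelConst
  positivity

lemma gapConst_pos {κ η : ℝ} (hκ : 0 < κ) (hη : 0 < η) : 0 < gapConst κ η := by
  have h_const := channelConst_pos hκ hη
  unfold gapConst
  positivity

namespace SmallField

variable {κ η f : ℝ} {q : ℂ}

lemma norm_pos (hS : SmallField κ η f q) : 0 < ‖q‖ := hS.field_pos.trans_le hS.field_le_norm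

lemma shift_nonneg (hS : SmallField κ η f q) : 0 ≤ κ * f :=
  mul_nonneg hS.κ_pos.le hS.field_pos.le

lemma error_pos (hS : SmallField κ η f q) : 0 < f / ‖q‖ ^ 2 :=
  div_pos hS.field_pos (pow_pos hS.norm_pos 2)

lemma inv_le_spectralScale : f⁻¹ ≤ spectralScale f q :=
  le_add_of_nonneg_right (sq_nonneg _)

lemma norm_sq_le_spectralScale (hS : SmallField κ η f q) : ‖q‖ ^ 2 ≤ spectralScale f q :=
  le_add_of_nonneg_left (inv_nonneg.2 hS.field_pos.le)

lemma one_le_field_mul_spectralScale (hS : SmallField κ η f q) : 1 ≤ f * spectralScale f q := by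
  rw [← div_le_iff₀' hS.field_pos, one_div]
  exact inv_le_spectralScale

lemma scaleConst_lt_spectralScale (hS : SmallField κ η f q) : scaleConst η < spectralScale f q :=
  hS.scaleConst_lt.trans_le inv_le_spectralScale

lemma three_le_spectralScale (hS : SmallField κ η f q) : 3 ≤ spectralScale f q := by
  have h_frac : 0 ≤ 24 * (η + 1) / η ^ 2 := by
    have := hS.η_pos
    positivity
  have h_scale := hS.scaleConst_lt_spectralScale
  unfold scaleConst at h_scale
  linarith [sq_nonneg (2 * η + 2)]

lemma one_add_norm_le (hS : SmallField κ η f q) : 1 + ‖q‖ ≤ 2 * spectralScale f q := by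
  nlinarith [sq_nonneg (‖q‖ - 1), hS.norm_sq_le_spectralScale, hS.three_le_spectralScale]

lemma log_inv_le (hS : SmallField κ η f q) : Real.log f⁻¹ ≤ Real.log (spectralScale f q) :=
  Real.log_le_log (inv_pos.2 hS.field_pos) inv_le_spectralScale

lemma one_le_sq_mul_error (hS : SmallField κ η f q) :
    1 ≤ spectralScale f q ^ 2 * (f / ‖q‖ ^ 2) := by
  rw [← mul_div_assoc, one_le_div (pow_pos hS.norm_pos 2)]
  calc ‖q‖ ^ 2 ≤ spectralScale f q := hS.norm_sq_le_spectralScale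
    _ ≤ spectralScale f q * (f * spectralScale f q) :=
      le_mul_of_one_le_right (by linarith [hS.three_le_spectralScale])
        hS.one_le_field_mul_spectralScale
    _ = spectralScale f q ^ 2 * f := by ring

lemma div_norm_le (hS : SmallField κ η f q) : κ * f / ‖q‖ ≤ ‖q‖ / 20 := by
  rw [div_le_iff₀ hS.norm_pos]
  linarith [hS.shift_le_sq]

lemma four_le_mul_norm_div (hS : SmallField κ η f q) {F : ℝ} (hF : 0 < F) (hFf : F ^ 3 = f) :
    4 ≤ 2 / 5 * ‖q‖ / F := by
  have h_ten : 10 * F ≤ ‖q‖ := le_of_pow_le_pow_left₀ three_ne_zero hS.norm_pos.le (by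
    rw [mul_pow, hFf]
    linarith [hS.field_le_cube])
  rw [le_div_iff₀ hF]
  linarith

end SmallField

lemma mem_airyCone_of_near {m q w : ℂ} {F : ℝ} (hF : 0 < F) (hm : ‖m‖ = 1) (hq : 0 < ‖q‖)
    (hre : ‖q‖ / 2 ≤ (m * q).re) (hw : ‖w - q‖ ≤ ‖q‖ / 20) :
    m * (w / F) ∈ airyCone (2 / 5 * ‖q‖ / F) := by
  have h_re : ‖q‖ * (9 / 20) ≤ (m * w).re := by
    have h_sub := (abs_le.1 (Complex.abs_re_le_norm (m * (w - q)))).1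
    rw [norm_mul, hm, one_mul, mul_sub, Complex.sub_re] at h_sub
    linarith
  have h_norm : ‖w‖ ≤ ‖q‖ * (21 / 20) := by linarith [norm_le_norm_add_norm_sub' w q]
  refine ⟨?_, ?_⟩
  · rw [← mul_div_assoc, Complex.div_ofReal_re]
    gcongr
    linarith
  · rw [norm_mul, hm, one_mul, norm_div, Complex.norm_of_nonneg hF.le, ← mul_div_assoc,
      Complex.div_ofReal_re, ← mul_div_assoc]
    gcongr
    linarith

lemma div_mem_airyChannel {m q w : ℂ} {F : ℝ} (hF : 0 < F) (hm : m ^ 3 = 1) (hq : q ∈ quadrant)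
    (hq0 : 0 < ‖q‖) (hre : ‖q‖ / 2 ≤ (m * q).re) (hw : ‖w - q‖ ≤ ‖q‖ / 20) :
    w / F ∈ airyChannel m (2 / 5 * ‖q‖ / F) :=
  ⟨mem_airyCone_of_near hF (norm_eq_one_of_cube_eq_one hm) hq0 hre hw,
    mem_airyCone_of_near hF (by rw [norm_neg, norm_ωc]) hq0 (half_norm_le_re_neg_ωc_mul hq) hw⟩

/-- The bounds on the exponentials `Ep`, `Em` and on the inverse couplings `ap`, `am` through which
the factorised determinant is estimated. -/
structure ChannelBounds (κ η f : ℝ) (q qp qm Ep Em ap am : ℂ) : Prop where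
  Em_ne : Em ≠ 0
  ap_sub : ‖ap - 2 * η * q‖ ≤ channelConst κ η * (1 + ‖q‖) * (f / ‖q‖ ^ 2)
  am_sub : ‖am - 2 * η * q‖ ≤ channelConst κ η * (1 + ‖q‖) * (f / ‖q‖ ^ 2)
  le_Ep : Real.exp (-(4 / 3 * (qp ^ 3).re / f)) / 3 ≤ ‖Ep‖
  Em_le : ‖Em‖ ≤ 3 * Real.exp (-(4 / 3 * (qm ^ 3).re / f))
  ratio_le : ‖Ep / Em‖ ≤ Real.exp (-(2 * κ * q.re) + channelConst κ η * (f / ‖q‖ ^ 2))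

namespace SmallField

variable {κ η f F : ℝ} {q qp qm m w : ℂ}

lemma norm_mul_channelCorr_le (hS : SmallField κ η f q) (hF : 0 < F) (hFf : F ^ 3 = f)
    (hm : m ^ 3 = 1) (hw : ‖w - q‖ ≤ κ * f / ‖q‖) (hc : w / F ∈ airyChannel m 4) :
    ‖(η : ℂ) * F * channelCorr m (w / F)‖ ≤ 16 * η * (f / ‖q‖ ^ 2) := by
  have hq := hS.norm_pos
  have hη := hS.η_pos
  have hf := hS.field_pos
  have h_norm : ‖q‖ * (19 / 20) ≤ ‖w‖ := by
    linarith [norm_le_norm_add_norm_sub w q, hw.trans hS.div_norm_le]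
  have h_sq : ‖q‖ ^ 2 / 2 ≤ ‖w‖ ^ 2 := by
    nlinarith [pow_le_pow_left₀ (by positivity) h_norm 2, sq_nonneg ‖q‖]
  have hw0 : 0 < ‖w‖ := by linarith
  calc ‖(η : ℂ) * F * channelCorr m (w / F)‖ = η * F * ‖channelCorr m (w / F)‖ := by
        rw [norm_mul, norm_mul, Complex.norm_of_nonneg hη.le, Complex.norm_of_nonneg hF.le]
    _ ≤ η * F * (8 / ‖w / (F : ℂ)‖ ^ 2) := by
        gcongr
        exact norm_channelCorr_le hm hc
    _ = 8 * η * f / ‖w‖ ^ 2 := by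
        rw [norm_div, Complex.norm_of_nonneg hF.le, ← hFf]
        field_simp
    _ ≤ 8 * η * f / (‖q‖ ^ 2 / 2) := by gcongr
    _ = 16 * η * (f / ‖q‖ ^ 2) := by
        field_simp
        norm_num

lemma norm_invCoupling_sub_le (hS : SmallField κ η f q) (hF : 0 < F) (hFf : F ^ 3 = f)
    (hm : m ^ 3 = 1) (hw : ‖w - q‖ ≤ κ * f / ‖q‖) (hc : w / F ∈ airyChannel m 4) :
    ‖invCoupling η F m (w / F) - 2 * η * q‖
      ≤ channelConst κ η * (1 + ‖q‖) * (f / ‖q‖ ^ 2) := by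
  have hκ := hS.κ_pos
  have hη := hS.η_pos
  have hq := hS.norm_pos
  have h_split : invCoupling η F m (w / F) - 2 * η * q
      = η * F * channelCorr m (w / F) + ((2 * η : ℝ) : ℂ) * (w - q) := by
    have hF' : (F : ℂ) ≠ 0 := by exact_mod_cast hF.ne'
    rw [invCoupling]
    push_cast
    field_simp
    ring
  have h_const : 16 * η + 2 * η * κ * ‖q‖ ≤ channelConst κ η * (1 + ‖q‖) := by
    have h_rest : 0 ≤ (80 * κ + 8 / 3 * κ ^ 3) * (1 + ‖q‖) + 16 * η * ‖q‖ + 2 * η * κ := by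
      positivity
    unfold channelConst
    linarith
  calc ‖invCoupling η F m (w / F) - 2 * η * q‖
      ≤ ‖(η : ℂ) * F * channelCorr m (w / F)‖ + ‖((2 * η : ℝ) : ℂ) * (w - q)‖ := by
        rw [h_split]
        exact norm_add_le _ _
    _ ≤ 16 * η * (f / ‖q‖ ^ 2) + 2 * η * (κ * f / ‖q‖) := by
        gcongr
        · exact hS.norm_mul_channelCorr_le hF hFf hm hw hc
        · rw [norm_mul, Complex.norm_of_nonneg (by positivity)]
          gcongr
    _ = (16 * η + 2 * η * κ * ‖q‖) * (f / ‖q‖ ^ 2) := by field_simp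
    _ ≤ channelConst κ η * (1 + ‖q‖) * (f / ‖q‖ ^ 2) :=
        mul_le_mul_of_nonneg_right h_const hS.error_pos.le

lemma re_div_cube (hFf : F ^ 3 = f) : ((w / F) ^ 3).re = (w ^ 3).re / f := by
  rw [div_pow, ← Complex.ofReal_pow, hFf, Complex.div_ofReal_re]

lemma tunnelling_exponent_le (hS : SmallField κ η f q) (hR : QuadrantRoots κ f q qp qm)
    (hF : 0 < F) (hFf : F ^ 3 = f) :
    -(4 / 3 * ((qp / F) ^ 3 - (qm / F) ^ 3).re) + 16 / (2 / 5 * ‖q‖ / F) * ‖qp / F - qm / F‖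
      ≤ -(2 * κ * q.re) + channelConst κ η * (f / ‖q‖ ^ 2) := by
  have hκ := hS.κ_pos
  have hη := hS.η_pos
  have hf := hS.field_pos
  have hq := hS.norm_pos
  have h_cube : (2 * κ * f / ‖q‖) ^ 3 / 3 ≤ 8 / 3 * κ ^ 3 * (f / ‖q‖ ^ 2) * f :=
    calc (2 * κ * f / ‖q‖) ^ 3 / 3 = 8 / 3 * κ ^ 3 * (f / ‖q‖ ^ 2) * f * (f / ‖q‖) := by
          field_simp
          norm_num
      _ ≤ 8 / 3 * κ ^ 3 * (f / ‖q‖ ^ 2) * f :=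
          mul_le_of_le_one_right (by positivity) ((div_le_one hq).2 hS.field_le_norm)
  have h_phase : 2 * κ * q.re - 8 / 3 * κ ^ 3 * (f / ‖q‖ ^ 2)
      ≤ 4 / 3 * ((qp / F) ^ 3 - (qm / F) ^ 3).re := by
    rw [Complex.sub_re, re_div_cube hFf, re_div_cube hFf, ← sub_div, ← Complex.sub_re,
      ← mul_div_assoc (4 / 3) (qp ^ 3 - qm ^ 3).re f, le_div_iff₀ hf]
    linarith [hR.re_cube_sub_ge hS.shift_nonneg hq]
  have h_variation : 16 / (2 / 5 * ‖q‖ / F) * ‖qp / F - qm / F‖ ≤ 80 * κ * (f / ‖q‖ ^ 2) :=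
    calc 16 / (2 / 5 * ‖q‖ / F) * ‖qp / F - qm / F‖ = 40 / ‖q‖ * ‖qp - qm‖ := by
          rw [← sub_div, norm_div, Complex.norm_of_nonneg hF.le]
          field_simp
          ring
      _ ≤ 40 / ‖q‖ * (2 * κ * f / ‖q‖) := by
          gcongr
          exact hR.norm_p_sub_m_le hS.shift_nonneg hq
      _ = 80 * κ * (f / ‖q‖ ^ 2) := by
          field_simp
          norm_num
  have h_const : 0 ≤ (16 * η + 2 * η * κ) * (f / ‖q‖ ^ 2) := by positivity
  unfold channelConst
  linarith

lemma channelBounds (hS : SmallField κ η f q) (hR : QuadrantRoots κ f q qp qm) (hF : 0 < F)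
    (hFf : F ^ 3 = f) {n : ℂ} (hn : ‖n‖ = 1) (hm : m ^ 3 = 1) (hmω : m ^ 2 ≠ ωc ^ 2)
    (hp : qp / F ∈ airyChannel m (2 / 5 * ‖q‖ / F))
    (hc : qm / F ∈ airyChannel m (2 / 5 * ‖q‖ / F)) :
    ChannelBounds κ η f q qp qm (n * airyRatio m (qp / F)) (n * airyRatio m (qm / F))
      (invCoupling η F m (qp / F)) (invCoupling η F m (qm / F)) := by
  have h_four := hS.four_le_mul_norm_div hF hFf
  have hp4 := airyChannel_anti h_four hp
  have hc4 := airyChannel_anti h_four hc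
  have hn0 : n ≠ 0 := norm_pos_iff.1 (by simp only [hn, zero_lt_one])
  have h_mul (c : ℂ) : ‖n * c‖ = ‖c‖ := by rw [norm_mul, hn, one_mul]
  have h_ne := airyRatio_ne_zero hm hmω hc4
  refine ⟨mul_ne_zero hn0 h_ne,
    hS.norm_invCoupling_sub_le hF hFf hm (hR.norm_p_sub_le hS.shift_nonneg hS.norm_pos) hp4,
    hS.norm_invCoupling_sub_le hF hFf hm (hR.norm_m_sub_le hS.shift_nonneg hS.norm_pos) hc4,
    ?_, ?_, ?_⟩
  · simpa only [h_mul, re_div_cube hFf, mul_div_assoc] using (norm_airyRatio_mem_Icc hm hmω hp4).1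
  · simpa only [h_mul, re_div_cube hFf, mul_div_assoc] using (norm_airyRatio_mem_Icc hm hmω hc4).2
  · rw [mul_div_mul_left _ _ hn0, norm_div, div_le_iff₀' (norm_pos_iff.2 h_ne)]
    exact (norm_airyRatio_le_mul_exp h_four hm hmω hp hc).trans (mul_le_mul_of_nonneg_left
      (Real.exp_le_exp.2 (hS.tunnelling_exponent_le hR hF hFf)) (norm_nonneg _))

end SmallField

lemma rpow_third_cube {f : ℝ} (hf : 0 < f) : (f ^ ((1 : ℝ) / 3)) ^ 3 = f := by
  rw [← Real.rpow_natCast, ← Real.rpow_mul hf.le]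
  norm_num

lemma div_rpow_third_sq {f : ℝ} (hf : 0 < f) {w ζ : ℂ} (h : w ^ 2 = ζ) :
    (w / (f ^ ((1 : ℝ) / 3) : ℝ)) ^ 2 = ζ * ((f ^ (-(2 : ℝ) / 3) : ℝ) : ℂ) := by
  rw [rpow_neg_two_thirds hf, div_pow, h]
  ring

namespace QuadrantRoots

variable {κ f : ℝ} {q qp qm z : ℂ}

lemma p_sq_eq (hR : QuadrantRoots κ f q qp qm) (hz : q ^ 2 = -z) : qp ^ 2 = -(z - κ * f) := by
  rw [hR.p_sq, hz]
  push_cast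
  ring

lemma m_sq_eq (hR : QuadrantRoots κ f q qp qm) (hz : q ^ 2 = -z) : qm ^ 2 = -(z + κ * f) := by
  rw [hR.m_sq, hz]
  push_cast
  ring

end QuadrantRoots

namespace SmallField

variable {κ η f : ℝ} {q qp qm z m : ℂ}

lemma roots_mem_airyChannel (hS : SmallField κ η f q) (hR : QuadrantRoots κ f q qp qm) {F : ℝ}
    (hF : 0 < F) (hm : m ^ 3 = 1) (hre : ‖q‖ / 2 ≤ (m * q).re) :
    qp / F ∈ airyChannel m (2 / 5 * ‖q‖ / F) ∧ qm / F ∈ airyChannel m (2 / 5 * ‖q‖ / F) :=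
  ⟨div_mem_airyChannel hF hm hR.mem hS.norm_pos hre
      ((hR.norm_p_sub_le hS.shift_nonneg hS.norm_pos).trans hS.div_norm_le),
    div_mem_airyChannel hF hm hR.mem hS.norm_pos hre
      ((hR.norm_m_sub_le hS.shift_nonneg hS.norm_pos).trans hS.div_norm_le)⟩

lemma exists_channelBounds_direct (hS : SmallField κ η f q) (hR : QuadrantRoots κ f q qp qm)
    (hz : q ^ 2 = -z) (hre : ‖q‖ / 2 ≤ q.re) :
    ∃ Ep Em ap am, ChannelBounds κ η f q qp qm Ep Em ap am ∧ Df κ η f z * (ap * am)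
      = (1 + ap) * (1 + am) - Ep / Em + Em * (ap + 1) + Ep * (am - 1) := by
  have hf := hS.field_pos
  have hF : 0 < f ^ ((1 : ℝ) / 3) := Real.rpow_pos_of_pos hf _
  have h_four := hS.four_le_mul_norm_div hF (rpow_third_cube hf)
  obtain ⟨hp, hc⟩ := hS.roots_mem_airyChannel hR hF (one_pow 3) (by rwa [one_mul])
  exact ⟨_, _, _, _,
    hS.channelBounds hR hF (rpow_third_cube hf) norm_ωc (one_pow 3) one_sq_ne_ωc_sq hp hc,
    Df_mul_eq_direct hS.η_pos.ne' hf (div_rpow_third_sq hf (hR.p_sq_eq hz))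
      (div_rpow_third_sq hf (hR.m_sq_eq hz)) (airyChannel_anti h_four hp)
      (airyChannel_anti h_four hc)⟩

lemma exists_channelBounds_rotated (hS : SmallField κ η f q) (hR : QuadrantRoots κ f q qp qm)
    (hz : q ^ 2 = -z) (hre : q.re ≤ ‖q‖ / 2) :
    ∃ Ep Em ap am, ChannelBounds κ η f q qp qm Ep Em ap am ∧ Df κ η f z * (ap * am)
      = (ap - 1) * (am - 1) - Em / Ep - Em * (ap + 1) - Ep * (am - 1) := by
  have hf := hS.field_pos
  have hF : 0 < f ^ ((1 : ℝ) / 3) := Real.rpow_pos_of_pos hf _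
  have h_four := hS.four_le_mul_norm_div hF (rpow_third_cube hf)
  obtain ⟨hp, hc⟩ := hS.roots_mem_airyChannel hR hF ωc_sq_pow_three
    (half_norm_le_re_ωc_sq_mul hR.mem hre)
  exact ⟨_, _, _, _,
    hS.channelBounds hR hF (rpow_third_cube hf) (norm_eq_one_of_cube_eq_one ωc_sq_pow_three)
      ωc_sq_pow_three ωc_sq_sq_ne_ωc_sq hp hc,
    Df_mul_eq_rotated hS.η_pos.ne' hf (div_rpow_third_sq hf (hR.p_sq_eq hz))
      (div_rpow_third_sq hf (hR.m_sq_eq hz)) (airyChannel_anti h_four hp)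
      (airyChannel_anti h_four hc)⟩

end SmallField

/-! ### Nonvanishing of the factorised determinant -/

lemma div_le_one_sub_exp_neg {κ x y : ℝ} (hκ : 0 ≤ κ) (hy : 0 ≤ y) (hy1 : y ≤ 1) (hxy : y ≤ x) :
    2 * κ * y / (1 + 2 * κ) ≤ 1 - Real.exp (-(2 * κ * x)) := by
  have h_exp : Real.exp (-(2 * κ * x)) ≤ 1 / (1 + 2 * κ * y) := by
    rw [Real.exp_neg, ← one_div]
    refine one_div_le_one_div_of_le (by positivity) (le_trans ?_ (Real.add_one_le_exp _))
    linarith [mul_le_mul_of_nonneg_left hxy hκ]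
  calc 2 * κ * y / (1 + 2 * κ) ≤ 2 * κ * y / (1 + 2 * κ * y) := by
        exact div_le_div_of_nonneg_left (by positivity) (by positivity)
          (add_le_add_right (mul_le_of_le_one_right (by positivity) hy1) 1)
    _ = 1 - 1 / (1 + 2 * κ * y) := by
        field_simp
        ring
    _ ≤ 1 - Real.exp (-(2 * κ * x)) := by linarith

lemma norm_sub_one_le_norm_add_one {b : ℂ} (hb : 0 ≤ b.re) : ‖b - 1‖ ≤ ‖b + 1‖ := by
  refine le_of_sq_le_sq ?_ (norm_nonneg _)
  simp only [sq_norm_eq_re_sq_add_im_sq, Complex.add_re, Complex.add_im, Complex.sub_re,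
    Complex.sub_im, Complex.one_re, Complex.one_im]
  linarith

lemma one_add_sq_norm_le {b : ℂ} (hb : 0 ≤ b.re) : 1 + ‖b‖ ^ 2 ≤ ‖1 + b‖ ^ 2 := by
  simp only [sq_norm_eq_re_sq_add_im_sq, Complex.add_re, Complex.add_im, Complex.one_re,
    Complex.one_im]
  linarith

lemma one_add_mul_le_norm_mul {a b : ℂ} (ha : 0 ≤ a.re) (hb : 0 ≤ b.re) :
    1 + ‖a‖ * ‖b‖ ≤ ‖(1 + a) * (1 + b)‖ := by
  rw [norm_mul]
  refine le_of_sq_le_sq ?_ (by positivity)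
  calc (1 + ‖a‖ * ‖b‖) ^ 2 ≤ (1 + ‖a‖ ^ 2) * (1 + ‖b‖ ^ 2) := by
        linarith [sq_nonneg (‖a‖ - ‖b‖)]
    _ ≤ ‖1 + a‖ ^ 2 * ‖1 + b‖ ^ 2 :=
        mul_le_mul (one_add_sq_norm_le ha) (one_add_sq_norm_le hb) (by positivity) (by positivity)
    _ = (‖1 + a‖ * ‖1 + b‖) ^ 2 := (mul_pow _ _ 2).symm

lemma norm_mul_le_sq {a b : ℂ} {B : ℝ} (ha : ‖a‖ ≤ B) (hb : ‖b‖ ≤ B) : ‖a * b‖ ≤ B ^ 2 := by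
  rw [norm_mul, sq]
  exact mul_le_mul ha hb (norm_nonneg _) ((norm_nonneg _).trans ha)

lemma re_two_mul_mul (η : ℝ) (q : ℂ) : (2 * (η : ℂ) * q).re = 2 * η * q.re := by
  simp

lemma norm_two_mul_mul {η : ℝ} (hη : 0 ≤ η) (q : ℂ) : ‖2 * (η : ℂ) * q‖ = 2 * η * ‖q‖ := by
  rw [norm_mul, norm_mul, Complex.norm_of_nonneg hη, Complex.norm_two]

lemma norm_two_mul_mul_add_one_le {η : ℝ} (hη : 0 ≤ η) (q : ℂ) :
    ‖2 * (η : ℂ) * q + 1‖ ≤ (1 + 2 * η) * (1 + ‖q‖) := by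
  have h_tri := norm_add_le (2 * (η : ℂ) * q) 1
  rw [norm_two_mul_mul hη, norm_one] at h_tri
  linarith [norm_nonneg q]

lemma le_norm_two_mul_mul_add_one {η : ℝ} {q : ℂ} (hη : 0 ≤ η) (hre : 0 ≤ q.re) :
    η / (1 + 2 * η) * (1 + ‖q‖) ≤ ‖2 * (η : ℂ) * q + 1‖ := by
  have h_half : (1 + 2 * η * ‖q‖) / 2 ≤ ‖2 * (η : ℂ) * q + 1‖ := by
    refine le_of_sq_le_sq ?_ (norm_nonneg _)
    have h_sq := one_add_sq_norm_le (b := 2 * (η : ℂ) * q) (by rw [re_two_mul_mul]; positivity)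
    rw [add_comm (1 : ℂ), norm_two_mul_mul hη] at h_sq
    linarith [sq_nonneg (1 - 2 * η * ‖q‖), sq_nonneg (2 * η * ‖q‖)]
  refine le_trans ?_ h_half
  rw [div_mul_eq_mul_div, div_le_iff₀ (by positivity)]
  have h_norm : 0 ≤ η * ‖q‖ := by positivity
  linarith [mul_nonneg hη h_norm]

lemma exp_four_mul_log {X : ℝ} (hX : 0 < X) : Real.exp (4 * Real.log X) = X ^ 4 := by
  rw [mul_comm, Real.exp_mul, Real.exp_log hX]
  norm_cast

lemma SmallField.lt_mul_gap {κ η f E : ℝ} {q : ℂ} (hS : SmallField κ η f q)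
    (hE : spectralScale f q ^ 4 / 9 ≤ E) :
    (2 * (2 * η + 2) ^ 2 + 3) * (1 + ‖q‖) ^ 2 < E * ((1 + ‖q‖) * (f / ‖q‖ ^ 2)) := by
  have h_three := hS.three_le_spectralScale
  have h_error := hS.error_pos
  have h_const : 18 * (2 * (2 * η + 2) ^ 2 + 3) < spectralScale f q := by
    have hη := hS.η_pos
    have h_frac : 0 ≤ 24 * (η + 1) / η ^ 2 := by positivity
    exact (le_add_of_nonneg_right h_frac).trans_lt hS.scaleConst_lt_spectralScale
  have h_one := hS.one_add_norm_le
  have h_sq := hS.one_le_sq_mul_error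
  generalize spectralScale f q = X at *
  calc (2 * (2 * η + 2) ^ 2 + 3) * (1 + ‖q‖) ^ 2
      = (2 * (2 * η + 2) ^ 2 + 3) * (1 + ‖q‖) * (1 + ‖q‖) := by ring
    _ ≤ (2 * (2 * η + 2) ^ 2 + 3) * (2 * X) * (1 + ‖q‖) := by gcongr
    _ < X * X / 9 * (1 + ‖q‖) := by
        gcongr
        linarith [mul_lt_mul_of_pos_right h_const (by linarith : 0 < X)]
    _ ≤ X * X / 9 * (1 + ‖q‖) * (X ^ 2 * (f / ‖q‖ ^ 2)) :=
        le_mul_of_one_le_right (by positivity) h_sq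
    _ = X ^ 4 / 9 * ((1 + ‖q‖) * (f / ‖q‖ ^ 2)) := by ring
    _ ≤ E * ((1 + ‖q‖) * (f / ‖q‖ ^ 2)) := by gcongr

namespace ChannelBounds

variable {κ η f : ℝ} {q qp qm Ep Em ap am a : ℂ}

lemma mul_gap_eq (h : ChannelBounds κ η f q qp qm Ep Em ap am) :
    Em * (ap + 1 + Ep / Em * (am - 1)) = Em * (ap + 1) + Ep * (am - 1) := by
  linear_combination (am - 1) * div_mul_cancel₀ Ep h.Em_ne

lemma norm_coupling_le (hS : SmallField κ η f q)
    (ha : ‖a - 2 * η * q‖ ≤ channelConst κ η * (1 + ‖q‖) * (f / ‖q‖ ^ 2)) :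
    ‖a‖ ≤ (2 * η + 1) * (1 + ‖q‖) := by
  have h_tri := norm_le_norm_add_norm_sub' a (2 * η * q)
  rw [norm_two_mul_mul hS.η_pos.le] at h_tri
  linarith [mul_le_mul_of_nonneg_right hS.const_le_one (by positivity : 0 ≤ 1 + ‖q‖), hS.η_pos]

lemma re_coupling_nonneg (hS : SmallField κ η f q) (hre : ‖q‖ / 2 ≤ q.re)
    (ha : ‖a - 2 * η * q‖ ≤ channelConst κ η * (1 + ‖q‖) * (f / ‖q‖ ^ 2)) : 0 ≤ a.re := by
  have h_re := (abs_le.1 (Complex.abs_re_le_norm (a - 2 * η * q))).1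
  rw [Complex.sub_re, re_two_mul_mul] at h_re
  linarith [hS.const_mul_le_norm, mul_le_mul_of_nonneg_left hre hS.η_pos.le]

lemma mul_norm_le_norm_coupling (hS : SmallField κ η f q)
    (ha : ‖a - 2 * η * q‖ ≤ channelConst κ η * (1 + ‖q‖) * (f / ‖q‖ ^ 2)) :
    η * ‖q‖ ≤ ‖a‖ := by
  have h_tri := norm_le_norm_add_norm_sub a (2 * η * q)
  rw [norm_two_mul_mul hS.η_pos.le] at h_tri
  linarith [hS.const_mul_le_norm]

lemma norm_ratio_le_mul (h : ChannelBounds κ η f q qp qm Ep Em ap am) (hS : SmallField κ η f q) :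
    ‖Ep / Em‖
      ≤ Real.exp (-(2 * κ * q.re)) * (1 + 2 * (channelConst κ η * (f / ‖q‖ ^ 2))) := by
  have h_nonneg : 0 ≤ channelConst κ η * (f / ‖q‖ ^ 2) :=
    (mul_pos (channelConst_pos hS.κ_pos hS.η_pos) hS.error_pos).le
  refine h.ratio_le.trans ?_
  rw [Real.exp_add]
  gcongr
  have h_exp := Real.abs_exp_sub_one_le (x := channelConst κ η * (f / ‖q‖ ^ 2))
    (by rw [abs_of_nonneg h_nonneg]; exact hS.const_le_one)
  rw [abs_of_nonneg h_nonneg] at h_exp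
  linarith [(abs_le.1 h_exp).2]

lemma norm_ratio_le_three (h : ChannelBounds κ η f q qp qm Ep Em ap am)
    (hS : SmallField κ η f q) (hre : 0 ≤ q.re) : ‖Ep / Em‖ ≤ 3 := by
  refine h.ratio_le.trans ((Real.exp_le_exp.2 (?_ : _ ≤ (1 : ℝ))).trans ?_)
  · linarith [mul_nonneg hS.κ_pos.le hre, hS.const_le_one]
  · linarith [Real.exp_one_lt_d9]

lemma norm_ratio_le_one (h : ChannelBounds κ η f q qp qm Ep Em ap am)
    (hS : SmallField κ η f q) (hre : ‖q‖ / 2 ≤ q.re) : ‖Ep / Em‖ ≤ 1 := by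
  refine h.ratio_le.trans (Real.exp_le_one_iff.2 ?_)
  linarith [mul_le_mul_of_nonneg_left hre hS.κ_pos.le, hS.const_le_norm]

lemma norm_ratio_mul_le (h : ChannelBounds κ η f q qp qm Ep Em ap am)
    (hS : SmallField κ η f q) (hre : 0 ≤ q.re) :
    ‖Ep / Em‖ * ‖am - 1‖ ≤ Real.exp (-(2 * κ * q.re)) * ‖2 * (η : ℂ) * q + 1‖
      + (2 * channelConst κ η * (1 + 2 * η) + 3 * channelConst κ η) * (f / ‖q‖ ^ 2)
        * (1 + ‖q‖) := by
  have h_κ := hS.κ_pos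
  have h_error := hS.error_pos
  have h_const := channelConst_pos h_κ hS.η_pos
  have h_exp : Real.exp (-(2 * κ * q.re)) ≤ 1 :=
    Real.exp_le_one_iff.2 (neg_nonpos.2 (by positivity))
  have h_coupling : ‖am - 1‖
      ≤ ‖2 * (η : ℂ) * q + 1‖ + channelConst κ η * (1 + ‖q‖) * (f / ‖q‖ ^ 2) := by
    have h_tri := norm_add_le (am - 2 * η * q) (2 * η * q - 1)
    rw [sub_add_sub_cancel] at h_tri
    linarith [h.am_sub, norm_sub_one_le_norm_add_one (b := 2 * (η : ℂ) * q)
      (by rw [re_two_mul_mul]; exact mul_nonneg (by linarith [hS.η_pos]) hre)]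
  have h_upper := norm_two_mul_mul_add_one_le hS.η_pos.le q
  have h_ratio := h.norm_ratio_le_mul hS
  have h_three := h.norm_ratio_le_three hS hre
  set ε := f / ‖q‖ ^ 2
  set C := channelConst κ η
  set N := ‖2 * (η : ℂ) * q + 1‖
  set E := Real.exp (-(2 * κ * q.re))
  calc ‖Ep / Em‖ * ‖am - 1‖ ≤ ‖Ep / Em‖ * (N + C * (1 + ‖q‖) * ε) := by gcongr
    _ = ‖Ep / Em‖ * N + ‖Ep / Em‖ * (C * (1 + ‖q‖) * ε) := mul_add _ _ _
    _ ≤ E * (1 + 2 * (C * ε)) * N + 3 * (C * (1 + ‖q‖) * ε) := by gcongr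
    _ = E * N + E * (2 * C * ε * N) + 3 * (C * (1 + ‖q‖) * ε) := by ring
    _ ≤ E * N + 1 * (2 * C * ε * ((1 + 2 * η) * (1 + ‖q‖))) + 3 * (C * (1 + ‖q‖) * ε) := by
        gcongr
    _ = E * N + (2 * C * (1 + 2 * η) + 3 * C) * ε * (1 + ‖q‖) := by ring

lemma le_norm_gap (h : ChannelBounds κ η f q qp qm Ep Em ap am) (hS : SmallField κ η f q)
    (hgap : gapConst κ η * (f / ‖q‖ ^ 2) ≤ q.re) :
    (1 + ‖q‖) * (f / ‖q‖ ^ 2) ≤ ‖ap + 1 + Ep / Em * (am - 1)‖ := by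
  have hκ := hS.κ_pos
  have hη := hS.η_pos
  have h_error := hS.error_pos
  have h_gap_nonneg : 0 ≤ gapConst κ η * (f / ‖q‖ ^ 2) :=
    mul_nonneg (gapConst_pos hκ hη).le h_error.le
  have hre : 0 ≤ q.re := h_gap_nonneg.trans hgap
  have h_coupling : ‖2 * (η : ℂ) * q + 1‖ - channelConst κ η * (1 + ‖q‖) * (f / ‖q‖ ^ 2)
      ≤ ‖ap + 1‖ := by
    have h_tri := norm_le_norm_add_norm_sub (ap + 1) (2 * η * q + 1)
    rw [add_sub_add_right_eq_sub] at h_tri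
    linarith [h.ap_sub]
  have h_separation : (4 * channelConst κ η + 2 * channelConst κ η * (1 + 2 * η) + 1)
      * (f / ‖q‖ ^ 2) * (1 + ‖q‖)
        ≤ (1 - Real.exp (-(2 * κ * q.re))) * ‖2 * (η : ℂ) * q + 1‖ :=
    calc (4 * channelConst κ η + 2 * channelConst κ η * (1 + 2 * η) + 1) * (f / ‖q‖ ^ 2)
          * (1 + ‖q‖)
        = 2 * κ * (gapConst κ η * (f / ‖q‖ ^ 2)) / (1 + 2 * κ)
            * (η / (1 + 2 * η) * (1 + ‖q‖)) := by
          unfold gapConst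
          field_simp
      _ ≤ (1 - Real.exp (-(2 * κ * q.re))) * ‖2 * (η : ℂ) * q + 1‖ := by
          have h_exp := div_le_one_sub_exp_neg hκ.le h_gap_nonneg hS.gap_le_one hgap
          exact mul_le_mul h_exp (le_norm_two_mul_mul_add_one hη.le hre) (by positivity)
            (le_trans (by positivity) h_exp)
  have h_tri := norm_sub_le (ap + 1 + Ep / Em * (am - 1)) (Ep / Em * (am - 1))
  rw [add_sub_cancel_right, norm_mul] at h_tri
  linarith [h.norm_ratio_mul_le hS hre]

lemma le_norm_Em (h : ChannelBounds κ η f q qp qm Ep Em ap am) (hS : SmallField κ η f q)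
    (hre : 0 ≤ q.re) {Y : ℝ} (hY : Y / 3 ≤ ‖Ep‖) : Y / 9 ≤ ‖Em‖ := by
  have h_mul := mul_le_mul_of_nonneg_right (h.norm_ratio_le_three hS hre) (norm_nonneg Em)
  rw [← norm_mul, div_mul_cancel₀ _ h.Em_ne] at h_mul
  linarith

lemma direct_ne_zero (h : ChannelBounds κ η f q qp qm Ep Em ap am) (hS : SmallField κ η f q)
    (hgap : gapConst κ η * (f / ‖q‖ ^ 2) ≤ q.re) (hEp : spectralScale f q ^ 4 / 3 ≤ ‖Ep‖) :
    (1 + ap) * (1 + am) - Ep / Em + Em * (ap + 1) + Ep * (am - 1) ≠ 0 := by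
  intro h_zero
  have hre : 0 ≤ q.re :=
    (mul_pos (gapConst_pos hS.κ_pos hS.η_pos) hS.error_pos).le.trans hgap
  have h_add {a : ℂ} (ha : ‖a - 2 * η * q‖ ≤ channelConst κ η * (1 + ‖q‖) * (f / ‖q‖ ^ 2)) :
      ‖1 + a‖ ≤ (2 * η + 2) * (1 + ‖q‖) := by
    have h_tri := norm_add_le 1 a
    rw [norm_one] at h_tri
    linarith [norm_coupling_le hS ha, norm_nonneg q]
  have h_eq : Em * (ap + 1 + Ep / Em * (am - 1)) = Ep / Em - (1 + ap) * (1 + am) := by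
    linear_combination h_zero + h.mul_gap_eq
  refine (hS.lt_mul_gap (h.le_norm_Em hS hre hEp)).not_ge ?_
  calc ‖Em‖ * ((1 + ‖q‖) * (f / ‖q‖ ^ 2)) ≤ ‖Em‖ * ‖ap + 1 + Ep / Em * (am - 1)‖ := by
        gcongr
        exact h.le_norm_gap hS hgap
    _ = ‖Ep / Em - (1 + ap) * (1 + am)‖ := by rw [← norm_mul, h_eq]
    _ ≤ ‖Ep / Em‖ + ‖(1 + ap) * (1 + am)‖ := norm_sub_le _ _
    _ ≤ 3 + ((2 * η + 2) * (1 + ‖q‖)) ^ 2 :=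
        add_le_add (h.norm_ratio_le_three hS hre) (norm_mul_le_sq (h_add h.ap_sub) (h_add h.am_sub))
    _ ≤ (2 * (2 * η + 2) ^ 2 + 3) * (1 + ‖q‖) ^ 2 := by
        linarith [sq_nonneg ((2 * η + 2) * (1 + ‖q‖)), sq_nonneg ‖q‖, norm_nonneg q]

lemma norm_inv_ratio_le (hS : SmallField κ η f q) (hEp : spectralScale f q ^ 4 / 3 ≤ ‖Ep‖) :
    ‖Em / Ep‖ ≤ ‖Em‖ * ((1 + ‖q‖) * (f / ‖q‖ ^ 2)) / 2 := by
  have h_three := hS.three_le_spectralScale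
  have h_sq := hS.one_le_sq_mul_error
  have h_error := hS.error_pos
  generalize spectralScale f q = X at *
  have h_pos : 0 < ‖Ep‖ := lt_of_lt_of_le (by positivity) hEp
  have h_six : 6 ≤ X ^ 2 := by nlinarith
  rw [norm_div, mul_div_assoc]
  refine (div_le_iff₀ h_pos).2 ?_
  rw [mul_assoc]
  refine le_mul_of_one_le_right (norm_nonneg _) ?_
  calc 1 ≤ X ^ 2 * (f / ‖q‖ ^ 2) * X ^ 2 / 6 := by
        rw [le_div_iff₀ (by norm_num)]
        exact mul_le_mul h_sq h_six (by norm_num) (by positivity) |>.trans_eq' (by ring)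
    _ = 1 * (f / ‖q‖ ^ 2) / 2 * (X ^ 4 / 3) := by ring
    _ ≤ (1 + ‖q‖) * (f / ‖q‖ ^ 2) / 2 * ‖Ep‖ := by
        gcongr
        exact le_add_of_nonneg_right (norm_nonneg q)

lemma rotated_ne_zero (h : ChannelBounds κ η f q qp qm Ep Em ap am) (hS : SmallField κ η f q)
    (hgap : gapConst κ η * (f / ‖q‖ ^ 2) ≤ q.re) (hEp : spectralScale f q ^ 4 / 3 ≤ ‖Ep‖) :
    (ap - 1) * (am - 1) - Em / Ep - Em * (ap + 1) - Ep * (am - 1) ≠ 0 := by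
  intro h_zero
  have hre : 0 ≤ q.re :=
    (mul_pos (gapConst_pos hS.κ_pos hS.η_pos) hS.error_pos).le.trans hgap
  have h_sub {a : ℂ} (ha : ‖a - 2 * η * q‖ ≤ channelConst κ η * (1 + ‖q‖) * (f / ‖q‖ ^ 2)) :
      ‖a - 1‖ ≤ (2 * η + 2) * (1 + ‖q‖) := by
    have h_tri := norm_sub_le a 1
    rw [norm_one] at h_tri
    linarith [norm_coupling_le hS ha, norm_nonneg q]
  have h_eq : Em * (ap + 1 + Ep / Em * (am - 1)) = (ap - 1) * (am - 1) - Em / Ep := by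
    linear_combination h.mul_gap_eq - h_zero
  have h_upper : ‖Em‖ * ((1 + ‖q‖) * (f / ‖q‖ ^ 2))
      ≤ ((2 * η + 2) * (1 + ‖q‖)) ^ 2 + ‖Em‖ * ((1 + ‖q‖) * (f / ‖q‖ ^ 2)) / 2 := calc
    _ ≤ ‖Em‖ * ‖ap + 1 + Ep / Em * (am - 1)‖ := by
        gcongr
        exact h.le_norm_gap hS hgap
    _ = ‖(ap - 1) * (am - 1) - Em / Ep‖ := by rw [← norm_mul, h_eq]
    _ ≤ ‖(ap - 1) * (am - 1)‖ + ‖Em / Ep‖ := norm_sub_le _ _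
    _ ≤ ((2 * η + 2) * (1 + ‖q‖)) ^ 2 + ‖Em‖ * ((1 + ‖q‖) * (f / ‖q‖ ^ 2)) / 2 :=
        add_le_add (norm_mul_le_sq (h_sub h.ap_sub) (h_sub h.am_sub)) (norm_inv_ratio_le hS hEp)
  linarith [hS.lt_mul_gap (h.le_norm_Em hS hre hEp), sq_nonneg (1 + ‖q‖)]

lemma norm_gap_le (h : ChannelBounds κ η f q qp qm Ep Em ap am) (hS : SmallField κ η f q)
    (hre : ‖q‖ / 2 ≤ q.re) :
    ‖ap + 1 + Ep / Em * (am - 1)‖ ≤ 4 * (η + 1) * (1 + ‖q‖) :=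
  calc ‖ap + 1 + Ep / Em * (am - 1)‖ ≤ ‖ap + 1‖ + ‖Ep / Em * (am - 1)‖ := norm_add_le _ _
    _ = ‖ap + 1‖ + ‖Ep / Em‖ * ‖am - 1‖ := by rw [norm_mul]
    _ ≤ (‖ap‖ + ‖(1 : ℂ)‖) + 1 * (‖am‖ + ‖(1 : ℂ)‖) := by
        gcongr
        · exact norm_add_le _ _
        · exact h.norm_ratio_le_one hS hre
        · exact norm_sub_le _ _
    _ ≤ 4 * (η + 1) * (1 + ‖q‖) := by
        rw [norm_one]
        linarith [norm_coupling_le hS h.ap_sub, norm_coupling_le hS h.am_sub, norm_nonneg q]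

lemma decay_ne_zero (h : ChannelBounds κ η f q qp qm Ep Em ap am) (hS : SmallField κ η f q)
    (hre : ‖q‖ / 2 ≤ q.re) (hEm : ‖Em‖ ≤ 3 / spectralScale f q ^ 4) :
    (1 + ap) * (1 + am) - Ep / Em + Em * (ap + 1) + Ep * (am - 1) ≠ 0 := by
  intro h_zero
  have hη := hS.η_pos
  have h_three := hS.three_le_spectralScale
  have h_eq : (1 + ap) * (1 + am) = Ep / Em - Em * (ap + 1 + Ep / Em * (am - 1)) := by
    linear_combination h_zero + h.mul_gap_eq
  have h_prod : ‖ap‖ * ‖am‖ ≤ ‖Em‖ * (4 * (η + 1) * (1 + ‖q‖)) := by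
    have h_lower := one_add_mul_le_norm_mul (re_coupling_nonneg hS hre h.ap_sub)
      (re_coupling_nonneg hS hre h.am_sub)
    have h_tri := norm_sub_le (Ep / Em) (Em * (ap + 1 + Ep / Em * (am - 1)))
    rw [← h_eq, norm_mul Em] at h_tri
    linarith [mul_le_mul_of_nonneg_left (h.norm_gap_le hS hre) (norm_nonneg Em),
      h.norm_ratio_le_one hS hre]
  have h_scale : 24 * (η + 1) < η ^ 2 * spectralScale f q := by
    rw [← div_lt_iff₀' (by positivity)]
    exact (le_add_of_nonneg_left (by positivity)).trans_lt hS.scaleConst_lt_spectralScale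
  have h_field : 1 ≤ ‖q‖ ^ 2 * spectralScale f q :=
    hS.one_le_field_mul_spectralScale.trans (by gcongr; exact hS.field_le_sq)
  have h_one := hS.one_add_norm_le
  generalize spectralScale f q = X at *
  have h_upper : η ^ 2 ≤ 24 * (η + 1) / X ^ 2 :=
    calc η ^ 2 ≤ η ^ 2 * (‖q‖ ^ 2 * X) := le_mul_of_one_le_right (sq_nonneg η) h_field
      _ = (η * ‖q‖) * (η * ‖q‖) * X := by ring
      _ ≤ ‖ap‖ * ‖am‖ * X := by
          gcongr
          · exact mul_norm_le_norm_coupling hS h.ap_sub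
          · exact mul_norm_le_norm_coupling hS h.am_sub
      _ ≤ 3 / X ^ 4 * (4 * (η + 1) * (2 * X)) * X := by
          refine mul_le_mul_of_nonneg_right (h_prod.trans ?_) (by linarith)
          gcongr
      _ = 24 * (η + 1) / X ^ 2 := by
          field_simp
          norm_num
  rw [le_div_iff₀ (by positivity)] at h_upper
  nlinarith [sq_nonneg η]

lemma le_norm_Ep_of_log_le (h : ChannelBounds κ η f q qp qm Ep Em ap am)
    (hS : SmallField κ η f q)
    (hlog : 4 * Real.log (spectralScale f q) * f ≤ -(4 / 3 * (qp ^ 3).re)) :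
    spectralScale f q ^ 4 / 3 ≤ ‖Ep‖ := by
  refine le_trans ?_ h.le_Ep
  rw [← exp_four_mul_log (by linarith [hS.three_le_spectralScale])]
  gcongr
  rwa [← neg_div, le_div_iff₀ hS.field_pos]

lemma norm_Em_le_of_log_le (h : ChannelBounds κ η f q qp qm Ep Em ap am)
    (hS : SmallField κ η f q)
    (hlog : 4 * Real.log (spectralScale f q) * f ≤ 4 / 3 * (qm ^ 3).re) :
    ‖Em‖ ≤ 3 / spectralScale f q ^ 4 := by
  refine h.Em_le.trans ?_
  rw [Real.exp_neg, ← div_eq_mul_inv,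
    ← exp_four_mul_log (by linarith [hS.three_le_spectralScale] : 0 < spectralScale f q)]
  gcongr
  rwa [le_div_iff₀ hS.field_pos]

end ChannelBounds

namespace SmallField

variable {κ η f : ℝ} {q qp qm z : ℂ}

lemma log_spectralScale_nonneg (hS : SmallField κ η f q) : 0 ≤ Real.log (spectralScale f q) :=
  Real.log_nonneg (by linarith [hS.three_le_spectralScale])

lemma four_mul_log_mul_le (hS : SmallField κ η f q) :
    4 * Real.log (spectralScale f q) * f
      ≤ 5 * ((1 + ‖q‖) * f * Real.log (spectralScale f q)) - 4 / 3 * (4 * κ * f * ‖q‖) := by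
  have hκ := hS.κ_pos
  have h_norm : 0 ≤ f * ‖q‖ := mul_nonneg hS.field_pos.le (norm_nonneg q)
  have h_log := mul_le_mul_of_nonneg_right (hS.κ_le_log.trans hS.log_inv_le) h_norm
  linarith [mul_nonneg hS.log_spectralScale_nonneg hS.field_pos.le,
    mul_nonneg hS.log_spectralScale_nonneg h_norm, mul_nonneg hκ.le h_norm]

lemma Df_ne_zero_of_decay (hS : SmallField κ η f q) (hR : QuadrantRoots κ f q qp qm)
    (hz : q ^ 2 = -z) (hre : ‖q‖ / 2 ≤ q.re)
    (h : 5 * ((1 + ‖q‖) * f * Real.log (spectralScale f q)) ≤ 4 / 3 * (q ^ 3).re) :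
    Df κ η f z ≠ 0 := by
  obtain ⟨Ep, Em, ap, am, hB, h_eq⟩ := hS.exists_channelBounds_direct hR hz hre
  have h_near := hR.norm_m_sub_le hS.shift_nonneg hS.norm_pos
  have h_cube := abs_le.1 (abs_re_cube_sub_le hS.norm_pos h_near (h_near.trans hS.div_norm_le))
  refine left_ne_zero_of_mul (h_eq.trans_ne (hB.decay_ne_zero hS hre ?_))
  exact hB.norm_Em_le_of_log_le hS (by linarith [hS.four_mul_log_mul_le])

lemma Df_ne_zero_of_growth (hS : SmallField κ η f q) (hR : QuadrantRoots κ f q qp qm)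
    (hz : q ^ 2 = -z) (hre : ‖q‖ / 2 ≤ q.re)
    (h : 5 * ((1 + ‖q‖) * f * Real.log (spectralScale f q)) ≤ 4 / 3 * -(q ^ 3).re) :
    Df κ η f z ≠ 0 := by
  obtain ⟨Ep, Em, ap, am, hB, h_eq⟩ := hS.exists_channelBounds_direct hR hz hre
  have h_near := hR.norm_p_sub_le hS.shift_nonneg hS.norm_pos
  have h_cube := abs_le.1 (abs_re_cube_sub_le hS.norm_pos h_near (h_near.trans hS.div_norm_le))
  refine left_ne_zero_of_mul (h_eq.trans_ne (hB.direct_ne_zero hS (hS.gap_le_norm.trans hre) ?_))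
  exact hB.le_norm_Ep_of_log_le hS (by linarith [hS.four_mul_log_mul_le])

lemma Df_ne_zero_of_rotated (hS : SmallField κ η f q) (hR : QuadrantRoots κ f q qp qm)
    (hz : q ^ 2 = -z) (hre : q.re ≤ ‖q‖ / 2)
    (h : 6 * (f / ‖q‖ ^ 2 * Real.log (spectralScale f q)) ≤ q.re) :
    Df κ η f z ≠ 0 := by
  obtain ⟨Ep, Em, ap, am, hB, h_eq⟩ := hS.exists_channelBounds_rotated hR hz hre
  have h_error := hS.error_pos
  have h_log := hS.log_spectralScale_nonneg
  have h_gap : gapConst κ η * (f / ‖q‖ ^ 2) ≤ q.re := by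
    have h_le := mul_le_mul_of_nonneg_left (hS.gap_le_log.trans hS.log_inv_le) h_error.le
    linarith [mul_nonneg h_error.le h_log]
  refine left_ne_zero_of_mul (h_eq.trans_ne (hB.rotated_ne_zero hS h_gap ?_))
  have h_cancel : 6 * (f / ‖q‖ ^ 2 * Real.log (spectralScale f q)) * ‖q‖ ^ 2
      = 6 * f * Real.log (spectralScale f q) := by
    have hq := hS.norm_pos
    field_simp
  have h_mul := mul_le_mul_of_nonneg_right h (sq_nonneg ‖q‖)
  refine hB.le_norm_Ep_of_log_le hS ?_
  linarith [hR.re_p_cube_le hS.shift_nonneg hS.shift_le_sq hre, mul_nonneg hS.field_pos.le h_log]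

end SmallField

/-! ### Zeros away from the origin -/

lemma re_eq_mul_cos_half {q : ℂ} (hre : 0 ≤ q.re) :
    q.re = ‖q‖ * Real.cos (Complex.arg (q ^ 2) / 2) := by
  have h_cos : 0 ≤ Real.cos (Complex.arg (q ^ 2) / 2) :=
    Real.cos_nonneg_of_mem_Icc
      ⟨by linarith [Complex.neg_pi_lt_arg (q ^ 2)], by linarith [Complex.arg_le_pi (q ^ 2)]⟩
  refine (pow_left_inj₀ hre (by positivity) two_ne_zero).1 ?_
  have h_half := Real.cos_sq (Complex.arg (q ^ 2) / 2)
  rw [mul_div_cancel₀ _ two_ne_zero] at h_half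
  have h_re := two_mul_re_sq q
  rw [← Complex.norm_mul_cos_arg (q ^ 2), norm_pow] at h_re
  rw [mul_pow, h_half]
  linear_combination h_re / 2

lemma re_cube_eq_mul_cos {q : ℂ} (hre : 0 ≤ q.re) :
    (q ^ 3).re = ‖q‖ ^ 3 * Real.cos (3 * (Complex.arg (q ^ 2) / 2)) := by
  rw [re_cube, Real.cos_three_mul, re_eq_mul_cos_half hre]
  ring

lemma mul_abs_sub_le_abs_cos {θ : ℝ} (h0 : 0 ≤ θ) (h1 : θ ≤ 2 * π / 3) :
    3 / π * |θ - π / 3| ≤ |Real.cos (3 * (θ / 2))| := by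
  have h_sin := Real.mul_abs_le_abs_sin (x := 3 / 2 * (θ - π / 3))
    (abs_le.2 ⟨by linarith, by linarith⟩)
  rw [abs_mul, abs_of_pos (by norm_num : (0 : ℝ) < 3 / 2)] at h_sin
  calc 3 / π * |θ - π / 3| = 2 / π * (3 / 2 * |θ - π / 3|) := by ring
    _ ≤ |Real.sin (3 / 2 * (θ - π / 3))| := h_sin
    _ = |Real.cos (3 * (θ / 2))| := by
        rw [show 3 / 2 * (θ - π / 3) = 3 * (θ / 2) - π / 2 by ring, Real.sin_sub_pi_div_two,
          abs_neg]

lemma sub_div_pi_le_cos_half {θ : ℝ} (h0 : 0 ≤ θ) (h1 : θ ≤ π) :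
    (π - θ) / π ≤ Real.cos (θ / 2) :=
  calc (π - θ) / π = 1 - 2 / π * (θ / 2) := by field_simp
    _ ≤ Real.cos (θ / 2) := Real.one_sub_mul_le_cos (by linarith) (by linarith)

lemma half_norm_le_re_of_arg_le {q : ℂ} (hq : q ∈ quadrant) (h0 : 0 ≤ Complex.arg (q ^ 2))
    (h : Complex.arg (q ^ 2) ≤ 2 * π / 3) : ‖q‖ / 2 ≤ q.re := by
  rw [re_eq_mul_cos_half hq.1, div_eq_mul_one_div, ← Real.cos_pi_div_three]
  gcongr
  exact Real.cos_le_cos_of_nonneg_of_le_pi (by linarith) (by linarith [pi_pos]) (by linarith)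

lemma re_le_half_norm_of_le_arg {q : ℂ} (hq : q ∈ quadrant)
    (h : 2 * π / 3 ≤ Complex.arg (q ^ 2)) : q.re ≤ ‖q‖ / 2 := by
  rw [re_eq_mul_cos_half hq.1, div_eq_mul_one_div ‖q‖, ← Real.cos_pi_div_three]
  gcongr
  exact Real.cos_le_cos_of_nonneg_of_le_pi (by linarith [pi_pos])
    (by linarith [Complex.arg_le_pi (q ^ 2), pi_pos]) (by linarith)

lemma arg_sq_nonneg {q : ℂ} (hq : q ∈ quadrant) : 0 ≤ Complex.arg (q ^ 2) := by
  rw [Complex.arg_nonneg_iff, sq, Complex.mul_im]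
  exact add_nonneg (mul_nonneg hq.1 hq.2) (mul_nonneg hq.2 hq.1)

namespace SmallField

variable {κ η f M : ℝ} {q qp qm z : ℂ}

lemma Df_ne_zero_of_direct (hS : SmallField κ η f q) (hR : QuadrantRoots κ f q qp qm)
    (hz : q ^ 2 = -z) (hre : ‖q‖ / 2 ≤ q.re)
    (h : 5 * ((1 + ‖q‖) * f * Real.log (spectralScale f q)) ≤ 4 / 3 * |(q ^ 3).re|) :
    Df κ η f z ≠ 0 := by
  rcases abs_choice (q ^ 3).re with h_abs | h_abs
  · exact hS.Df_ne_zero_of_decay hR hz hre (h_abs ▸ h)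
  · exact hS.Df_ne_zero_of_growth hR hz hre (h_abs ▸ h)

lemma Df_ne_zero_of_arg_le (hS : SmallField κ η f q) (hR : QuadrantRoots κ f q qp qm)
    (hz : q ^ 2 = -z) (hM : 20 ≤ M) (harg : Complex.arg (q ^ 2) ≤ 2 * π / 3)
    (h : (1 + ‖q‖) / ‖q‖ ^ 3 * M * f * Real.log (spectralScale f q)
      ≤ 5 * |Complex.arg (q ^ 2) - π / 3|) : Df κ η f z ≠ 0 := by
  have h_arg := arg_sq_nonneg hR.mem
  have hq := hS.norm_pos
  have h_pi := Real.pi_lt_d2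
  have h_log := hS.log_spectralScale_nonneg
  have hf := hS.field_pos
  refine hS.Df_ne_zero_of_direct hR hz (half_norm_le_re_of_arg_le hR.mem h_arg harg) ?_
  calc 5 * ((1 + ‖q‖) * f * Real.log (spectralScale f q))
      ≤ 4 * M / (5 * π) * ((1 + ‖q‖) * f * Real.log (spectralScale f q)) := by
        gcongr
        rw [le_div_iff₀ (by positivity)]
        linarith
    _ = 4 / 3 * (‖q‖ ^ 3 * (3 / π
          * ((1 + ‖q‖) / ‖q‖ ^ 3 * M * f * Real.log (spectralScale f q) / 5))) := by
        field_simp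
    _ ≤ 4 / 3 * (‖q‖ ^ 3 * (3 / π * |Complex.arg (q ^ 2) - π / 3|)) := by
        gcongr
        linarith
    _ ≤ 4 / 3 * (‖q‖ ^ 3 * |Real.cos (3 * (Complex.arg (q ^ 2) / 2))|) := by
        gcongr
        exact mul_abs_sub_le_abs_cos h_arg harg
    _ = 4 / 3 * |(q ^ 3).re| := by
        rw [re_cube_eq_mul_cos hR.mem.1, abs_mul, abs_of_pos (pow_pos hq 3)]

lemma Df_ne_zero_of_le_arg (hS : SmallField κ η f q) (hR : QuadrantRoots κ f q qp qm)
    (hz : q ^ 2 = -z) (hM : 20 ≤ M) (harg : 2 * π / 3 ≤ Complex.arg (q ^ 2))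
    (h : M * f * Real.log (spectralScale f q) / ‖q‖ ^ 3 ≤ π - Complex.arg (q ^ 2)) :
    Df κ η f z ≠ 0 := by
  have hq := hS.norm_pos
  have h_pi := Real.pi_lt_d2
  have h_log := hS.log_spectralScale_nonneg
  have hf := hS.field_pos
  refine hS.Df_ne_zero_of_rotated hR hz (re_le_half_norm_of_le_arg hR.mem harg) ?_
  calc 6 * (f / ‖q‖ ^ 2 * Real.log (spectralScale f q))
      ≤ M / π * (f / ‖q‖ ^ 2 * Real.log (spectralScale f q)) := by
        gcongr
        rw [le_div_iff₀ pi_pos]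
        linarith
    _ = ‖q‖ * (M * f * Real.log (spectralScale f q) / ‖q‖ ^ 3 / π) := by field_simp
    _ ≤ ‖q‖ * ((π - Complex.arg (q ^ 2)) / π) := by gcongr
    _ ≤ ‖q‖ * Real.cos (Complex.arg (q ^ 2) / 2) := by
        gcongr
        exact sub_div_pi_le_cos_half (arg_sq_nonneg hR.mem) (Complex.arg_le_pi _)
    _ = q.re := (re_eq_mul_cos_half hR.mem.1).symm

end SmallField

lemma tendsto_rpow_nhdsGT_zero {t : ℝ} (ht : 0 < t) :
    Tendsto (fun f : ℝ => f ^ t) (𝓝[>] 0) (𝓝 0) := by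
  have h_cont := (Real.continuousAt_rpow_const 0 t (Or.inr ht.le)).tendsto
  rw [Real.zero_rpow ht.ne'] at h_cont
  exact h_cont.mono_left nhdsWithin_le_nhds

lemma eventually_mul_le_pow {n k : ℕ} (hk : k < n) (T : ℝ) :
    ∀ᶠ f in 𝓝[>] (0 : ℝ), ∀ r : ℝ, 0 ≤ r → f ≤ r ^ n → T * f ≤ r ^ k := by
  have hn : (0 : ℝ) < n := by exact_mod_cast (Nat.zero_le k).trans_lt hk
  have h_lt : (k : ℝ) / n < 1 := (div_lt_one hn).2 (by exact_mod_cast hk)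
  have h_lim := (tendsto_rpow_nhdsGT_zero (sub_pos.2 h_lt)).const_mul T
  rw [mul_zero] at h_lim
  filter_upwards [h_lim.eventually_le_const one_pos, self_mem_nhdsWithin] with f h_one hf r hr hfr
  replace hf : 0 < f := hf
  calc T * f = T * f ^ (1 - (k : ℝ) / n) * f ^ ((k : ℝ) / n) := by
        rw [mul_assoc, ← Real.rpow_add hf, sub_add_cancel, Real.rpow_one]
    _ ≤ 1 * (r ^ n) ^ ((k : ℝ) / n) := by gcongr
    _ = r ^ k := by
        rw [one_mul, ← Real.rpow_natCast, ← Real.rpow_mul hr, mul_div_cancel₀ _ hn.ne',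
          Real.rpow_natCast]

lemma eventually_mul_div_sq_le_pow {n k : ℕ} (hk : k + 2 < n) (T : ℝ) :
    ∀ᶠ f in 𝓝[>] (0 : ℝ), ∀ r : ℝ, 0 ≤ r → f ≤ r ^ n → T * (f / r ^ 2) ≤ r ^ k := by
  filter_upwards [eventually_mul_le_pow hk T, self_mem_nhdsWithin] with f h hf r hr hfr
  have h_pos : 0 < r := by
    refine hr.lt_of_ne' fun h_zero => (hfr.trans_lt' hf).ne' ?_
    rw [h_zero, zero_pow (by omega)]
  rw [← mul_div_assoc, div_le_iff₀ (by positivity), ← pow_add]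
  exact h r hr hfr

lemma eventually_smallField {κ η : ℝ} (hκ : 0 < κ) (hη : 0 < η) :
    ∀ᶠ f in 𝓝[>] (0 : ℝ), ∀ q : ℂ, f ≤ ‖q‖ ^ 4 → SmallField κ η f q := by
  have h_pow {k : ℕ} (hk : k < 4) (T : ℝ) :
      ∀ᶠ f in 𝓝[>] (0 : ℝ), ∀ q : ℂ, f ≤ ‖q‖ ^ 4 → T * f ≤ ‖q‖ ^ k :=
    (eventually_mul_le_pow hk T).mono fun f h q => h ‖q‖ (norm_nonneg q)
  have h_le_one (T : ℝ) :
      ∀ᶠ f in 𝓝[>] (0 : ℝ), ∀ q : ℂ, f ≤ ‖q‖ ^ 4 → T * (f / ‖q‖ ^ 2) ≤ 1 :=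
    (eventually_mul_div_sq_le_pow (n := 4) (k := 0) (by norm_num) T).mono fun f h q hfq => by
      simpa only [pow_zero] using h ‖q‖ (norm_nonneg q) hfq
  have h_le_norm (T : ℝ) :
      ∀ᶠ f in 𝓝[>] (0 : ℝ), ∀ q : ℂ, f ≤ ‖q‖ ^ 4 → T * (f / ‖q‖ ^ 2) ≤ ‖q‖ :=
    (eventually_mul_div_sq_le_pow (n := 4) (k := 1) (by norm_num) T).mono fun f h q hfq => by
      simpa only [pow_one] using h ‖q‖ (norm_nonneg q) hfq
  have h_inv : Tendsto (fun f : ℝ => f⁻¹) (𝓝[>] 0) atTop := tendsto_inv_nhdsGT_zero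
  have h_log := Real.tendsto_log_atTop.comp h_inv
  filter_upwards [self_mem_nhdsWithin, h_pow (k := 1) (by norm_num) 1,
    h_pow (k := 2) (by norm_num) 1, h_pow (k := 2) (by norm_num) (20 * κ),
    h_pow (k := 3) (by norm_num) 1000, h_le_one (channelConst κ η),
    h_le_norm (channelConst κ η / κ), h_le_one (2 * channelConst κ η / η),
    h_le_norm (2 * channelConst κ η / η), h_le_one (gapConst κ η), h_le_norm (2 * gapConst κ η),
    h_inv.eventually_gt_atTop (scaleConst η), h_log.eventually_ge_atTop (6 * κ),
    h_log.eventually_ge_atTop (gapConst κ η)]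
    with f hf h_norm h_sq h_shift h_cube h_const h_const_κ h_const_η h_const_η' h_gap h_gap'
      h_scale h_log_κ h_log_gap q hfq
  refine ⟨hκ, hη, hf, by simpa using h_norm q hfq, by simpa using h_sq q hfq,
    by simpa only [mul_assoc] using h_shift q hfq, h_cube q hfq, h_const q hfq, ?_, ?_,
    h_gap q hfq, by linarith [h_gap' q hfq], h_scale, h_log_κ, h_log_gap⟩
  · have h_ratio := h_const_κ q hfq
    rwa [div_mul_eq_mul_div, div_le_iff₀' hκ] at h_ratio
  · have h_one := h_const_η q hfq
    have h_norm_ratio := h_const_η' q hfq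
    rw [div_mul_eq_mul_div, div_le_iff₀' hη] at h_one h_norm_ratio
    linarith [mul_le_mul_of_nonneg_left h_one (norm_nonneg q)]

lemma abs_arg_add_le {z : ℂ} (hz : z.im ≤ 0) :
    |Complex.arg z + 2 * π / 3| ≤ 5 * |Complex.arg (-z) - π / 3| := by
  have h_pi := pi_pos
  rcases hz.lt_or_eq with him | him
  · rw [Complex.arg_neg_eq_arg_add_pi_of_im_neg him,
      show Complex.arg z + π - π / 3 = Complex.arg z + 2 * π / 3 by ring]
    linarith [abs_nonneg (Complex.arg z + 2 * π / 3)]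
  · have h_upper : |Complex.arg z + 2 * π / 3| ≤ 5 * π / 3 := by
      rw [abs_of_nonneg (by linarith [Complex.arg_nonneg_iff.2 him.ge])]
      linarith [Complex.arg_le_pi z]
    have h_lower : π / 3 ≤ |Complex.arg (-z) - π / 3| := by
      rw [le_abs]
      rcases lt_or_ge (-z).re 0 with hre | hre
      · rw [Complex.arg_eq_pi_iff.2 ⟨hre, by simpa using him⟩]
        exact .inl (by linarith)
      · rw [Complex.arg_eq_zero_iff.2 ⟨hre, by simpa using him⟩]
        exact .inr (by linarith)
    linarith

lemma abs_arg_le {z : ℂ} (hz : z.im ≤ 0) : |Complex.arg z| ≤ π - Complex.arg (-z) := by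
  rcases hz.lt_or_eq with him | him
  · rw [Complex.arg_neg_eq_arg_add_pi_of_im_neg him, abs_of_neg (Complex.arg_neg_iff.2 him)]
    linarith
  rcases lt_or_ge z.re 0 with hre | hre
  · have h_arg_neg : Complex.arg (-z) = 0 :=
      Complex.arg_eq_zero_iff.2 ⟨by simpa using hre.le, by simpa using him⟩
    rw [h_arg_neg, sub_zero]
    exact Complex.abs_arg_le_pi z
  · rw [Complex.arg_eq_zero_iff.2 ⟨hre, him⟩, abs_zero]
    linarith [Complex.arg_le_pi (-z)]

lemma rpow_neg_half_sq {r : ℝ} (hr : 0 < r) : (r ^ 2) ^ (-(1 : ℝ) / 2) = r⁻¹ := by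
  rw [← Real.rpow_natCast, ← Real.rpow_mul hr.le, ← Real.rpow_neg_one]
  norm_num

lemma rpow_neg_three_halves_sq {r : ℝ} (hr : 0 < r) :
    (r ^ 2) ^ (-(3 : ℝ) / 2) = (r ^ 3)⁻¹ := by
  rw [← Real.rpow_natCast, ← Real.rpow_mul hr.le, ← Real.rpow_natCast, ← Real.rpow_neg hr.le]
  norm_num

lemma eventually_zero_near_rays {κ η M : ℝ} (hκ : 0 < κ) (hη : 0 < η) (hM : 20 ≤ M) :
    ∀ᶠ f in 𝓝[>] (0 : ℝ), ∀ z : ℂ, z.im ≤ 0 → f ≤ ‖z‖ ^ 2 → Df κ η f z = 0 →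
      |Complex.arg z + 2 * π / 3| <
          (‖z‖)⁻¹ * (1 + ‖z‖ ^ (-(1 : ℝ) / 2)) * M * f * Real.log (f⁻¹ + ‖z‖) ∨
        |Complex.arg z| < ‖z‖ ^ (-(3 : ℝ) / 2) * M * f * Real.log (f⁻¹ + ‖z‖) := by
  filter_upwards [eventually_smallField hκ hη] with f h_small z hz hfz
  obtain ⟨q, qp, qm, hqz, hR⟩ := exists_quadrantRoots κ f hz
  have h_norm : ‖z‖ = ‖q‖ ^ 2 := by rw [← norm_neg, ← hqz, norm_pow]
  have hS : SmallField κ η f q := h_small q (by rwa [h_norm, ← pow_mul] at hfz)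
  have hq := hS.norm_pos
  contrapose!
  rw [h_norm, rpow_neg_half_sq hq, rpow_neg_three_halves_sq hq]
  rintro ⟨h_two_thirds, h_zero⟩
  rcases le_total (Complex.arg (q ^ 2)) (2 * π / 3) with harg | harg
  · refine hS.Df_ne_zero_of_arg_le hR hqz hM harg ?_
    calc (1 + ‖q‖) / ‖q‖ ^ 3 * M * f * Real.log (spectralScale f q)
        = (‖q‖ ^ 2)⁻¹ * (1 + ‖q‖⁻¹) * M * f * Real.log (f⁻¹ + ‖q‖ ^ 2) := by
          rw [spectralScale]
          field_simp
          ring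
      _ ≤ 5 * |Complex.arg (q ^ 2) - π / 3| := by
          rw [hqz]
          exact h_two_thirds.trans (abs_arg_add_le hz)
  · refine hS.Df_ne_zero_of_le_arg hR hqz hM harg ?_
    calc M * f * Real.log (spectralScale f q) / ‖q‖ ^ 3
        = (‖q‖ ^ 3)⁻¹ * M * f * Real.log (f⁻¹ + ‖q‖ ^ 2) := by
          rw [spectralScale]
          field_simp
      _ ≤ π - Complex.arg (q ^ 2) := by
          rw [hqz]
          exact h_zero.trans (abs_arg_le hz)

/-! ### Zeros near the origin -/

lemma prod_nhds_nhdsNE_le {X Y : Type*} [TopologicalSpace X] [TopologicalSpace Y] (x : X) (y : Y) :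
    𝓝 x ×ˢ 𝓝[≠] y ≤ 𝓝 (x, y) :=
  nhds_prod_eq (x := x) (y := y) ▸ prod_mono_right _ nhdsWithin_le_nhds

lemma tendsto_symmetric_slope {𝕜 : Type*} [NontriviallyNormedField 𝕜]
    {g : 𝕜 → 𝕜} {g' : 𝕜} (hg : HasStrictDerivAt g g' 0) (m : 𝕜) :
    Tendsto (fun p : 𝕜 × 𝕜 => (g (-m * (p.1 - p.2)) - g (-m * (p.1 + p.2))) / p.2)
      (𝓝 0 ×ˢ 𝓝[≠] 0) (𝓝 (2 * m * g')) := by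
  have h_points : Tendsto (fun p : 𝕜 × 𝕜 => (-m * (p.1 - p.2), -m * (p.1 + p.2)))
      (𝓝 0 ×ˢ 𝓝[≠] 0) (𝓝 (0, 0)) := by
    refine Tendsto.mono_left ?_ (prod_nhds_nhdsNE_le 0 0)
    exact Continuous.tendsto' (by fun_prop) _ _ (by simp)
  have h_step : (fun p : 𝕜 × 𝕜 => -m * (p.1 - p.2) - -m * (p.1 + p.2)) =O[𝓝 0 ×ˢ 𝓝[≠] 0]
      fun p => p.2 := by
    refine (Asymptotics.isBigO_const_mul_self (2 * m) Prod.snd _).congr_left fun p => ?_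
    ring
  have h_lim := ((hg.isLittleO.comp_tendsto h_points).trans_isBigO h_step).tendsto_div_nhds_zero
  have h_ne : ∀ᶠ p : 𝕜 × 𝕜 in 𝓝 0 ×ˢ 𝓝[≠] 0, p.2 ≠ 0 :=
    tendsto_snd.eventually self_mem_nhdsWithin
  refine (zero_add (2 * m * g') ▸ h_lim.add_const (2 * m * g')).congr' ?_
  filter_upwards [h_ne] with p hp
  simp only [Function.comp_apply, ContinuousLinearMap.toSpanSingleton_apply, smul_eq_mul]
  field_simp
  ring

/-- The determinant `η W D_f(z)` in scale-free variables: `w` stands for `η W`, `ζ` for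
`z f ^ (-2 / 3)` and `h` for `κ f ^ (1 / 3)`. -/
noncomputable def scaledDet (w ζ h : ℂ) : ℂ :=
  w + (Ai (-ωc * (ζ - h)) * Ai (-(ζ - h)) + Ai (-ωc * (ζ + h)) * Ai (-(ζ + h)))
    + Ai (-ωc * (ζ + h)) * Ai (-(ζ - h))
      * ((Ai (-ωc * (ζ - h)) * Ai (-(ζ + h)) - Ai (-ωc * (ζ + h)) * Ai (-(ζ - h))) / w)

lemma mul_Df_eq_scaledDet {κ η f : ℝ} (hη : η ≠ 0) (hf : 0 < f) (z : ℂ) :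
    η * Wf f * Df κ η f z = scaledDet (η * Wf f) (z * ((f ^ (-(2 : ℝ) / 3) : ℝ) : ℂ))
      (κ * ((f ^ ((1 : ℝ) / 3) : ℝ) : ℂ)) := by
  have h_shift : (κ * f : ℂ) * ((f ^ (-(2 : ℝ) / 3) : ℝ) : ℂ)
      = κ * ((f ^ ((1 : ℝ) / 3) : ℝ) : ℂ) := by
    rw [mul_assoc, ← Complex.ofReal_mul, ← Real.rpow_one_add' hf.le (by norm_num)]
    norm_num
  have hW := mul_Wf_ne_zero hη hf
  rw [Df, ← mul_pow]
  simp only [alphaP, alphaM, betaP, betaM, scaledDet, mul_assoc (-ωc), neg_mul (z - κ * f),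
    neg_mul (z + κ * f), sub_mul z, add_mul z, h_shift]
  generalize (η : ℂ) * Wf f = w at hW
  field_simp

lemma tendsto_Ai_comp {u : ℂ × ℂ → ℂ} (hu : Continuous u) (h_zero : u (0, 0) = 0) :
    Tendsto (fun p => Ai (u p)) (𝓝 0 ×ˢ 𝓝[≠] 0) (𝓝 (Ai 0)) :=
  ((differentiable_Ai.continuous.comp hu).tendsto' _ _ (congrArg Ai h_zero)).mono_left
    (prod_nhds_nhdsNE_le 0 0)

lemma tendsto_Ai_cross_div :
    Tendsto (fun p : ℂ × ℂ => (Ai (-ωc * (p.1 - p.2)) * Ai (-(p.1 + p.2))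
        - Ai (-ωc * (p.1 + p.2)) * Ai (-(p.1 - p.2))) / p.2)
      (𝓝 0 ×ˢ 𝓝[≠] 0) (𝓝 (2 * (ωc - 1) * (Ai 0 * deriv Ai 0))) := by
  have h_deriv : HasStrictDerivAt Ai (deriv Ai 0) 0 :=
    (differentiable_Ai.analyticAt 0).hasStrictDerivAt
  have h_rotated := tendsto_symmetric_slope h_deriv ωc
  have h_direct := tendsto_symmetric_slope h_deriv 1
  have h_add (m : ℂ) := tendsto_Ai_comp (u := fun p => -m * (p.1 + p.2)) (by fun_prop) (by simp)
  have h_lim := (h_rotated.mul (h_add 1)).sub ((h_add ωc).mul h_direct)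
  simp only [neg_one_mul] at h_lim
  convert h_lim using 2
  · ring
  · ring

lemma tendsto_scaledDet (c : ℂ) :
    Tendsto (fun p : ℂ × ℂ => scaledDet (c * p.2) p.1 p.2) (𝓝 0 ×ˢ 𝓝[≠] 0)
      (𝓝 (Ai 0 ^ 2 * (2 + 2 * (ωc - 1) * (Ai 0 * deriv Ai 0) / c))) := by
  have h_add (m : ℂ) := tendsto_Ai_comp (u := fun p => -m * (p.1 + p.2)) (by fun_prop) (by simp)
  have h_sub (m : ℂ) := tendsto_Ai_comp (u := fun p => -m * (p.1 - p.2)) (by fun_prop) (by simp)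
  have h_zero : Tendsto (fun p : ℂ × ℂ => c * p.2) (𝓝 0 ×ˢ 𝓝[≠] 0) (𝓝 0) :=
    (Continuous.tendsto' (by fun_prop) _ _ (by simp)).mono_left (prod_nhds_nhdsNE_le 0 0)
  have h_lim := (h_zero.add (((h_sub ωc).mul (h_sub 1)).add ((h_add ωc).mul (h_add 1)))).add
    (((h_add ωc).mul (h_sub 1)).mul (tendsto_Ai_cross_div.div_const c))
  simp only [neg_one_mul] at h_lim
  convert h_lim using 2
  · rw [scaledDet, div_div, mul_comm c]
  · ring

lemma eventually_scaledDet_ne_zero {κ η : ℝ} (hκ : 0 < κ) (hη : 0 < η) :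
    ∀ᶠ p : ℂ × ℂ in 𝓝 0 ×ˢ 𝓝[≠] 0,
      scaledDet (η / κ * ((ωc - 1) * (Ai 0 * deriv Ai 0)) * p.2) p.1 p.2 ≠ 0 := by
  refine (tendsto_scaledDet _).eventually_ne ?_
  have h_slope : (ωc - 1) * (Ai 0 * deriv Ai 0) ≠ 0 :=
    mul_ne_zero (sub_ne_zero.2 fun h_one => one_sq_ne_ωc_sq (by rw [h_one]))
      Ai_zero_mul_deriv_Ai_zero_ne_zero
  have hη' : (η : ℂ) ≠ 0 := Complex.ofReal_ne_zero.2 hη.ne'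
  have h_ratio : 2 + 2 * (ωc - 1) * (Ai 0 * deriv Ai 0)
      / (η / κ * ((ωc - 1) * (Ai 0 * deriv Ai 0))) = ((2 + 2 * (κ / η) : ℝ) : ℂ) := by
    rw [mul_assoc 2]
    generalize (ωc - 1) * (Ai 0 * deriv Ai 0) = K at h_slope
    push_cast
    field_simp
  rw [h_ratio]
  exact mul_ne_zero (pow_ne_zero 2 (left_ne_zero_of_mul Ai_zero_mul_deriv_Ai_zero_ne_zero))
    (Complex.ofReal_ne_zero.2 (by positivity))

lemma tendsto_shift_nhdsNE {κ : ℝ} (hκ : κ ≠ 0) :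
    Tendsto (fun f : ℝ => (κ * ((f ^ ((1 : ℝ) / 3) : ℝ) : ℂ))) (𝓝[>] 0) (𝓝[≠] 0) := by
  refine tendsto_nhdsWithin_iff.2 ⟨?_, ?_⟩
  · have h_lim := (Complex.continuous_ofReal.tendsto 0).comp
      (tendsto_rpow_nhdsGT_zero (t := 1 / 3) (by norm_num))
    simpa only [Complex.ofReal_zero, mul_zero, Function.comp_def] using h_lim.const_mul (κ : ℂ)
  · filter_upwards [self_mem_nhdsWithin] with f hf
    exact mul_ne_zero (Complex.ofReal_ne_zero.2 hκ)
      (Complex.ofReal_ne_zero.2 (Real.rpow_pos_of_pos hf _).ne')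

lemma eventually_no_small_zero {κ η s : ℝ} (hκ : 0 < κ) (hη : 0 < η) (hs : 2 / 3 < s) :
    ∀ᶠ f in 𝓝[>] (0 : ℝ), ∀ z : ℂ, ‖z‖ < f ^ s → Df κ η f z ≠ 0 := by
  obtain ⟨P, hP, Q, hQ, h_ne⟩ := eventually_prod_iff.1 (eventually_scaledDet_ne_zero hκ hη)
  obtain ⟨ε, hε, hP⟩ := Metric.eventually_nhds_iff.1 hP
  have h_point := (tendsto_rpow_nhdsGT_zero (sub_pos.2 hs)).eventually_lt_const hε
  filter_upwards [(tendsto_shift_nhdsNE hκ.ne').eventually hQ, h_point, self_mem_nhdsWithin]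
    with f hQf hfε hf z hz hD
  replace hf : 0 < f := hf
  have h_norm : ‖z * ((f ^ (-(2 : ℝ) / 3) : ℝ) : ℂ)‖ < ε := by
    rw [norm_mul, Complex.norm_real, Real.norm_of_nonneg (by positivity)]
    calc ‖z‖ * f ^ (-(2 : ℝ) / 3) ≤ f ^ s * f ^ (-(2 : ℝ) / 3) := by gcongr
      _ = f ^ (s - 2 / 3) := by rw [← Real.rpow_add hf, neg_div, sub_eq_add_neg]
      _ < ε := hfε
  have h_coupling : η * Wf f = η / κ * ((ωc - 1) * (Ai 0 * deriv Ai 0))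
      * (κ * ((f ^ ((1 : ℝ) / 3) : ℝ) : ℂ)) := by
    have hκ' : (κ : ℂ) ≠ 0 := Complex.ofReal_ne_zero.2 hκ.ne'
    rw [Wf_eq]
    field_simp
    ring
  refine h_ne (hP (by rwa [dist_zero_right])) hQf ?_
  rw [← h_coupling, ← mul_Df_eq_scaledDet hη.ne' hf, hD, mul_zero]

/-- Disappearance of the shape resonances under a small electric field: for
small `f` all zeros of `D_f` in the closed lower half-plane either have modulus
between `f^{2/(3β)}` and `f^{β/2}`, or lie near the rays `arg z = −2π/3` or
`arg z = 0`. -/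
theorem stmt7 (κ η : ℝ) (hκ : 0 < κ) (hη : 0 < η) (M β : ℝ)
    (hM : 20 < M) (hβ0 : 0 < β) (hβ1 : β < 1) :
    ∃ f₀ > (0 : ℝ), ∀ f : ℝ, 0 < f → f < f₀ → ∀ z : ℂ, z.im ≤ 0 → Df κ η f z = 0 →
      (f ^ (2 / (3 * β)) ≤ ‖z‖ ∧ ‖z‖ ≤ f ^ (β / 2)) ∨
      (f ^ (β / 2) < ‖z‖ ∧
        |Complex.arg z + 2 * π / 3| <
          (‖z‖)⁻¹ * (1 + ‖z‖ ^ (-(1 : ℝ) / 2)) * M * f *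
            Real.log (f⁻¹ + ‖z‖)) ∨
      (f ^ (β / 2) < ‖z‖ ∧
        |Complex.arg z| <
          ‖z‖ ^ (-(3 : ℝ) / 2) * M * f * Real.log (f⁻¹ + ‖z‖)) := by
  have hs : 2 / 3 < 2 / (3 * β) := by
    rw [div_lt_div_iff₀ (by norm_num) (by positivity)]
    linarith
  have h_lt_one : ∀ᶠ f in 𝓝[>] (0 : ℝ), f < 1 := nhdsWithin_le_nhds (Iio_mem_nhds one_pos)
  obtain ⟨f₀, hf₀, h⟩ := mem_nhdsGT_iff_exists_Ioo_subset.1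
    ((eventually_zero_near_rays hκ hη hM.le).and
      ((eventually_no_small_zero hκ hη hs).and h_lt_one))
  refine ⟨f₀, hf₀, fun f hf hff₀ z hz hD => ?_⟩
  obtain ⟨h_rays, h_small, hf_one⟩ := h ⟨hf, hff₀⟩
  rcases le_or_gt ‖z‖ (f ^ (β / 2)) with h_le | h_gt
  · exact .inl ⟨not_lt.1 fun h_lt => h_small z h_lt hD, h_le⟩
  · have h_sq : f ≤ ‖z‖ ^ 2 := by
      calc f = f ^ (1 : ℝ) := (Real.rpow_one f).symm
        _ ≤ f ^ β := Real.rpow_le_rpow_of_exponent_ge hf hf_one.le hβ1.le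
        _ = (f ^ (β / 2)) ^ 2 := by
          rw [← Real.rpow_natCast, ← Real.rpow_mul hf.le]
          norm_num
        _ ≤ ‖z‖ ^ 2 := by gcongr
    exact .inr ((h_rays z hz h_sq hD).imp (⟨h_gt, ·⟩) (⟨h_gt, ·⟩))
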